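/- arXiv:2401.01135 — 8 statements merged into one kernel-verified Lean document; each statement's English description precedes it below -/
import Mathlib

section
/- Let q > 2 be a prime power, m ≥ 2 an integer, t a positive divisor of m, and N a positive integer such that x^N lies in the subfield F_{q^t} of F_{q^m} for every x ∈ F_{q^m}. Let D = {x ∈ F_{q^m} : Tr_{q^t/q}(x^N) = 0}, where Tr_{q^t/q} : F_{q^t} → F_q is the trace map, and assume D contains a nonzero element. Then the augmented code \overline{C_D} is a locally recoverable code with locality 2, and the minimum distance of the dual code \overline{C_D}^⊥ equals 3. -/
open scoped Classical

noncomputable section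

/-- The augmented code `\overline{C_D}` of the defining set `D = {x : K // P x}`:
codewords are `(Tr_{K/F}(b d) + c)_{d ∈ D}` for `b ∈ K`, `c ∈ F`. -/
def augCode (F K : Type*) [Field F] [Field K] [Algebra F K] (P : K → Prop) :
    Set ({x : K // P x} → F) :=
  {w | ∃ b : K, ∃ c : F, ∀ d : {x : K // P x}, w d = Algebra.trace F K (b * d.1) + c}

/-- The dual code under the standard inner product. -/
def dualCode {ι F : Type*} [Fintype ι] [CommRing F] (C : Set (ι → F)) : Set (ι → F) :=
  {u | ∀ v ∈ C, ∑ i, u i * v i = 0}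

/-- `d` is the minimum distance of the code `C`: the smallest Hamming weight of a
nonzero codeword. -/
def IsMinDist {ι F : Type*} [Fintype ι] [CommRing F] (C : Set (ι → F)) (d : ℕ) : Prop :=
  (∃ c ∈ C, c ≠ 0 ∧ hammingNorm c = d) ∧ ∀ c ∈ C, c ≠ 0 → d ≤ hammingNorm c

/-- The code `C` has locality `r`. -/
def HasLocality {ι F : Type*} [Fintype ι] (C : Set (ι → F)) (r : ℕ) : Prop :=
  ∀ i : ι, ∃ R : Finset ι, R.card = r ∧ i ∉ R ∧
    ∀ c₁ ∈ C, ∀ c₂ ∈ C, (∀ j ∈ R, c₁ j = c₂ j) → c₁ i = c₂ i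

/-- A word of the dual of the augmented code has coordinate sum zero and satisfies the linear
relation `∑ u_d d = 0`. -/
theorem dual_aug_iff {F K : Type*} [Field F] [Field K] [Algebra F K] [FiniteDimensional F K]
    [Algebra.IsSeparable F K] (P : K → Prop) [Fintype {x : K // P x}]
    (u : {x : K // P x} → F) :
    u ∈ dualCode (augCode F K P) ↔ ∑ i, u i = 0 ∧ ∑ i, u i • i.1 = 0 := by
  have key : ∀ (b : K) (c : F), ∑ i, u i * (Algebra.trace F K (b * i.1) + c)
      = Algebra.trace F K (b * ∑ i, u i • i.1) + (∑ i, u i) * c := by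
    intro b c
    simp only [Finset.mul_sum, map_sum, Finset.sum_mul, mul_add, Finset.sum_add_distrib,
      mul_smul_comm, map_smul, smul_eq_mul]
  constructor
  · intro h
    have h' : ∀ (b : K) (c : F),
        Algebra.trace F K (b * ∑ i, u i • i.1) + (∑ i, u i) * c = 0 := by
      intro b c
      rw [← key]
      exact h (fun d => Algebra.trace F K (b * d.1) + c) ⟨b, c, fun _ => rfl⟩
    refine ⟨by simpa using h' 0 1, ?_⟩
    have nd := traceForm_nondegenerate F K
    apply nd.1
    intro b
    rw [Algebra.traceForm_apply, mul_comm]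
    simpa using h' b 0
  · rintro ⟨h1, h2⟩ v ⟨b, c, hv⟩
    simp only [hv, key, h1, h2]
    simp

theorem dual_aug_weight {F K : Type*} [Field F] [Field K] [Algebra F K] [FiniteDimensional F K]
    [Algebra.IsSeparable F K] (P : K → Prop) [Fintype {x : K // P x}]
    (u : {x : K // P x} → F) (hu : u ∈ dualCode (augCode F K P)) (h0 : u ≠ 0) :
    3 ≤ hammingNorm u := by
  obtain ⟨h1, h2⟩ := (dual_aug_iff P u).1 hu
  by_contra hlt
  have hpos : 0 < hammingNorm u := hammingNorm_pos_iff.2 h0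
  have e1 : ∑ i ∈ Finset.univ.filter (fun i => u i ≠ 0), u i = 0 := by
    refine Eq.trans ?_ h1
    apply Finset.sum_subset (Finset.subset_univ _)
    intro x _ hx
    simpa using hx
  have e2 : ∑ i ∈ Finset.univ.filter (fun i => u i ≠ 0), u i • i.1 = 0 := by
    refine Eq.trans ?_ h2
    apply Finset.sum_subset (Finset.subset_univ _)
    intro x _ hx
    have : u x = 0 := by simpa using hx
    simp [this]
  have hmem : ∀ i, i ∈ Finset.univ.filter (fun i => u i ≠ 0) → u i ≠ 0 := by
    intro i hi
    simpa using hi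
  have hc : hammingNorm u = (Finset.univ.filter (fun i => u i ≠ 0)).card := by
    unfold hammingNorm
    congr
  generalize Finset.univ.filter (fun i => u i ≠ 0) = S at e1 e2 hmem hc
  have hS : S.card = 1 ∨ S.card = 2 := by omega
  rcases hS with hS | hS
  · obtain ⟨i, rfl⟩ := Finset.card_eq_one.1 hS
    exact hmem i (by simp) (by simpa using e1)
  · obtain ⟨i, j, hij, rfl⟩ := Finset.card_eq_two.1 hS
    rw [Finset.sum_pair hij] at e1 e2
    have hj : u j = - u i := by linear_combination e1
    rw [hj, neg_smul, ← sub_eq_add_neg, ← smul_sub] at e2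
    rcases smul_eq_zero.1 e2 with h | h
    · exact hmem i (by simp) h
    · exact hij (Subtype.ext (sub_eq_zero.1 h))

theorem aug_main {F K : Type*} [Field F] [Field K] [Algebra F K] [FiniteDimensional F K]
    [Algebra.IsSeparable F K] (P : K → Prop) [Fintype {x : K // P x}]
    (h0 : P 0) (hs : ∀ (l : F) (x : K), P x → P (l • x)) (hx : ∃ x, x ≠ 0 ∧ P x)
    (l : F) (hl0 : l ≠ 0) (hl1 : l ≠ 1) :
    HasLocality (augCode F K P) 2 ∧ IsMinDist (dualCode (augCode F K P)) 3 := by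
  have hl1' : l - 1 ≠ 0 := sub_ne_zero.2 hl1
  have ne1 : ∀ x : K, x ≠ 0 → x ≠ l • x := by
    intro x hx h
    have : (l - 1) • x = 0 := by rw [sub_smul, one_smul, ← h, sub_self]
    rcases smul_eq_zero.1 this with h | h
    · exact hl1' h
    · exact hx h
  have ne0 : ∀ x : K, x ≠ 0 → l • x ≠ 0 := fun x hx => smul_ne_zero hl0 hx
  obtain ⟨x, hx0, hPx⟩ := hx
  refine ⟨?_, ?_, fun c hc hc0 => dual_aug_weight P c hc hc0⟩
  · rintro ⟨y, hy⟩
    by_cases hy0 : y = 0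
    · subst hy0
      refine ⟨{⟨x, hPx⟩, ⟨l • x, hs l x hPx⟩}, ?_, ?_, ?_⟩
      · rw [Finset.card_pair]
        intro h
        exact ne1 x hx0 (congrArg Subtype.val h)
      · simp [hx0.symm, (ne0 x hx0).symm]
      · rintro c₁ ⟨b₁, e₁, h₁⟩ c₂ ⟨b₂, e₂, h₂⟩ h
        have k1 := h ⟨x, hPx⟩ (by simp)
        have k2 := h ⟨l • x, hs l x hPx⟩ (by simp)
        rw [h₁, h₂] at k1 k2 ⊢
        simp only [mul_smul_comm, map_smul, smul_eq_mul, mul_zero, map_zero, zero_add] at k1 k2 ⊢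
        apply mul_left_cancel₀ hl1'
        linear_combination l * k1 - k2
    · refine ⟨{⟨0, h0⟩, ⟨l • y, hs l y hy⟩}, ?_, ?_, ?_⟩
      · rw [Finset.card_pair]
        intro h
        exact ne0 y hy0 (congrArg Subtype.val h).symm
      · simp only [Finset.mem_insert, Finset.mem_singleton, Subtype.mk.injEq, not_or]
        exact ⟨hy0, ne1 y hy0⟩
      · rintro c₁ ⟨b₁, e₁, h₁⟩ c₂ ⟨b₂, e₂, h₂⟩ h
        have k1 := h ⟨0, h0⟩ (by simp)
        have k2 := h ⟨l • y, hs l y hy⟩ (by simp)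
        rw [h₁, h₂] at k1 k2 ⊢
        simp only [mul_smul_comm, map_smul, smul_eq_mul, mul_zero, map_zero, zero_add] at k1 k2 ⊢
        apply mul_left_cancel₀ hl0
        linear_combination k2 + (l - 1) * k1
  · let A : {x : K // P x} := ⟨0, h0⟩
    let B : {x : K // P x} := ⟨x, hPx⟩
    let C : {x : K // P x} := ⟨l • x, hs l x hPx⟩
    have hAB : A ≠ B := fun h => hx0 (congrArg Subtype.val h).symm
    have hAC : A ≠ C := fun h => ne0 x hx0 (congrArg Subtype.val h).symm
    have hBC : B ≠ C := fun h => ne1 x hx0 (congrArg Subtype.val h)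
    let u : {x : K // P x} → F := Pi.single A (l - 1) + Pi.single B (-l) + Pi.single C 1
    have uA : u A = l - 1 := by simp [u, hAB, hAC]
    have uB : u B = -l := by simp [u, hAB.symm, hBC]
    have uC : u C = 1 := by simp [u, hAC.symm, hBC.symm]
    have uO : ∀ i, i ∉ ({A, B, C} : Finset {x : K // P x}) → u i = 0 := by
      intro i hi
      simp only [Finset.mem_insert, Finset.mem_singleton, not_or] at hi
      simp [u, hi.1, hi.2.1, hi.2.2]
    have hu : u ∈ dualCode (augCode F K P) := by
      rw [dual_aug_iff]
      constructor
      · rw [← Finset.sum_subset (Finset.subset_univ {A, B, C}) (fun i _ hi => uO i hi),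
          Finset.sum_insert (by simp [hAB, hAC]), Finset.sum_pair hBC, uA, uB, uC]
        ring
      · rw [← Finset.sum_subset (Finset.subset_univ {A, B, C})
            (fun i _ hi => by rw [uO i hi, zero_smul]),
          Finset.sum_insert (by simp [hAB, hAC]), Finset.sum_pair hBC, uA, uB, uC]
        simp [A, B, C]
    have hu0 : u ≠ 0 := by
      intro h
      rw [h] at uC
      simp at uC
    refine ⟨u, hu, hu0, le_antisymm ?_ (dual_aug_weight P u hu hu0)⟩
    refine le_trans (Finset.card_le_card (t := {A, B, C}) ?_) Finset.card_le_three
    intro i hi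
    by_contra hn
    exact (by simpa using hi : u i ≠ 0) (uO i hn)

theorem stmt0 (p a q m t N : ℕ) (hp : p.Prime) (ha : 0 < a) (hqpa : q = p ^ a)
    (hq2 : 2 < q) (hm : 2 ≤ m) (ht : 0 < t) (htm : t ∣ m) (hN : 0 < N)
    (Fq Ft Fm : Type) [Field Fq] [Field Ft] [Field Fm]
    [Fintype Fq] [Fintype Ft] [Fintype Fm]
    [Algebra Fq Ft] [Algebra Ft Fm] [Algebra Fq Fm] [IsScalarTower Fq Ft Fm]
    (hcq : Fintype.card Fq = q) (hct : Fintype.card Ft = q ^ t)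
    (hcm : Fintype.card Fm = q ^ m)
    (g : Fm → Ft) (hg : ∀ x : Fm, algebraMap Ft Fm (g x) = x ^ N)
    (hD : ∃ x : Fm, x ≠ 0 ∧ Algebra.trace Fq Ft (g x) = 0) :
    HasLocality (augCode Fq Fm (fun x => Algebra.trace Fq Ft (g x) = 0)) 2 ∧
      IsMinDist (dualCode (augCode Fq Fm (fun x => Algebra.trace Fq Ft (g x) = 0))) 3 := by
  have hsep : FiniteDimensional Fq Fm := Module.Finite.of_finite
  have hg0 : g 0 = 0 := by
    apply (algebraMap Ft Fm).injective
    rw [hg, map_zero, zero_pow hN.ne']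
  have hgs : ∀ (l : Fq) (x : Fm), g (l • x) = (l ^ N) • g x := by
    intro l x
    apply (algebraMap Ft Fm).injective
    rw [hg, Algebra.algebraMap_eq_smul_one (R := Ft), smul_assoc,
      ← Algebra.algebraMap_eq_smul_one (R := Ft), hg, smul_pow]
  obtain ⟨l, hl⟩ : ∃ l : Fq, l ∉ ({0, 1} : Finset Fq) := by
    by_contra hcon
    push Not at hcon
    have h1 : (Finset.univ : Finset Fq).card ≤ ({0, 1} : Finset Fq).card :=
      Finset.card_le_card (fun x _ => hcon x)
    have h2 : ({0, 1} : Finset Fq).card ≤ 2 := Finset.card_le_two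
    rw [Finset.card_univ] at h1
    omega
  simp only [Finset.mem_insert, Finset.mem_singleton, not_or] at hl
  refine aug_main (fun x => Algebra.trace Fq Ft (g x) = 0) ?_ ?_ hD l hl.1 hl.2
  · simp [hg0]
  · intro l x hx
    simp only [hgs, map_smul, hx, smul_zero]
end
end

section
/- Let q be a prime power and m = 2r with r ≥ 2. Then the cardinality of D = {x ∈ F_{q^m} : Tr_{q^r/q}(x^{q^r+1}) = 0} equals q^{r−1}(q^r − q + 1); in particular the length of the augmented code \overline{C_D} is q^{r−1}(q^r − q + 1). -/
open scoped Classical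

noncomputable section

lemma fiber_card (Q : ℕ) (Fr Fm : Type) [Field Fr] [Field Fm] [Fintype Fr] [Fintype Fm]
    [Algebra Fr Fm] (hQ : 2 ≤ Q)
    (hcr : Fintype.card Fr = Q) (hcm : Fintype.card Fm = Q ^ 2)
    (g : Fm → Fr) (hg : ∀ x : Fm, algebraMap Fr Fm (g x) = x ^ (Q + 1)) (y : Fr) (hy : y ≠ 0) :
    (Finset.univ.filter (fun x : Fm => g x = y)).card = Q + 1 := by
  have hg0 : ∀ x, g x = 0 ↔ x = 0 := by
    intro x
    rw [← (algebraMap Fr Fm).injective.eq_iff, hg, map_zero]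
    simp
  have hle : ∀ z ∈ Finset.univ.erase (0 : Fr),
      (Finset.univ.filter (fun x : Fm => g x = z)).card ≤ Q + 1 := by
    intro z _
    refine le_trans ?_ (Polynomial.card_nthRoots (Q + 1) (algebraMap Fr Fm z))
    refine le_trans (Finset.card_le_card (t := (Polynomial.nthRoots (Q + 1)
      (algebraMap Fr Fm z)).toFinset) ?_) (Multiset.toFinset_card_le _)
    intro x hx
    simp only [Finset.mem_filter, Finset.mem_univ, true_and] at hx
    rw [Multiset.mem_toFinset, Polynomial.mem_nthRoots (by omega), ← hg, hx]
  have hsum : ∑ z ∈ Finset.univ.erase (0 : Fr),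
      (Finset.univ.filter (fun x : Fm => g x = z)).card
      = ∑ z ∈ Finset.univ.erase (0 : Fr), (Q + 1) := by
    have h1 := Finset.card_eq_sum_card_fiberwise (f := g)
      (s := Finset.univ.erase (0 : Fm)) (t := Finset.univ.erase (0 : Fr)) (by
        intro x hx
        simpa [hg0] using hx)
    rw [Finset.card_erase_of_mem (Finset.mem_univ _), Finset.card_univ, hcm] at h1
    rw [Finset.sum_const, Finset.card_erase_of_mem (Finset.mem_univ _), Finset.card_univ, hcr,
      smul_eq_mul]
    have h2 : (Q - 1) * (Q + 1) = Q ^ 2 - 1 := by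
      obtain ⟨k, rfl⟩ := Nat.exists_eq_add_of_le hQ
      have : (2 + k) ^ 2 = (2 + k - 1) * (2 + k + 1) + 1 := by
        have : 2 + k - 1 = 1 + k := by omega
        rw [this]; ring
      omega
    rw [h2, h1]
    refine Finset.sum_congr rfl fun z hz => ?_
    congr 1
    ext x
    simp only [Finset.mem_filter, Finset.mem_univ, true_and, Finset.mem_erase, and_true] at hz ⊢
    constructor
    · intro h
      exact ⟨fun hx => hz (by rw [← h]; exact (hg0 x).2 hx), h⟩
    · exact fun h => h.2
  exact (Finset.sum_eq_sum_iff_of_le hle).1 hsum y (by simp [hy])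

lemma ker_card (q r : ℕ) (hr : 2 ≤ r) (hq : 2 ≤ q) (Fq Fr : Type) [Field Fq] [Field Fr]
    [Fintype Fq] [Fintype Fr] [Algebra Fq Fr]
    (hcq : Fintype.card Fq = q) (hcr : Fintype.card Fr = q ^ r) :
    (Finset.univ.filter (fun y : Fr => Algebra.trace Fq Fr y = 0)).card = q ^ (r - 1) := by
  have h1 : Module.finrank Fq Fr = r := by
    have := Module.card_eq_pow_finrank (K := Fq) (V := Fr)
    rw [hcq, hcr] at this
    exact (Nat.pow_right_injective hq this).symm
  have h2 := LinearMap.finrank_range_add_finrank_ker (Algebra.trace Fq Fr)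
  rw [LinearMap.range_eq_top.2 (Algebra.trace_surjective Fq Fr), finrank_top,
    Module.finrank_self, h1] at h2
  have h3 := Module.card_eq_pow_finrank (K := Fq) (V := LinearMap.ker (Algebra.trace Fq Fr))
  rw [hcq, show Module.finrank Fq (LinearMap.ker (Algebra.trace Fq Fr)) = r - 1 by omega] at h3
  rw [← h3, ← Fintype.card_subtype]
  exact Fintype.card_congr (Equiv.refl _)

theorem stmt1 (p a q r m : ℕ) (hp : p.Prime) (ha : 0 < a) (hqpa : q = p ^ a)
    (hr : 2 ≤ r) (hm : m = 2 * r)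
    (Fq Fr Fm : Type) [Field Fq] [Field Fr] [Field Fm]
    [Fintype Fq] [Fintype Fr] [Fintype Fm]
    [Algebra Fq Fr] [Algebra Fr Fm] [Algebra Fq Fm] [IsScalarTower Fq Fr Fm]
    (hcq : Fintype.card Fq = q) (hcr : Fintype.card Fr = q ^ r)
    (hcm : Fintype.card Fm = q ^ m)
    (g : Fm → Fr) (hg : ∀ x : Fm, algebraMap Fr Fm (g x) = x ^ (q ^ r + 1)) :
    -- the cardinality of `D`, i.e. the length of the augmented code
    -- `augCode Fq Fm (fun x => Algebra.trace Fq Fr (g x) = 0)`,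
    -- equals `q^{r-1}(q^r - q + 1)`
    Fintype.card {x : Fm // Algebra.trace Fq Fr (g x) = 0}
      = q ^ (r - 1) * (q ^ r - q + 1) := by
  have hq : 2 ≤ q := by
    rw [← hcq]; exact Fintype.one_lt_card
  have hQ : 2 ≤ q ^ r := by
    rw [← hcr]; exact Fintype.one_lt_card
  have hcm' : Fintype.card Fm = (q ^ r) ^ 2 := by
    rw [hcm, hm, ← pow_mul, mul_comm]
  have hker := ker_card q r hr hq Fq Fr hcq hcr
  have hfib := fiber_card (q ^ r) Fr Fm hQ hcr hcm' g hg
  have hg0 : ∀ x, g x = 0 ↔ x = 0 := by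
    intro x
    rw [← (algebraMap Fr Fm).injective.eq_iff, hg, map_zero]
    simp
  rw [Fintype.card_subtype]
  have h1 := Finset.card_eq_sum_card_fiberwise (f := g)
      (s := Finset.univ.filter (fun x : Fm => Algebra.trace Fq Fr (g x) = 0))
      (t := Finset.univ.filter (fun y : Fr => Algebra.trace Fq Fr y = 0)) (by
        intro x hx
        simpa using hx)
  have h2 : ∀ y ∈ Finset.univ.filter (fun y : Fr => Algebra.trace Fq Fr y = 0),
      ((Finset.univ.filter (fun x : Fm => Algebra.trace Fq Fr (g x) = 0)).filter
        (fun x => g x = y)).card = if y = 0 then 1 else q ^ r + 1 := by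
    intro y hy
    have e : (Finset.univ.filter (fun x : Fm => Algebra.trace Fq Fr (g x) = 0)).filter
        (fun x => g x = y) = Finset.univ.filter (fun x : Fm => g x = y) := by
      ext x
      simp only [Finset.mem_filter, Finset.mem_univ, true_and] at hy ⊢
      constructor
      · exact fun h => h.2
      · intro h
        exact ⟨by rw [h]; exact hy, h⟩
    rw [e]
    split_ifs with h
    · subst h
      rw [Finset.card_eq_one]
      refine ⟨0, ?_⟩
      ext x
      simp [hg0]
    · exact hfib y h
  rw [Finset.sum_congr rfl h2] at h1
  have h0 : (0 : Fr) ∈ Finset.univ.filter (fun y : Fr => Algebra.trace Fq Fr y = 0) := by simp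
  rw [← Finset.add_sum_erase _ _ h0, if_pos rfl,
    Finset.sum_congr rfl (g := fun _ => q ^ r + 1)
      (fun y hy => if_neg (Finset.ne_of_mem_erase hy)),
    Finset.sum_const, Finset.card_erase_of_mem h0, hker, smul_eq_mul] at h1
  refine Eq.trans ?_ (h1.trans ?_)
  · congr
  have hs : q ^ r = q ^ (r - 1) * q := by
    rw [← pow_succ]; congr 1; omega
  have hA : 1 ≤ q ^ (r - 1) := Nat.one_le_pow _ _ (by omega)
  have hle : q ≤ q ^ r := Nat.le_self_pow (by omega) q
  zify [hA, hle]
  have hs' : (q : ℤ) ^ r = q ^ (r - 1) * q := by exact_mod_cast hs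
  rw [hs']
  ring
end
end

section
/- Let q be a prime power, m = 2r with r a positive integer, s ∈ F_q^* and b ∈ F_{q^m}^*. Let N_s denote the number of x ∈ F_{q^m} satisfying both Tr_{q^m/q}(bx) = s and Tr_{q^r/q}(x^{q^r+1}) = 0. Then N_s = q^{m−2} if Tr_{q^r/q}(b^{q^r+1}) = 0, and N_s = q^{m−2} − q^{r−1} if Tr_{q^r/q}(b^{q^r+1}) ≠ 0. -/
open scoped Classical

noncomputable section

/-- Character sums over an extension field. -/
lemma sum_trace_char (K L : Type) [Field K] [Field L] [Fintype K] [Fintype L] [Algebra K L]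
    (ψ : AddChar K ℂ) (hψ : ψ.IsPrimitive) (c : L) :
    ∑ x : L, ψ (Algebra.trace K L (c * x)) = if c = 0 then (Fintype.card L : ℂ) else 0 := by
  let Ψ : AddChar L ℂ := ψ.compAddMonoidHom (Algebra.trace K L).toAddMonoidHom
  have hne : Ψ ≠ 1 := by
    intro h
    have h1 : ψ ≠ 1 := by
      have := hψ one_ne_zero
      simpa using this
    apply h1
    ext y
    obtain ⟨x, rfl⟩ := Algebra.trace_surjective K L y
    exact DFunLike.congr_fun h x
  have hP : Ψ.IsPrimitive := AddChar.IsPrimitive.of_ne_one hne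
  have := AddChar.sum_mulShift c hP
  push_cast at this
  rw [← this]
  refine Finset.sum_congr rfl fun x _ => ?_
  rw [mul_comm]; rfl

/-- Summing a function of the norm. -/
lemma sum_norm_fun (K L : Type) [Field K] [Field L] [Fintype K] [Fintype L] [Algebra K L]
    (n : ℕ) (hK : Fintype.card K = n) (hL : Fintype.card L = n ^ 2) (f : K → ℂ) :
    ∑ x : L, f (Algebra.norm K x) = ((n : ℂ) + 1) * ∑ y : K, f y - n * f 0 := by
  have hn : 2 ≤ n := by rw [← hK]; exact Fintype.one_lt_card
  let φ : Lˣ →* Kˣ := Units.map (Algebra.norm K (S := L))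
  have hsurj : Function.Surjective φ := FiniteField.unitsMap_norm_surjective K L
  have hfib : ∀ y : Kˣ, (Finset.univ.filter fun x => φ x = y).card
      = (Finset.univ.filter fun x => φ x = 1).card := fun y =>
    MonoidHom.card_fiber_eq_of_mem_range φ (hsurj y) (hsurj 1)
  set k := (Finset.univ.filter fun x => φ x = 1).card with hk
  have hcard : Fintype.card Lˣ = Fintype.card Kˣ * k := by
    have := Finset.card_eq_sum_card_fiberwise (f := φ) (s := Finset.univ) (t := Finset.univ)
      (by intro x _; simp)
    rw [Finset.sum_congr rfl (fun y _ => hfib y)] at this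
    simpa using this
  have hkn : k = n + 1 := by
    rw [Fintype.card_units, Fintype.card_units, hK, hL] at hcard
    obtain ⟨j, rfl⟩ : ∃ j, n = j + 1 := ⟨n - 1, by omega⟩
    have h1 : (j + 1) ^ 2 - 1 = j * (j + 2) := by
      have : (j + 1) ^ 2 = j * (j + 2) + 1 := by ring
      omega
    rw [h1] at hcard
    simp only [Nat.add_sub_cancel] at hcard
    exact (Nat.eq_of_mul_eq_mul_left (by omega) hcard).symm
  have hunits : ∀ (F : Type) [Field F] [Fintype F] (h : F → ℂ),
      ∑ x : F, h x = h 0 + ∑ x : Fˣ, h x := by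
    intro F _ _ h
    rw [← Finset.add_sum_erase _ _ (Finset.mem_univ (0 : F))]
    congr 1
    refine Finset.sum_bij' (fun x hx => Units.mk0 x (by simpa using hx)) (fun x _ => (x : F))
      ?_ ?_ ?_ ?_ ?_ <;> simp
  rw [hunits L, hunits K]
  have hs : ∑ x : Lˣ, f (Algebra.norm K (x : L)) = (n + 1) * ∑ y : Kˣ, f y := by
    rw [← Finset.sum_fiberwise (s := Finset.univ) (g := φ), Finset.mul_sum]
    refine Finset.sum_congr rfl fun y _ => ?_
    have : ∀ x ∈ Finset.univ.filter (fun x => φ x = y), f (Algebra.norm K (x : L)) = f y := by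
      intro x hx
      have hx : φ x = y := by simpa using hx
      rw [← hx]; rfl
    rw [Finset.sum_congr rfl this, Finset.sum_const, hfib, hkn, nsmul_eq_mul]
    push_cast; ring
  rw [hs, Algebra.norm_zero]
  ring

lemma char_sum_u (K : Type) [Field K] [Fintype K] 
    (ψ : AddChar K ℂ) (hψ : ψ.IsPrimitive) (s c : K) (hs : s ≠ 0) :
    ∑ u : Kˣ, ∑ v : K, ψ (-(v * s) - v ^ 2 * c * ((u⁻¹ : Kˣ) : K)) =
      if c = 0 then 0 else (Fintype.card K : ℂ) := by
  have hone : ∀ d : K, ∑ x : K, ψ (x * d) = if d = 0 then (Fintype.card K : ℂ) else 0 := by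
    intro d
    have := AddChar.sum_mulShift d hψ
    push_cast at this
    exact this
  rw [Finset.sum_comm]
  have hv : ∀ v : K, ∑ u : Kˣ, ψ (-(v * s) - v ^ 2 * c * ((u⁻¹ : Kˣ) : K)) =
      ψ (v * -s) * ((if v ^ 2 * c = 0 then (Fintype.card K : ℂ) else 0) - 1) := by
    intro v
    rw [← Equiv.sum_comp (Equiv.inv Kˣ)]
    have h0 := hone (-(v ^ 2 * c))
    have hunits : ∑ x : K, ψ (x * -(v ^ 2 * c)) = 1 + ∑ x : Kˣ, ψ ((x : K) * -(v ^ 2 * c)) := by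
      rw [← Finset.add_sum_erase _ _ (Finset.mem_univ (0 : K))]
      congr 1
      · simp
      refine Finset.sum_bij' (fun x hx => Units.mk0 x (by simpa using hx)) (fun x _ => (x : K))
        ?_ ?_ ?_ ?_ ?_ <;> simp
    rw [hunits] at h0
    simp only [neg_eq_zero] at h0
    rw [← h0, add_sub_cancel_left, Finset.mul_sum]
    refine Finset.sum_congr rfl fun u _ => ?_
    rw [← AddChar.map_add_eq_mul]
    congr 1
    simp only [Equiv.inv_apply, inv_inv]
    ring
  rw [Finset.sum_congr rfl fun v _ => hv v]
  simp only [mul_sub, mul_one, Finset.sum_sub_distrib]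
  rw [hone (-s), if_neg (neg_ne_zero.2 hs), sub_zero]
  split_ifs with hc
  · simp only [hc, mul_zero, if_true]
    rw [← Finset.sum_mul, hone (-s), if_neg (neg_ne_zero.2 hs), zero_mul]
  · simp [hc]

lemma sum_T (r : ℕ) (Fq Fr Fm : Type) [Field Fq] [Field Fr] [Field Fm]
    [Fintype Fq] [Fintype Fr] [Fintype Fm]
    [Algebra Fq Fr] [Algebra Fr Fm] [Algebra Fq Fm] [IsScalarTower Fq Fr Fm]
    (n : ℕ) (hcr : Fintype.card Fr = n) (hcm : Fintype.card Fm = n ^ 2)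
    (g : Fm → Fr) (hg : ∀ x : Fm, algebraMap Fr Fm (g x) = x ^ (n + 1))
    (ψ : AddChar Fq ℂ) (hψ : ψ.IsPrimitive) (b : Fm) (u : Fqˣ) (v : Fq) :
    ∑ x : Fm, ψ (u * Algebra.trace Fq Fr (g x) + v * Algebra.trace Fq Fm (b * x)) =
      - n * ψ (- (v ^ 2 * Algebra.trace Fq Fr (g b) * ((u⁻¹ : Fqˣ) : Fq))) := by
  have hn : 2 ≤ n := by rw [← hcr]; exact Fintype.one_lt_card
  have hinj : Function.Injective (algebraMap Fr Fm) := (algebraMap Fr Fm).injective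
  have hfr : Module.finrank Fr Fm = 2 := by
    have h := Module.card_eq_pow_finrank (K := Fr) (V := Fm)
    rw [hcr, hcm] at h
    exact (Nat.pow_right_injective hn h).symm
  have hnorm : ∀ x, Algebra.norm Fr x = g x := by
    intro x
    apply hinj
    rw [hg, FiniteField.algebraMap_norm_eq_pow_sum, hfr]
    simp [Finset.sum_range_succ, hcr, add_comm]
  have htr : ∀ x, algebraMap Fr Fm (Algebra.trace Fr Fm x) = x + x ^ n := by
    intro x
    rw [FiniteField.algebraMap_trace_eq_sum_pow, hfr]
    simp [Finset.sum_range_succ, hcr]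
  have hfix : ∀ y : Fr, y ^ n = y := by intro y; rw [← hcr]; exact FiniteField.pow_card y
  have hfixm : ∀ y : Fm, (y ^ n) ^ n = y := by
    intro y; rw [← pow_mul, ← sq, ← hcm]; exact FiniteField.pow_card y
  have hfrob : ∀ x y : Fm, (x + y) ^ n = x ^ n + y ^ n := by
    intro x y
    have := map_add (FiniteField.frobeniusAlgHom Fr Fm) x y
    simpa [hcr] using this
  -- shift
  let t : Fq := v * ((u⁻¹ : Fqˣ) : Fq)
  have ht : t * u = v := by simp [t]
  let w : Fm := algebraMap Fq Fm t * b
  let d : Fm := w ^ n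
  have hgadd : ∀ x, g (x + d) = g x + Algebra.trace Fr Fm (w * x) + g w := by
    intro x
    apply hinj
    simp only [map_add, hg, htr, pow_succ, hfrob, mul_pow, d, hfixm]
    ring
  have hgw : g w = algebraMap Fq Fr (t ^ 2) * g b := by
    rw [← hnorm, ← hnorm]
    simp only [w, map_mul]
    rw [IsScalarTower.algebraMap_apply Fq Fr Fm, Algebra.norm_algebraMap, hfr, map_pow]
  have hQ : ∀ x, (u : Fq) * Algebra.trace Fq Fr (g x) + v * Algebra.trace Fq Fm (b * x) =
      u * Algebra.trace Fq Fr (g (x + d)) 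
        + -(v ^ 2 * Algebra.trace Fq Fr (g b) * ((u⁻¹ : Fqˣ) : Fq)) := by
    intro x
    rw [hgadd, map_add, map_add, Algebra.trace_trace, hgw, ← Algebra.smul_def, map_smul]
    have : w * x = t • (b * x) := by rw [Algebra.smul_def]; simp only [w]; ring
    rw [this, map_smul, ← ht]
    simp only [smul_eq_mul]
    have huu : (u : Fq) * ((u⁻¹ : Fqˣ) : Fq) = 1 := u.mul_inv
    linear_combination (t ^ 2 * u * Algebra.trace Fq Fr (g b)) * huu
  simp only [hQ, AddChar.map_add_eq_mul]
  rw [← Finset.sum_mul]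
  congr 1
  have hsh := Equiv.sum_comp (Equiv.addRight d) (fun x => ψ (u * Algebra.trace Fq Fr (g x)))
  simp only [Equiv.coe_addRight] at hsh
  rw [hsh]
  simp only [← hnorm]
  rw [sum_norm_fun Fr Fm n hcr hcm (fun y => ψ (u * Algebra.trace Fq Fr y))]
  have h1 := sum_trace_char Fq Fr ψ hψ (algebraMap Fq Fr u)
  rw [if_neg (by simp)] at h1
  have h2 : ∀ y, (u : Fq) * Algebra.trace Fq Fr y = Algebra.trace Fq Fr (algebraMap Fq Fr u * y) := by
    intro y; rw [← Algebra.smul_def, map_smul, smul_eq_mul]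
  simp only [h2, h1]
  simp

theorem stmt2 (p a q r m : ℕ) (hp : p.Prime) (ha : 0 < a) (hqpa : q = p ^ a)
    (hr : 0 < r) (hm : m = 2 * r)
    (Fq Fr Fm : Type) [Field Fq] [Field Fr] [Field Fm]
    [Fintype Fq] [Fintype Fr] [Fintype Fm]
    [Algebra Fq Fr] [Algebra Fr Fm] [Algebra Fq Fm] [IsScalarTower Fq Fr Fm]
    (hcq : Fintype.card Fq = q) (hcr : Fintype.card Fr = q ^ r)
    (hcm : Fintype.card Fm = q ^ m)
    (g : Fm → Fr) (hg : ∀ x : Fm, algebraMap Fr Fm (g x) = x ^ (q ^ r + 1))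
    (s : Fq) (hs : s ≠ 0) (b : Fm) (hb : b ≠ 0)
    (Ns : ℕ)
    (hNs : Ns = Nat.card {x : Fm //
      Algebra.trace Fq Fm (b * x) = s ∧ Algebra.trace Fq Fr (g x) = 0}) :
    (Algebra.trace Fq Fr (g b) = 0 → Ns = q ^ (m - 2)) ∧
    (Algebra.trace Fq Fr (g b) ≠ 0 → Ns = q ^ (m - 2) - q ^ (r - 1)) := by
  have hq0 : 0 < q := by rw [← hcq]; exact Fintype.card_pos
  have hqC : (q : ℂ) ≠ 0 := by exact_mod_cast hq0.ne'
  obtain ⟨ψ, hψ⟩ : ∃ ψ : AddChar Fq ℂ, ψ.IsPrimitive :=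
    ⟨_, AddChar.FiniteField.primitiveChar_to_Complex_isPrimitive Fq⟩
  have hone : ∀ d : Fq, ∑ x : Fq, ψ (x * d) = if d = 0 then (q : ℂ) else 0 := by
    intro d
    have := AddChar.sum_mulShift d hψ
    push_cast at this
    rw [← hcq]
    exact this
  have hunits : ∀ (h : Fq → ℂ), ∑ x : Fq, h x = h 0 + ∑ x : Fqˣ, h x := by
    intro h
    rw [← Finset.add_sum_erase _ _ (Finset.mem_univ (0 : Fq))]
    congr 1
    refine Finset.sum_bij' (fun x hx => Units.mk0 x (by simpa using hx)) (fun x _ => (x : Fq))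
      ?_ ?_ ?_ ?_ ?_ <;> simp
  have hcount : (q : ℂ) ^ 2 * Ns = ∑ u : Fq, ∑ v : Fq, ψ (-(v * s)) * ∑ x : Fm,
      ψ (u * Algebra.trace Fq Fr (g x) + v * Algebra.trace Fq Fm (b * x)) := by
    have hN : (Ns : ℂ) = ∑ x : Fm, (if Algebra.trace Fq Fr (g x) = 0 then (1 : ℂ) else 0) *
        (if Algebra.trace Fq Fm (b * x) - s = 0 then (1 : ℂ) else 0) := by
      rw [hNs, Nat.card_eq_fintype_card, Fintype.card_subtype, Finset.card_filter]
      push_cast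
      refine Finset.sum_congr rfl fun x _ => ?_
      simp only [sub_eq_zero]
      split_ifs <;> simp_all
    rw [hN, Finset.mul_sum]
    simp only [Finset.mul_sum]
    have : ∀ u : Fq, ∑ v : Fq, ∑ x : Fm, ψ (-(v * s)) *
        ψ (u * Algebra.trace Fq Fr (g x) + v * Algebra.trace Fq Fm (b * x)) =
        ∑ x : Fm, ψ (u * Algebra.trace Fq Fr (g x)) *
          ∑ v : Fq, ψ (v * (Algebra.trace Fq Fm (b * x) - s)) := by
      intro u
      rw [Finset.sum_comm]
      refine Finset.sum_congr rfl fun x _ => ?_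
      rw [Finset.mul_sum]
      refine Finset.sum_congr rfl fun v _ => ?_
      rw [← AddChar.map_add_eq_mul, ← AddChar.map_add_eq_mul]
      congr 1
      ring
    rw [Finset.sum_congr rfl fun u _ => this u, Finset.sum_comm]
    refine Finset.sum_congr rfl fun x _ => ?_
    rw [← Finset.sum_mul, hone, hone]
    split_ifs <;> ring
  have hzero : ∑ v : Fq, ψ (-(v * s)) * ∑ x : Fm,
      ψ (0 * Algebra.trace Fq Fr (g x) + v * Algebra.trace Fq Fm (b * x)) = (q : ℂ) ^ m := by
    have : ∀ v : Fq, ∑ x : Fm,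
        ψ (0 * Algebra.trace Fq Fr (g x) + v * Algebra.trace Fq Fm (b * x)) =
        if v = 0 then (q : ℂ) ^ m else 0 := by
      intro v
      have h1 := sum_trace_char Fq Fm ψ hψ (algebraMap Fq Fm v * b)
      rw [hcm] at h1
      have h2 : ∀ x : Fm, 0 * Algebra.trace Fq Fr (g x) + v * Algebra.trace Fq Fm (b * x) =
          Algebra.trace Fq Fm (algebraMap Fq Fm v * b * x) := by
        intro x
        rw [mul_assoc, ← Algebra.smul_def, map_smul, smul_eq_mul]; ring
      simp only [h2, h1]
      simp [hb]
    simp only [this]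
    simp
  have hmain : (q : ℂ) ^ 2 * Ns = (q : ℂ) ^ m - (q : ℂ) ^ r *
      (if Algebra.trace Fq Fr (g b) = 0 then 0 else (q : ℂ)) := by
    rw [hcount, hunits, hzero, sub_eq_add_neg]
    congr 1
    have h3 := char_sum_u Fq ψ hψ s (Algebra.trace Fq Fr (g b)) hs
    rw [hcq] at h3
    rw [← h3, ← neg_mul, Finset.mul_sum]
    refine Finset.sum_congr rfl fun u _ => ?_
    rw [Finset.mul_sum]
    refine Finset.sum_congr rfl fun v _ => ?_
    rw [sum_T r Fq Fr Fm (q ^ r) hcr (by rw [hcm, hm, ← pow_mul, mul_comm]) g hg ψ hψ b u v,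
      sub_eq_add_neg, AddChar.map_add_eq_mul]
    push_cast
    ring
  obtain ⟨k, rfl⟩ : ∃ k, r = k + 1 := ⟨r - 1, by omega⟩
  have hm2 : m - 2 = 2 * k := by omega
  have hm3 : m = 2 * k + 2 := by omega
  rw [hm2, Nat.add_sub_cancel]
  rw [hm3] at hmain
  have hq2 : (q : ℂ) ^ 2 ≠ 0 := pow_ne_zero _ hqC
  constructor
  · intro h
    rw [if_pos h] at hmain
    have : (Ns : ℂ) = (q : ℂ) ^ (2 * k) := by
      apply mul_left_cancel₀ hq2
      rw [hmain]; ring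
    exact_mod_cast this
  · intro h
    rw [if_neg h] at hmain
    have : (Ns : ℂ) + (q : ℂ) ^ k = (q : ℂ) ^ (2 * k) := by
      apply mul_left_cancel₀ hq2
      rw [mul_add, hmain]; ring
    have : Ns + q ^ k = q ^ (2 * k) := by exact_mod_cast this
    omega
end
end

section
/- Let q be a prime power and m = 2r with r ≥ 2. The augmented code \overline{C_D} is an F_q-linear code of length q^{r−1}(q^r − q + 1), dimension m + 1, and minimum distance q^{r−1}(q^r − q^{r−1} − q + 1). Moreover, the multiset of Hamming weights of its codewords consists of: weight 0 with multiplicity 1; weight q^{r−1}(q^r − q^{r−1} − q + 1) with multiplicity q^{r−1}(2q^{r+1} − 2q^r − q² + 3q − 2) − q + 1; weight q^{r−1}(q^r − q^{r−1} − q + 2) with multiplicity q^{r−1}(q − 1)(q^{r+1} − q^r + q − 1); weight q^{2r−2}(q − 1) with multiplicity q^{r−1}(q^r − q + 1) − 1; and weight q^{r−1}(q^r − q + 1) with multiplicity q − 1. -/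
open scoped Classical
noncomputable section

lemma exists_psi (F : Type) [Field F] [Fintype F] : ∃ ψ : AddChar F ℂ, ψ.IsPrimitive :=
  ⟨_, AddChar.FiniteField.primitiveChar_to_Complex_isPrimitive F⟩

section
variable {q r : ℕ} 
    {Fq Fr Fm : Type} [Field Fq] [Field Fr] [Field Fm]
    [Fintype Fq] [Fintype Fr] [Fintype Fm]
    [Algebra Fq Fr] [Algebra Fr Fm] [Algebra Fq Fm] [IsScalarTower Fq Fr Fm]

lemma qadd_aux (hr : 2 ≤ r) (hcq : Fintype.card Fq = q) (hcr : Fintype.card Fr = q ^ r)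
    (hcm : Fintype.card Fm = q ^ (2 * r))
    (g : Fm → Fr) (hg : ∀ x : Fm, algebraMap Fr Fm (g x) = x ^ (q ^ r + 1)) (x y : Fm) :
    Algebra.trace Fq Fr (g (x + y)) = Algebra.trace Fq Fr (g x) + Algebra.trace Fq Fr (g y)
      + Algebra.trace Fq Fm (x * y ^ (q ^ r)) := by
  have hq : 1 < q ^ r := hcr ▸ Fintype.one_lt_card
  have hfin : Module.finrank Fr Fm = 2 := by
    have h := Module.card_eq_pow_finrank (K := Fr) (V := Fm)
    rw [hcr, hcm, mul_comm, pow_mul] at h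
    exact (Nat.pow_right_injective hq h).symm
  have hadd : ∀ x y : Fm, (x + y) ^ (q ^ r) = x ^ (q ^ r) + y ^ (q ^ r) := by
    intro x y
    obtain ⟨n, hp, hn⟩ := FiniteField.card Fr (ringChar Fr)
    have : Fact (ringChar Fr).Prime := ⟨hp⟩
    have : CharP Fm (ringChar Fr) := charP_of_injective_algebraMap (algebraMap Fr Fm).injective _
    rw [← hcr, hn]
    exact add_pow_char_pow x y _ _
  have hpp : ∀ x : Fm, (x ^ (q ^ r)) ^ (q ^ r) = x := by
    intro x
    rw [← pow_mul, ← pow_add, ← two_mul, ← hcm, FiniteField.pow_card]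
  rw [← Algebra.trace_trace (S := Fr) (T := Fm), ← map_add, ← map_add]
  congr 1
  apply (algebraMap Fr Fm).injective
  rw [map_add, map_add, FiniteField.algebraMap_trace_eq_sum_pow, hfin, hg, hg, hg,
    Nat.card_eq_fintype_card, hcr]
  simp only [Finset.sum_range_succ, Finset.sum_range_zero, pow_zero, pow_one, mul_pow, hpp,
    pow_succ (_ : Fm) (q ^ r), hadd]
  ring

lemma qsmul_aux (hcq : Fintype.card Fq = q)
    (g : Fm → Fr) (hg : ∀ x : Fm, algebraMap Fr Fm (g x) = x ^ (q ^ r + 1)) (t : Fq) (x : Fm) :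
    Algebra.trace Fq Fr (g (t • x)) = t ^ 2 * Algebra.trace Fq Fr (g x) := by
  have h : g (t • x) = t ^ 2 • g x := by
    apply (algebraMap Fr Fm).injective
    rw [hg, Algebra.smul_def, Algebra.smul_def, map_mul, hg, mul_pow,
      ← IsScalarTower.algebraMap_apply, ← map_pow, pow_succ t, ← hcq, FiniteField.pow_card_pow, sq]
  rw [h, map_smul, smul_eq_mul]

lemma qconj_aux (hcm : Fintype.card Fm = q ^ (2 * r))
    (g : Fm → Fr) (hg : ∀ x : Fm, algebraMap Fr Fm (g x) = x ^ (q ^ r + 1)) (x : Fm) :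
    g (x ^ (q ^ r)) = g x := by
  apply (algebraMap Fr Fm).injective
  rw [hg, hg, ← pow_mul, mul_add, ← pow_add, ← two_mul, ← hcm, mul_one, pow_add,
    FiniteField.pow_card, pow_succ, mul_comm]

lemma fiber_aux (hr : 2 ≤ r) (hcr : Fintype.card Fr = q ^ r)
    (hcm : Fintype.card Fm = q ^ (2 * r))
    (g : Fm → Fr) (hg : ∀ x : Fm, algebraMap Fr Fm (g x) = x ^ (q ^ r + 1)) :
    ∀ z : Fr, z ≠ 0 → (Finset.univ.filter fun x => g x = z).card = q ^ r + 1 := by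
  have hq : 1 < q ^ r := hcr ▸ Fintype.one_lt_card
  have g0 : ∀ x, g x = 0 ↔ x = 0 := by
    intro x
    rw [← (algebraMap Fr Fm).injective.eq_iff, hg, map_zero, pow_eq_zero_iff (by omega)]
  have hle : ∀ z ∈ Finset.univ.erase (0 : Fr),
      (Finset.univ.filter fun x => g x = z).card ≤ q ^ r + 1 := by
    intro z _
    have : (Finset.univ.filter fun x => g x = z) ⊆
        (Polynomial.nthRoots (q ^ r + 1) (algebraMap Fr Fm z)).toFinset := by
      intro x hx
      simp only [Finset.mem_filter, Finset.mem_univ, true_and] at hx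
      rw [Multiset.mem_toFinset, Polynomial.mem_nthRoots (by omega), ← hx, hg]
    exact (Finset.card_le_card this).trans ((Multiset.toFinset_card_le _).trans
      (Polynomial.card_nthRoots _ _))
  have htot : ∑ z ∈ Finset.univ.erase (0 : Fr), (Finset.univ.filter fun x => g x = z).card
      = ∑ z ∈ Finset.univ.erase (0 : Fr), (q ^ r + 1) := by
    have h1 := Finset.card_eq_sum_card_fiberwise (f := g) (s := Finset.univ.erase (0 : Fm))
      (t := Finset.univ.erase (0 : Fr)) (by intro x hx; simpa [g0] using hx)
    rw [Finset.card_erase_of_mem (Finset.mem_univ _), Finset.card_univ, hcm] at h1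
    rw [Finset.sum_const, Finset.card_erase_of_mem (Finset.mem_univ _), Finset.card_univ, hcr]
    trans q ^ (2 * r) - 1
    · rw [h1]
      apply Finset.sum_congr rfl
      intro z hz
      congr 1
      ext x
      simp only [Finset.mem_filter, Finset.mem_univ, true_and, Finset.mem_erase, and_true]
      constructor
      · rintro rfl
        exact ⟨by simpa [g0] using hz, rfl⟩
      · exact fun h => h.2
    · rw [smul_eq_mul, mul_comm 2 r, pow_mul]
      obtain ⟨k, hk⟩ : ∃ k, q ^ r = k + 1 := ⟨q ^ r - 1, by omega⟩
      rw [hk, Nat.add_sub_cancel]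
      apply Nat.sub_eq_of_eq_add; ring
  intro z hz
  exact (Finset.sum_eq_sum_iff_of_le hle).1 htot z (by simp [hz])

lemma trsum_aux {K : Type} [Field K] [Fintype K] [Algebra Fq K]
    (ψ : AddChar Fq ℂ) (hψ : ψ.IsPrimitive) (b : K) (hb : b ≠ 0) :
    ∑ x : K, ψ (Algebra.trace Fq K (b * x)) = 0 := by
  obtain ⟨w, hw⟩ := Algebra.trace_surjective Fq K 1
  have hne : ψ ≠ 1 := by
    have := hψ one_ne_zero
    rwa [AddChar.mulShift_one] at this
  let φ : AddChar K ℂ := ψ.compAddMonoidHom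
    ((Algebra.trace Fq K).toAddMonoidHom.comp (AddMonoidHom.mulLeft b))
  have hφ : φ ≠ 1 := by
    obtain ⟨c, hc⟩ := AddChar.ne_one_iff.1 hne
    rw [AddChar.ne_one_iff]
    refine ⟨b⁻¹ * (c • w), ?_⟩
    simpa [φ, hb, hw] using hc
  exact AddChar.sum_eq_zero_of_ne_one hφ

lemma gauss_aux (hr : 2 ≤ r) (hcr : Fintype.card Fr = q ^ r)
    (hcm : Fintype.card Fm = q ^ (2 * r))
    (g : Fm → Fr) (hg : ∀ x : Fm, algebraMap Fr Fm (g x) = x ^ (q ^ r + 1)) 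
    (ψ : AddChar Fq ℂ) (hψ : ψ.IsPrimitive) (s : Fq) (hs : s ≠ 0) :
    ∑ x : Fm, ψ (s * Algebra.trace Fq Fr (g x)) = - (q : ℂ) ^ r := by
  have g0 : ∀ x, g x = 0 ↔ x = 0 := by
    intro x
    rw [← (algebraMap Fr Fm).injective.eq_iff, hg, map_zero, pow_eq_zero_iff (by omega)]
  have h1 : ∑ z : Fr, ψ (s * Algebra.trace Fq Fr z) = 0 := by
    have := trsum_aux ψ hψ (algebraMap Fq Fr s) (by simpa using hs)
    rw [← this]
    refine Finset.sum_congr rfl fun z _ => ?_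
    rw [← Algebra.smul_def, map_smul, smul_eq_mul]
  rw [← Finset.add_sum_erase _ _ (Finset.mem_univ (0 : Fr))] at h1
  rw [← Finset.sum_fiberwise Finset.univ g, ← Finset.add_sum_erase _ _ (Finset.mem_univ (0 : Fr))]
  have h2 : ∀ z ∈ Finset.univ.erase (0 : Fr),
      ∑ x with g x = z, ψ (s * Algebra.trace Fq Fr (g x))
        = ((q : ℂ) ^ r + 1) * ψ (s * Algebra.trace Fq Fr z) := by
    intro z hz
    rw [Finset.sum_congr rfl (g := fun _ => ψ (s * Algebra.trace Fq Fr z)),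
      Finset.sum_const, fiber_aux hr hcr hcm g hg z (by simpa using hz)]
    · simp
    · intro x hx
      simp only [Finset.mem_filter] at hx
      rw [hx.2]
  rw [Finset.sum_congr rfl h2, ← Finset.mul_sum]
  have h3 : ∑ x with g x = 0, ψ (s * Algebra.trace Fq Fr (g x)) = 1 := by
    have : (Finset.univ.filter fun x => g x = 0) = {0} := by ext x; simp [g0]
    rw [this, Finset.sum_singleton, (g0 0).2 rfl]
    simp
  rw [h3]
  simp only [map_zero, mul_zero, AddChar.map_zero_eq_one] at h1
  linear_combination ((q : ℂ) ^ r + 1) * h1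

lemma shift_aux (hr : 2 ≤ r) (hcq : Fintype.card Fq = q) (hcr : Fintype.card Fr = q ^ r)
    (hcm : Fintype.card Fm = q ^ (2 * r))
    (g : Fm → Fr) (hg : ∀ x : Fm, algebraMap Fr Fm (g x) = x ^ (q ^ r + 1)) 
    (ψ : AddChar Fq ℂ) (hψ : ψ.IsPrimitive) (s : Fq) (hs : s ≠ 0) (b : Fm) :
    ∑ x : Fm, ψ (s * Algebra.trace Fq Fr (g x) + Algebra.trace Fq Fm (b * x))
      = - (q : ℂ) ^ r * ψ (- (Algebra.trace Fq Fr (g b)) * s⁻¹) := by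
  have hpp : ∀ x : Fm, (x ^ (q ^ r)) ^ (q ^ r) = x := by
    intro x
    rw [← pow_mul, ← pow_add, ← two_mul, ← hcm, FiniteField.pow_card]
  set y : Fm := (-s⁻¹) • b ^ (q ^ r) with hy
  have hyq : y ^ (q ^ r) = (-s⁻¹) • b := by
    rw [hy, Algebra.smul_def, mul_pow, hpp, ← map_pow, ← hcq, FiniteField.pow_card_pow,
      Algebra.smul_def]
  have hbb : Algebra.trace Fq Fm (b * b ^ (q ^ r)) = 2 * Algebra.trace Fq Fr (g b) := by
    have h1 := qadd_aux hr hcq hcr hcm g hg b b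
    have h2 := qsmul_aux hcq g hg (2 : Fq) b
    rw [two_smul] at h2
    linear_combination h2 - h1
  have hpt : ∀ x, s * Algebra.trace Fq Fr (g (x + y)) + Algebra.trace Fq Fm (b * (x + y))
      = s * Algebra.trace Fq Fr (g x) + - (Algebra.trace Fq Fr (g b)) * s⁻¹ := by
    intro x
    rw [qadd_aux hr hcq hcr hcm g hg, hyq, mul_add b, map_add, hy, qsmul_aux hcq g hg,
      qconj_aux hcm g hg, mul_smul_comm, map_smul, mul_smul_comm, map_smul, hbb, mul_comm b x]
    simp only [smul_eq_mul]
    field_simp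
    ring
  rw [← Equiv.sum_comp (Equiv.addRight y)]
  simp only [Equiv.coe_addRight, hpt, AddChar.map_add_eq_mul]
  rw [← Finset.sum_mul, gauss_aux hr hcr hcm g hg ψ hψ s hs]

end

lemma count_aux {F V : Type} [Field F] [Fintype F] [Fintype V] (ψ : AddChar F ℂ)
    (hψ : ψ.IsPrimitive) (q r : ℕ) (hq : Fintype.card F = q) (Q T : V → F) (β c : F)
    (h0 : ∀ t, ∑ x, ψ (t * T x) = if t = 0 then (q : ℂ) ^ (2 * r) else 0)
    (h1 : ∀ s t, s ≠ 0 → ∑ x, ψ (s * Q x + t * T x) = - (q : ℂ) ^ r * ψ (- (t ^ 2 * β) * s⁻¹)) :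
    (q : ℤ) ^ 2 * (Finset.univ.filter fun x => Q x = 0 ∧ T x + c = 0).card
      = q ^ (2 * r) - q ^ r * ((q - 1) + (q * (if β = 0 then 1 else 0) - 1)
        * (q * (if c = 0 then 1 else 0) - 1)) := by
  have e1 : (q : ℂ) ^ 2 * (Finset.univ.filter fun x => Q x = 0 ∧ T x + c = 0).card
      = ∑ s : F, ∑ t : F, ∑ x, ψ (s * Q x + t * (T x + c)) := by
    have : ∀ x, (q : ℂ) ^ 2 * (if Q x = 0 ∧ T x + c = 0 then 1 else 0)
        = ∑ s : F, ∑ t : F, ψ (s * Q x + t * (T x + c)) := by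
      intro x
      simp only [AddChar.map_add_eq_mul, ← Finset.mul_sum, ← Finset.sum_mul]
      rw [AddChar.sum_mulShift _ hψ, AddChar.sum_mulShift _ hψ, hq]
      by_cases h : Q x = 0 <;> by_cases h' : T x + c = 0 <;> simp [h, h', sq]
    rw [Finset.card_filter, Nat.cast_sum, Finset.mul_sum]
    push_cast
    simp only [this]
    rw [Finset.sum_comm]
    refine Finset.sum_congr rfl fun s _ => ?_
    rw [Finset.sum_comm]
  have e2 : ∀ s t, ∑ x, ψ (s * Q x + t * (T x + c)) = ψ (t * c) * ∑ x, ψ (s * Q x + t * T x) := by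
    intro s t
    rw [Finset.mul_sum]
    refine Finset.sum_congr rfl fun x _ => ?_
    rw [← AddChar.map_add_eq_mul]
    congr 1; ring
  have er : ∀ t : F, t ≠ 0 → ∑ s ∈ Finset.univ.erase (0 : F), ψ (- (t ^ 2 * β) * s⁻¹)
      = q * (if β = 0 then 1 else 0) - 1 := by
    intro t ht
    have := AddChar.sum_mulShift (- (t ^ 2 * β)) hψ
    rw [← Equiv.sum_comp (Equiv.inv F), ← Finset.add_sum_erase _ _ (Finset.mem_univ (0 : F))] at this
    simp only [Equiv.inv_apply, inv_zero, zero_mul, AddChar.map_zero_eq_one, mul_comm _⁻¹, hq] at this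
    rw [eq_sub_iff_add_eq', this]
    by_cases h : β = 0 <;> simp [h, ht]
  have ec : ∑ t ∈ Finset.univ.erase (0 : F), ψ (t * c) = q * (if c = 0 then 1 else 0) - 1 := by
    have := AddChar.sum_mulShift c hψ
    rw [← Finset.add_sum_erase _ _ (Finset.mem_univ (0 : F))] at this
    simp only [zero_mul, AddChar.map_zero_eq_one, hq] at this
    rw [eq_sub_iff_add_eq', this]
    by_cases h : c = 0 <;> simp [h]
  have e3 : (q : ℂ) ^ 2 * (Finset.univ.filter fun x => Q x = 0 ∧ T x + c = 0).card
      = q ^ (2 * r) - q ^ r * ((q - 1) + (q * (if β = 0 then 1 else 0) - 1)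
        * (q * (if c = 0 then 1 else 0) - 1)) := by
    rw [e1]
    simp only [e2]
    rw [← Finset.add_sum_erase _ _ (Finset.mem_univ (0 : F))]
    have z1 : ∑ t, ψ (t * c) * ∑ x, ψ (0 * Q x + t * T x) = (q : ℂ) ^ (2 * r) := by
      simp [h0]
    rw [z1, Finset.sum_congr rfl (g := fun s => ∑ t, ψ (t * c) *
        (- (q : ℂ) ^ r * ψ (- (t ^ 2 * β) * s⁻¹))), Finset.sum_comm]
    · rw [← Finset.add_sum_erase _ _ (Finset.mem_univ (0 : F))]
      have z2 : ∀ t ∈ Finset.univ.erase (0 : F), ∑ s ∈ Finset.univ.erase (0 : F),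
          ψ (t * c) * (- (q : ℂ) ^ r * ψ (- (t ^ 2 * β) * s⁻¹))
          = ψ (t * c) * (- (q : ℂ) ^ r * (q * (if β = 0 then 1 else 0) - 1)) := by
        intro t ht
        rw [← Finset.mul_sum, ← Finset.mul_sum, er t (by simpa using ht)]
      rw [Finset.sum_congr rfl z2, ← Finset.sum_mul, ec]
      have hq1 : 1 ≤ q := hq ▸ Fintype.card_pos
      simp [hq, Finset.card_erase_of_mem, Nat.cast_sub hq1]
      ring
    · intro s hs
      refine Finset.sum_congr rfl fun t _ => ?_
      rw [h1 s t (by simpa using hs)]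
  have : ((((q : ℤ) ^ 2 * (Finset.univ.filter fun x => Q x = 0 ∧ T x + c = 0).card : ℤ)) : ℂ)
      = ((q ^ (2 * r) - q ^ r * ((q - 1) + (q * (if β = 0 then 1 else 0) - 1)
        * (q * (if c = 0 then 1 else 0) - 1)) : ℤ) : ℂ) := by
    push_cast
    exact e3
  exact_mod_cast this

section
variable {q r : ℕ} 
    {Fq Fr Fm : Type} [Field Fq] [Field Fr] [Field Fm]
    [Fintype Fq] [Fintype Fr] [Fintype Fm]
    [Algebra Fq Fr] [Algebra Fr Fm] [Algebra Fq Fm] [IsScalarTower Fq Fr Fm]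

lemma ncount_aux (hr : 2 ≤ r) (hcq : Fintype.card Fq = q) (hcr : Fintype.card Fr = q ^ r)
    (hcm : Fintype.card Fm = q ^ (2 * r))
    (g : Fm → Fr) (hg : ∀ x : Fm, algebraMap Fr Fm (g x) = x ^ (q ^ r + 1)) (b : Fm) (hb : b ≠ 0)
    (c : Fq) :
    (q : ℤ) ^ 2 * (Finset.univ.filter fun x => Algebra.trace Fq Fr (g x) = 0 ∧
        Algebra.trace Fq Fm (b * x) + c = 0).card
      = q ^ (2 * r) - q ^ r * ((q - 1) +
        (q * (if Algebra.trace Fq Fr (g b) = 0 then 1 else 0) - 1)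
        * (q * (if c = 0 then 1 else 0) - 1)) := by
  obtain ⟨ψ, hψ⟩ := exists_psi Fq
  have hT : ∀ (t : Fq) (x : Fm), t * Algebra.trace Fq Fm (b * x)
      = Algebra.trace Fq Fm ((t • b) * x) := by
    intro t x
    rw [smul_mul_assoc, map_smul, smul_eq_mul]
  apply count_aux ψ hψ q r hcq (fun x => Algebra.trace Fq Fr (g x))
    (fun x => Algebra.trace Fq Fm (b * x))
  · intro t
    simp only [hT]
    split_ifs with ht
    · simp [ht, hcm]
    · exact trsum_aux ψ hψ _ (smul_ne_zero ht hb)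
  · intro s t hs
    simp only [hT]
    rw [shift_aux hr hcq hcr hcm g hg ψ hψ s hs, qsmul_aux hcq g hg]

lemma dcount_aux (hr : 2 ≤ r) (hcq : Fintype.card Fq = q) (hcr : Fintype.card Fr = q ^ r)
    (hcm : Fintype.card Fm = q ^ (2 * r))
    (g : Fm → Fr) (hg : ∀ x : Fm, algebraMap Fr Fm (g x) = x ^ (q ^ r + 1)) :
    (q : ℤ) * (Finset.univ.filter fun x => Algebra.trace Fq Fr (g x) = 0).card
      = q ^ (2 * r) - q ^ r * (q - 1) := by
  obtain ⟨ψ, hψ⟩ := exists_psi Fq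
  have e : (q : ℂ) * (Finset.univ.filter fun x => Algebra.trace Fq Fr (g x) = 0).card
      = q ^ (2 * r) - q ^ r * (q - 1) := by
    rw [Finset.card_filter, Nat.cast_sum, Finset.mul_sum]
    have : ∀ x, (q : ℂ) * ((if Algebra.trace Fq Fr (g x) = 0 then 1 else 0 : ℕ) : ℂ)
        = ∑ s : Fq, ψ (s * Algebra.trace Fq Fr (g x)) := by
      intro x
      rw [AddChar.sum_mulShift _ hψ, hcq]
      split_ifs <;> simp
    simp only [this]
    rw [Finset.sum_comm, ← Finset.add_sum_erase _ _ (Finset.mem_univ (0 : Fq)),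
      Finset.sum_congr rfl (g := fun (_ : Fq) => - (q : ℂ) ^ r)]
    · have hq1 : 1 ≤ q := hcq ▸ Fintype.card_pos
      simp [hcq, hcm, Finset.card_erase_of_mem, Nat.cast_sub hq1]
      ring
    · intro s hs
      exact gauss_aux hr hcr hcm g hg ψ hψ s (by simpa using hs)
  exact_mod_cast e

end

lemma map_const_aux {α : Type} (s : Multiset α) (f : α → ℕ) (w : ℕ) (h : ∀ x ∈ s, f x = w) :
    s.map f = Multiset.replicate s.card w := by
  rw [Multiset.map_congr rfl h, Multiset.map_const']

lemma nat_aux (q k : ℕ) (hq : 2 ≤ q) :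
    ((q ^ (k + 2 - 1) * (q ^ (k + 2) - q + 1) : ℕ) : ℤ)
      = q ^ 3 * (q ^ k) ^ 2 - q ^ 2 * q ^ k + q * q ^ k ∧
    ((q ^ (k + 2 - 1) * (q ^ (k + 2) - q ^ (k + 2 - 1) - q + 1) : ℕ) : ℤ)
      = q ^ 3 * (q ^ k) ^ 2 - q ^ 2 * (q ^ k) ^ 2 - q ^ 2 * q ^ k + q * q ^ k ∧
    ((q ^ (k + 2 - 1) * (q ^ (k + 2) - q ^ (k + 2 - 1) - q + 2) : ℕ) : ℤ)
      = q ^ 3 * (q ^ k) ^ 2 - q ^ 2 * (q ^ k) ^ 2 - q ^ 2 * q ^ k + 2 * q * q ^ k ∧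
    ((q ^ (2 * (k + 2) - 2) * (q - 1) : ℕ) : ℤ) = q ^ 2 * (q ^ k) ^ 2 * (q - 1) ∧
    ((q ^ (k + 2 - 1) * (2 * q ^ (k + 2 + 1) - 2 * q ^ (k + 2) - q ^ 2 + 3 * q - 2) - q + 1 : ℕ) : ℤ)
      = q * q ^ k * (2 * q ^ 3 * q ^ k - 2 * q ^ 2 * q ^ k - q ^ 2 + 3 * q - 2) - q + 1 ∧
    ((q ^ (k + 2 - 1) * (q - 1) * (q ^ (k + 2 + 1) - q ^ (k + 2) + q - 1) : ℕ) : ℤ)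
      = q * q ^ k * (q - 1) * (q ^ 3 * q ^ k - q ^ 2 * q ^ k + q - 1) ∧
    ((q ^ (k + 2 - 1) * (q ^ (k + 2) - q + 1) - 1 : ℕ) : ℤ)
      = q ^ 3 * (q ^ k) ^ 2 - q ^ 2 * q ^ k + q * q ^ k - 1 := by
  obtain ⟨u, hu⟩ : ∃ u, q ^ k = u := ⟨_, rfl⟩
  have hu1 : 1 ≤ u := hu ▸ Nat.one_le_pow _ _ (by omega)
  have e1 : q ^ (k + 2 - 1) = q * u := by rw [← hu, show k + 2 - 1 = k + 1 by omega, pow_succ']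
  have e2 : q ^ (k + 2) = q ^ 2 * u := by rw [← hu]; ring
  have e3 : q ^ (k + 2 + 1) = q ^ 3 * u := by rw [← hu]; ring
  have e4 : q ^ (2 * (k + 2) - 2) = q ^ 2 * u ^ 2 := by
    rw [← hu, show 2 * (k + 2) - 2 = 2 + k * 2 by omega, pow_add, pow_mul]
  have huz : (q : ℤ) ^ k = u := by exact_mod_cast hu
  rw [e1, e2, e3, e4, huz]
  obtain ⟨a, rfl⟩ : ∃ a, q = a + 2 := ⟨q - 2, by omega⟩
  obtain ⟨v, rfl⟩ : ∃ v, u = v + 1 := ⟨u - 1, by omega⟩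
  have s1 : a + 2 ≤ (a + 2) ^ 2 * (v + 1) := by nlinarith [Nat.zero_le (a * v), Nat.zero_le (a*a*v)]
  have s2 : (a + 2) * (v + 1) ≤ (a + 2) ^ 2 * (v + 1) := by gcongr; nlinarith
  have s3 : a + 2 ≤ (a + 2) ^ 2 * (v + 1) - (a + 2) * (v + 1) := by
    apply Nat.le_sub_of_add_le
    nlinarith [Nat.zero_le (a * v), Nat.zero_le (a*a*v)]
  have s4 : 2 * ((a + 2) ^ 2 * (v + 1)) ≤ 2 * ((a + 2) ^ 3 * (v + 1)) := by
    gcongr <;> omega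
  have s5 : (a + 2) ^ 2 ≤ 2 * ((a + 2) ^ 3 * (v + 1)) - 2 * ((a + 2) ^ 2 * (v + 1)) := by
    apply Nat.le_sub_of_add_le
    ring_nf
    nlinarith [Nat.zero_le (a * v), Nat.zero_le (a*a*v), Nat.zero_le (a*a*a*v)]
  have s6 : (a + 2) ^ 2 * (v + 1) ≤ (a + 2) ^ 3 * (v + 1) := by gcongr <;> omega
  have s7 : a + 2 ≤ (a + 2) * (v + 1) * (2 * ((a + 2) ^ 3 * (v + 1)) - 2 * ((a + 2) ^ 2 * (v + 1))
      - (a + 2) ^ 2 + 3 * (a + 2) - 2) := by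
    rw [mul_assoc]
    apply Nat.le_mul_of_pos_right
    apply Nat.mul_pos (by omega)
    omega
  have s8 : 1 ≤ (a + 2) * (v + 1) * ((a + 2) ^ 2 * (v + 1) - (a + 2) + 1) := by
    apply Nat.mul_pos <;> positivity
  refine ⟨?_, ?_, ?_, ?_, ?_, ?_, ?_⟩
  · rw [Nat.cast_mul, Nat.cast_add, Nat.cast_sub s1]; push_cast; ring
  · rw [Nat.cast_mul, Nat.cast_add, Nat.cast_sub s3, Nat.cast_sub s2]; push_cast; ring
  · rw [Nat.cast_mul, Nat.cast_add, Nat.cast_sub s3, Nat.cast_sub s2]; push_cast; ring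
  · rw [Nat.cast_mul, Nat.cast_sub (by omega)]; push_cast; ring
  · rw [Nat.cast_add, Nat.cast_sub s7, Nat.cast_mul, Nat.cast_sub (by omega), Nat.cast_add,
      Nat.cast_sub s5, Nat.cast_sub s4]; push_cast; ring
  · rw [Nat.cast_mul, Nat.cast_mul, Nat.cast_sub (by omega), Nat.cast_sub (by omega), Nat.cast_add,
      Nat.cast_add, Nat.cast_sub s6]; push_cast; ring
  · rw [Nat.cast_sub s8, Nat.cast_mul, Nat.cast_add, Nat.cast_sub s1]; push_cast; ring

set_option maxHeartbeats 2000000 in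
theorem stmt3 (p a q r m : ℕ) (hp : p.Prime) (ha : 0 < a) (hqpa : q = p ^ a)
    (hr : 2 ≤ r) (hm : m = 2 * r)
    (Fq Fr Fm : Type) [Field Fq] [Field Fr] [Field Fm]
    [Fintype Fq] [Fintype Fr] [Fintype Fm]
    [Algebra Fq Fr] [Algebra Fr Fm] [Algebra Fq Fm] [IsScalarTower Fq Fr Fm]
    (hcq : Fintype.card Fq = q) (hcr : Fintype.card Fr = q ^ r)
    (hcm : Fintype.card Fm = q ^ m)
    (g : Fm → Fr) (hg : ∀ x : Fm, algebraMap Fr Fm (g x) = x ^ (q ^ r + 1))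
    (C : Set ({x : Fm // Algebra.trace Fq Fr (g x) = 0} → Fq))
    (hC : C = augCode Fq Fm (fun x => Algebra.trace Fq Fr (g x) = 0)) :
    -- length
    Fintype.card {x : Fm // Algebra.trace Fq Fr (g x) = 0}
        = q ^ (r - 1) * (q ^ r - q + 1) ∧
    -- dimension `m + 1`
    Nat.card C = q ^ (m + 1) ∧
    -- minimum distance
    IsMinDist C (q ^ (r - 1) * (q ^ r - q ^ (r - 1) - q + 1)) ∧
    -- weight distribution as a multiset
    (C.toFinset.val.map fun c => hammingNorm c)
      = Multiset.replicate 1 0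
        + Multiset.replicate
            (q ^ (r - 1) * (2 * q ^ (r + 1) - 2 * q ^ r - q ^ 2 + 3 * q - 2) - q + 1)
            (q ^ (r - 1) * (q ^ r - q ^ (r - 1) - q + 1))
        + Multiset.replicate (q ^ (r - 1) * (q - 1) * (q ^ (r + 1) - q ^ r + q - 1))
            (q ^ (r - 1) * (q ^ r - q ^ (r - 1) - q + 2))
        + Multiset.replicate (q ^ (r - 1) * (q ^ r - q + 1) - 1)
            (q ^ (2 * r - 2) * (q - 1))
        + Multiset.replicate (q - 1) (q ^ (r - 1) * (q ^ r - q + 1)) := by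
  subst hm
  have hq2 : 2 ≤ q := hcq ▸ Fintype.one_lt_card
  obtain ⟨k, rfl⟩ : ∃ k, r = k + 2 := ⟨r - 2, by omega⟩
  obtain ⟨n1, n2, n3, n4, n5, n6, n7⟩ := nat_aux q k hq2
  have hu1 : (1 : ℤ) ≤ (q : ℤ) ^ k := by exact_mod_cast Nat.one_le_pow _ _ (by omega)
  have hq2z : (2 : ℤ) ≤ q := by exact_mod_cast hq2
  generalize q ^ (k + 2 - 1) * (q ^ (k + 2) - q + 1) - 1 = M3 at *
  generalize q ^ (k + 2 - 1) * (q ^ (k + 2) - q + 1) = WD at *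
  generalize q ^ (k + 2 - 1) * (q ^ (k + 2) - q ^ (k + 2 - 1) - q + 1) = W1 at *
  generalize q ^ (k + 2 - 1) * (q ^ (k + 2) - q ^ (k + 2 - 1) - q + 2) = W2 at *
  generalize q ^ (2 * (k + 2) - 2) * (q - 1) = W3 at *
  generalize q ^ (k + 2 - 1) * (2 * q ^ (k + 2 + 1) - 2 * q ^ (k + 2) - q ^ 2 + 3 * q - 2) - q + 1
    = M1 at *
  generalize q ^ (k + 2 - 1) * (q - 1) * (q ^ (k + 2 + 1) - q ^ (k + 2) + q - 1) = M2 at *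
  have hdc := dcount_aux hr hcq hcr hcm g hg
  have hnc := ncount_aux hr hcq hcr hcm g hg
  have g00 : g 0 = 0 := by
    apply (algebraMap Fr Fm).injective
    rw [hg, map_zero, zero_pow (by omega)]
  set DF : Finset Fm := Finset.univ.filter fun x => Algebra.trace Fq Fr (g x) = 0 with hDF
  have h0D : (0 : Fm) ∈ DF := by simp [hDF, g00]
  have pw1 : (q : ℤ) ^ (2 * (k + 2)) = q ^ 4 * (q ^ k) ^ 2 := by ring
  have pw2 : (q : ℤ) ^ (k + 2) = q ^ 2 * q ^ k := by ring
  rw [pw1, pw2] at hdc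
  simp only [pw1, pw2] at hnc
  have hqz : (q : ℤ) ≠ 0 := by omega
  have hD : (DF.card : ℤ) = WD := by
    apply mul_left_cancel₀ hqz
    rw [hdc, n1]; ring
  have hDn : DF.card = WD := by exact_mod_cast hD
  have hcard : Fintype.card {x : Fm // Algebra.trace Fq Fr (g x) = 0} = WD := by
    rw [← hDn, hDF, Fintype.card_subtype]
  generalize (q : ℤ) ^ k = u at *
  -- the encoding map
  set Φ : Fm × Fq → ({x : Fm // Algebra.trace Fq Fr (g x) = 0} → Fq) :=
    fun z d => Algebra.trace Fq Fm (z.1 * d.1) + z.2 with hΦ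
  have hnorm : ∀ (b : Fm) (c : Fq), (hammingNorm (Φ (b, c)) : ℤ) = WD -
      (Finset.univ.filter fun x => Algebra.trace Fq Fr (g x) = 0 ∧
        Algebra.trace Fq Fm (b * x) + c = 0).card := by
    intro b c
    have h1 : hammingNorm (Φ (b, c)) = (DF.filter fun x =>
        ¬ (Algebra.trace Fq Fm (b * x) + c = 0)).card := by
      unfold hammingNorm
      apply Finset.card_bij (fun d _ => d.1)
      · intro d hd
        simp only [Finset.mem_filter, Finset.mem_univ, true_and] at hd
        simp only [hDF, Finset.mem_filter, Finset.mem_univ, true_and]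
        exact ⟨d.2, hd⟩
      · intro d _ e _ h
        exact Subtype.ext h
      · intro x hx
        simp only [hDF, Finset.mem_filter, Finset.mem_univ, true_and] at hx
        exact ⟨⟨x, hx.1⟩, by simpa [hΦ] using hx.2, rfl⟩
    have h2 := Finset.card_filter_add_card_filter_not (s := DF)
      (fun x => Algebra.trace Fq Fm (b * x) + c = 0)
    rw [hDF, Finset.filter_filter, ← hDF, ← h1, hDn] at h2
    rw [← h2]; push_cast; ring
  have w0 : hammingNorm (Φ (0, 0)) = 0 := by
    rw [hammingNorm_eq_zero]; funext d; simp [hΦ]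
  have wD : ∀ c : Fq, c ≠ 0 → hammingNorm (Φ (0, c)) = WD := by
    intro c hc
    have := hnorm 0 c
    simp only [zero_mul, map_zero, zero_add, hc, and_false, Finset.filter_false, Finset.card_empty,
      Nat.cast_zero, sub_zero] at this
    exact_mod_cast this
  have wgen : ∀ b : Fm, b ≠ 0 → ∀ c : Fq, (q : ℤ) ^ 2 * hammingNorm (Φ (b, c)) = q ^ 2 * WD -
      (q ^ 4 * u ^ 2 - q ^ 2 * u * ((q - 1) +
        (q * (if b ∈ DF then 1 else 0) - 1) * (q * (if c = 0 then 1 else 0) - 1))) := by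
    intro b hb c
    have h := hnc b hb c
    have hbD : (Algebra.trace Fq Fr (g b) = 0) ↔ b ∈ DF := by simp [hDF]
    simp only [hbD] at h
    rw [hnorm, mul_sub, h]
  have hq2n : (q : ℤ) ^ 2 ≠ 0 := pow_ne_zero _ hqz
  have w3 : ∀ b ∈ DF.erase 0, hammingNorm (Φ (b, 0)) = W3 := by
    intro b hb
    rw [Finset.mem_erase] at hb
    have h := wgen b hb.1 0
    rw [if_pos hb.2, if_pos rfl, n1] at h
    have : ((hammingNorm (Φ (b, 0)) : ℕ) : ℤ) = W3 := by
      apply mul_left_cancel₀ hq2n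
      rw [h, n4]; ring
    exact_mod_cast this
  have w1 : ∀ b ∈ DF.erase 0, ∀ c : Fq, c ≠ 0 → hammingNorm (Φ (b, c)) = W1 := by
    intro b hb c hc
    rw [Finset.mem_erase] at hb
    have h := wgen b hb.1 c
    rw [if_pos hb.2, if_neg hc, n1] at h
    have : ((hammingNorm (Φ (b, c)) : ℕ) : ℤ) = W1 := by
      apply mul_left_cancel₀ hq2n
      rw [h, n2]; ring
    exact_mod_cast this
  have w1' : ∀ b ∈ DFᶜ, hammingNorm (Φ (b, 0)) = W1 := by
    intro b hb
    rw [Finset.mem_compl] at hb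
    have h := wgen b (fun h => hb (h ▸ h0D)) 0
    rw [if_neg hb, if_pos rfl, n1] at h
    have : ((hammingNorm (Φ (b, 0)) : ℕ) : ℤ) = W1 := by
      apply mul_left_cancel₀ hq2n
      rw [h, n2]; ring
    exact_mod_cast this
  have w2 : ∀ b ∈ DFᶜ, ∀ c : Fq, c ≠ 0 → hammingNorm (Φ (b, c)) = W2 := by
    intro b hb c hc
    rw [Finset.mem_compl] at hb
    have h := wgen b (fun h => hb (h ▸ h0D)) c
    rw [if_neg hb, if_neg hc, n1] at h
    have : ((hammingNorm (Φ (b, c)) : ℕ) : ℤ) = W2 := by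
      apply mul_left_cancel₀ hq2n
      rw [h, n3]; ring
    exact_mod_cast this
  -- comparison of the weights
  have W1pos : 0 < W1 := by
    have : (0 : ℤ) < W1 := by
      rw [n2]
      obtain ⟨a, ha⟩ : ∃ a : ℤ, (q : ℤ) = a + 2 := ⟨q - 2, by ring⟩
      obtain ⟨v, rfl⟩ : ∃ v : ℤ, u = v + 1 := ⟨u - 1, by ring⟩
      have ha0 : 0 ≤ a := by omega
      have hv0 : 0 ≤ v := by omega
      rw [ha]; ring_nf; positivity
    exact_mod_cast this
  have W12 : W1 ≤ W2 := by
    have : (W1 : ℤ) ≤ W2 := by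
      have : 0 ≤ (q : ℤ) * u := mul_nonneg (by omega) (by omega)
      rw [n2, n3]; linarith
    exact_mod_cast this
  have W13 : W1 ≤ W3 := by
    have : (W1 : ℤ) ≤ W3 := by
      rw [n2, n4]
      have : 0 ≤ q * u * ((q : ℤ) - 1) :=
        mul_nonneg (mul_nonneg (by omega) (by omega)) (by omega)
      linarith
    exact_mod_cast this
  have W1D : W1 ≤ WD := by
    have : (W1 : ℤ) ≤ WD := by
      rw [n1, n2]
      have : 0 ≤ (q : ℤ) ^ 2 * u ^ 2 := by positivity
      linarith
    exact_mod_cast this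
  have hmin : ∀ z : Fm × Fq, z ≠ 0 → W1 ≤ hammingNorm (Φ z) := by
    rintro ⟨b, c⟩ hz
    by_cases hb : b = 0
    · subst hb
      have hc : c ≠ 0 := by rintro rfl; exact hz rfl
      rw [wD c hc]; exact W1D
    · by_cases hbD : b ∈ DF
      · by_cases hc : c = 0
        · subst hc; rw [w3 b (Finset.mem_erase.2 ⟨hb, hbD⟩)]; exact W13
        · rw [w1 b (Finset.mem_erase.2 ⟨hb, hbD⟩) c hc]
      · by_cases hc : c = 0
        · subst hc; rw [w1' b (Finset.mem_compl.2 hbD)]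
        · rw [w2 b (Finset.mem_compl.2 hbD) c hc]; exact W12
  have hinj : Function.Injective Φ := by
    intro z z' h
    by_contra hne
    have h1 := hmin (z - z') (sub_ne_zero.2 hne)
    have h2 : Φ (z - z') = 0 := by
      funext d
      have := congrFun h d
      simp only [hΦ] at this
      simp only [hΦ, Prod.fst_sub, Prod.snd_sub, sub_mul, map_sub, Pi.zero_apply]
      linear_combination this
    rw [h2, hammingNorm_zero] at h1
    omega
  have hCr : C = Set.range Φ := by
    rw [hC]
    ext w
    simp only [augCode, Set.mem_setOf_eq, Set.mem_range, Prod.exists, hΦ]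
    constructor
    · rintro ⟨b, c, h⟩; exact ⟨b, c, (funext h).symm⟩
    · rintro ⟨b, c, rfl⟩; exact ⟨b, c, fun _ => rfl⟩
  have hPhi0 : Φ 0 = 0 := hammingNorm_eq_zero.1 w0
  refine ⟨hcard, ?_, ⟨?_, ?_⟩, ?_⟩
  · rw [hCr, Nat.card_range_of_injective hinj, Nat.card_eq_fintype_card, Fintype.card_prod, hcm,
      hcq, pow_succ]
  · have : (DF.erase 0).Nonempty := by
      rw [← Finset.card_pos, Finset.card_erase_of_mem h0D, hDn]
      have : (2 : ℤ) ≤ WD := by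
        rw [n1]
        obtain ⟨a, ha⟩ : ∃ a : ℤ, (q : ℤ) = a + 2 := ⟨q - 2, by ring⟩
        obtain ⟨v, rfl⟩ : ∃ v : ℤ, u = v + 1 := ⟨u - 1, by ring⟩
        have ha0 : 0 ≤ a := by omega
        have hv0 : 0 ≤ v := by omega
        rw [ha, ← sub_nonneg]; ring_nf; positivity
      omega
    obtain ⟨b, hb⟩ := this
    have hw := w1 b hb 1 one_ne_zero
    refine ⟨Φ (b, 1), by rw [hCr]; exact ⟨_, rfl⟩, ?_, hw⟩
    intro h
    rw [h, hammingNorm_zero] at hw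
    omega
  · intro w hw hne
    rw [hCr] at hw
    obtain ⟨z, rfl⟩ := hw
    apply hmin
    rintro rfl
    exact hne hPhi0
  · have hCf : C.toFinset = Finset.univ.map ⟨Φ, hinj⟩ := by
      ext w; simp [hCr]
    have hV : (Finset.univ : Finset Fm).val = {0} + (DF.erase 0).val + DFᶜ.val := by
      have h1 : ({0} : Multiset Fm) + (DF.erase 0).val = DF.val := by
        rw [Finset.erase_val, Multiset.singleton_add, Multiset.cons_erase h0D]
      rw [h1, ← Finset.union_compl DF, ← Finset.disjUnion_eq_union _ _ disjoint_compl_right]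
      rfl
    have hF : (Finset.univ : Finset Fq).val = {0} + (Finset.univ.erase (0 : Fq)).val := by
      rw [Finset.erase_val, Multiset.singleton_add, Multiset.cons_erase (Finset.mem_univ _)]
    have hU : (Finset.univ : Finset (Fm × Fq)).val
        = (Finset.univ : Finset Fm).val ×ˢ (Finset.univ : Finset Fq).val := by
      rw [← Finset.univ_product_univ, Finset.product_val]
    have hc1 : (Finset.univ.erase (0 : Fq)).card = q - 1 := by
      rw [Finset.card_erase_of_mem (Finset.mem_univ _), Finset.card_univ, hcq]
    have hc2 : (DF.erase 0).card = WD - 1 := by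
      rw [Finset.card_erase_of_mem h0D, hDn]
    have hc3 : ((DFᶜ).card : ℤ) = q ^ 4 * u ^ 2 - WD := by
      rw [Finset.card_compl, Nat.cast_sub (Finset.card_le_univ _), hcm, hDn]
      push_cast; rw [pw1]
    have hWD1 : 1 ≤ WD := by omega
    have m3 : M3 = (DF.erase 0).card := by
      rw [hc2]; zify [hWD1]; rw [n7, n1]
    have m2 : M2 = (DFᶜ).card * (q - 1) := by
      zify [show 1 ≤ q by omega]; rw [n6, hc3, n1]; ring
    have m1 : M1 = (DF.erase 0).card * (q - 1) + (DFᶜ).card := by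
      rw [hc2]; zify [show 1 ≤ q by omega, hWD1]; rw [n5, hc3, n1]; ring
    have p1 : (({0} : Multiset Fm) ×ˢ ({0} : Multiset Fq)).map (fun z => hammingNorm (Φ z))
        = Multiset.replicate 1 0 := by
      rw [map_const_aux _ _ 0]
      · simp
      · rintro ⟨b, c⟩ h
        rw [Multiset.mem_product] at h
        simp only [Multiset.mem_singleton] at h
        rw [h.1, h.2]; exact w0
    have p2 : (({0} : Multiset Fm) ×ˢ (Finset.univ.erase (0 : Fq)).val).map
        (fun z => hammingNorm (Φ z)) = Multiset.replicate (q - 1) WD := by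
      rw [map_const_aux _ _ WD, Multiset.card_product, Finset.card_val, hc1]
      · simp
      · rintro ⟨b, c⟩ h
        rw [Multiset.mem_product] at h
        simp only [Multiset.mem_singleton] at h
        rw [h.1]; exact wD c (Finset.ne_of_mem_erase h.2)
    have p3 : ((DF.erase 0).val ×ˢ ({0} : Multiset Fq)).map
        (fun z => hammingNorm (Φ z)) = Multiset.replicate M3 W3 := by
      rw [map_const_aux _ _ W3, Multiset.card_product, Finset.card_val, m3]
      · simp
      · rintro ⟨b, c⟩ h
        rw [Multiset.mem_product] at h
        simp only [Multiset.mem_singleton] at h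
        rw [h.2]; exact w3 b h.1
    have p4 : ((DF.erase 0).val ×ˢ (Finset.univ.erase (0 : Fq)).val).map
        (fun z => hammingNorm (Φ z)) = Multiset.replicate ((DF.erase 0).card * (q - 1)) W1 := by
      rw [map_const_aux _ _ W1, Multiset.card_product, Finset.card_val, Finset.card_val, hc1]
      rintro ⟨b, c⟩ h
      rw [Multiset.mem_product] at h
      exact w1 b h.1 c (Finset.ne_of_mem_erase h.2)
    have p5 : ((DFᶜ).val ×ˢ ({0} : Multiset Fq)).map
        (fun z => hammingNorm (Φ z)) = Multiset.replicate (DFᶜ).card W1 := by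
      rw [map_const_aux _ _ W1, Multiset.card_product, Finset.card_val]
      · simp
      · rintro ⟨b, c⟩ h
        rw [Multiset.mem_product] at h
        simp only [Multiset.mem_singleton] at h
        rw [h.2]; exact w1' b h.1
    have p6 : ((DFᶜ).val ×ˢ (Finset.univ.erase (0 : Fq)).val).map
        (fun z => hammingNorm (Φ z)) = Multiset.replicate M2 W2 := by
      rw [map_const_aux _ _ W2, Multiset.card_product, Finset.card_val, Finset.card_val, hc1, m2]
      rintro ⟨b, c⟩ h
      rw [Multiset.mem_product] at h
      exact w2 b h.1 c (Finset.ne_of_mem_erase h.2)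
    rw [hCf, Finset.map_val, Multiset.map_map, hU, hV, hF]
    simp only [Multiset.add_product, Multiset.product_add, Multiset.map_add, Function.comp_def,
      Function.Embedding.coeFn_mk]
    rw [p1, p2, p3, p4, p5, p6, m1, Multiset.replicate_add]
    abel
end
end

section
/- Let q be a prime power and m = 2r with r ≥ 2, and set n = q^{r−1}(q^r − q + 1). If q > 2, then the dual code \overline{C_D}^⊥ has length n, dimension n − m − 1, and minimum distance 3. If q = 2 and r > 2, then \overline{C_D}^⊥ has length n, dimension n − m − 1, and minimum distance 4. -/
open scoped Classical

noncomputable section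

/-- Fibres of a surjective multiplicative map between finite fields. -/
theorem aux_fiber {A B : Type} [Field A] [Field B] [Fintype A] [Fintype B] (g : B → A)
    (hmul : ∀ x y, g (x * y) = g x * g y) (h0 : ∀ x, g x = 0 ↔ x = 0)
    (hs : Function.Surjective g) (Q : ℕ) (hA : Fintype.card A = Q)
    (hB : Fintype.card B = Q ^ 2) (t : A) (ht : t ≠ 0) :
    (Finset.univ.filter (fun x : B => g x = t)).card = Q + 1 := by
  have key : ∀ s : A, s ≠ 0 → (Finset.univ.filter (fun x : B => g x = s)).card =
      (Finset.univ.filter (fun x : B => g x = t)).card := by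
    intro s hs0
    obtain ⟨z, hz⟩ := hs (t / s)
    have hz0 : z ≠ 0 := by
      intro h
      have := (h0 z).2 h
      rw [hz] at this
      exact (div_ne_zero ht hs0) this
    refine Finset.card_bij (fun x _ => x * z) ?_ ?_ ?_
    · intro x hx
      simp only [Finset.mem_filter, Finset.mem_univ, true_and] at hx ⊢
      rw [hmul, hx, hz]; field_simp
    · intro x _ y _ h
      exact mul_right_cancel₀ hz0 h
    · intro y hy
      simp only [Finset.mem_filter, Finset.mem_univ, true_and] at hy
      refine ⟨y / z, ?_, by field_simp⟩
      simp only [Finset.mem_filter, Finset.mem_univ, true_and]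
      have : g (y / z) * g z = t := by rw [← hmul, div_mul_cancel₀ _ hz0, hy]
      rw [hz] at this
      field_simp at this
      exact this
  have hsum : Fintype.card B = ∑ s : A, (Finset.univ.filter (fun x : B => g x = s)).card := by
    rw [← Finset.card_univ]
    exact Finset.card_eq_sum_card_fiberwise (fun x _ => Finset.mem_coe.2 (Finset.mem_univ _))
  rw [← Finset.add_sum_erase _ _ (Finset.mem_univ (0 : A)),
    Finset.sum_congr rfl (fun s hs' => key s (Finset.ne_of_mem_erase hs')),
    Finset.sum_const, Finset.card_erase_of_mem (Finset.mem_univ _), Finset.card_univ, hA, hB] at hsum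
  have h1 : (Finset.univ.filter (fun x : B => g x = 0)) = {0} := by
    ext x; simp [h0]
  rw [h1, Finset.card_singleton, smul_eq_mul] at hsum
  have hQ : 1 < Q := hA ▸ Fintype.one_lt_card
  obtain ⟨k, rfl⟩ : ∃ k, Q = k + 2 := ⟨Q - 2, by omega⟩
  have : (k + 1) * (k + 2 + 1) =
    (k + 1) * (Finset.univ.filter (fun x : B => g x = t)).card := by
    have e : k + 2 - 1 = k + 1 := by omega
    rw [e] at hsum
    nlinarith
  exact (Nat.eq_of_mul_eq_mul_left (by omega) this).symm

/-- Kernel cardinality of a surjective linear map. -/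
theorem aux_ker {F V W : Type*} [Field F] [Fintype F] [AddCommGroup V] [Module F V]
    [AddCommGroup W] [Module F W] [FiniteDimensional F V]
    (f : V →ₗ[F] W) (hf : Function.Surjective f) :
    Nat.card (LinearMap.ker f) =
      (Fintype.card F) ^ (Module.finrank F V - Module.finrank F W) := by
  have h := LinearMap.finrank_range_add_finrank_ker f
  rw [LinearMap.range_eq_top.2 hf, finrank_top] at h
  rw [Module.natCard_eq_pow_finrank (K := F), Nat.card_eq_fintype_card]
  congr 1
  omega

theorem aux_finrank {F V : Type*} [Field F] [Fintype F] [AddCommGroup V] [Module F V]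
    [Fintype V] (k : ℕ) (h : Fintype.card V = Fintype.card F ^ k) : Module.finrank F V = k := by
  have := Module.card_eq_pow_finrank (K := F) (V := V)
  rw [h] at this
  exact (Nat.pow_right_injective Fintype.one_lt_card this).symm

/-- The zero set of `Tr ∘ g` has the expected cardinality. -/
theorem aux_card {F A B : Type} [Field F] [Field A] [Field B] [Fintype F] [Fintype A]
    [Fintype B] [Algebra F A] (g : B → A)
    (hmul : ∀ x y, g (x * y) = g x * g y) (h0 : ∀ x, g x = 0 ↔ x = 0)
    (hs : Function.Surjective g) (r : ℕ) (hr : 2 ≤ r)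
    (hA : Fintype.card A = Fintype.card F ^ r)
    (hB : Fintype.card B = (Fintype.card F ^ r) ^ 2) :
    Fintype.card {x : B // Algebra.trace F A (g x) = 0} =
      Fintype.card F ^ (r - 1) * (Fintype.card F ^ r - Fintype.card F + 1) := by
  have hk := aux_ker (Algebra.trace F A) (Algebra.trace_surjective F A)
  rw [aux_finrank r hA, Module.finrank_self] at hk
  set T : Finset A := Finset.univ.filter (fun t => Algebra.trace F A t = 0) with hT
  have hTc : T.card = Fintype.card F ^ (r - 1) := by
    rw [← hk, Nat.card_eq_fintype_card, hT, ← Fintype.card_subtype]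
    rfl
  rw [Fintype.card_subtype]
  have hsum : (Finset.univ.filter (fun x : B => Algebra.trace F A (g x) = 0)).card =
      ∑ t ∈ T, (Finset.univ.filter (fun x : B => g x = t)).card := by
    rw [Finset.card_eq_sum_card_fiberwise (f := g) (t := T)]
    · refine Finset.sum_congr rfl fun t ht => ?_
      congr 1
      ext x
      simp only [hT, Finset.mem_filter, Finset.mem_univ, true_and] at ht ⊢
      constructor
      · exact fun h => h.2
      · exact fun h => ⟨h ▸ ht, h⟩
    · intro x hx
      simpa [hT] using hx
  have h0T : (0 : A) ∈ T := by simp [hT]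
  rw [hsum, ← Finset.add_sum_erase _ _ h0T,
    Finset.sum_congr rfl (fun s hs' => aux_fiber g hmul h0 hs _ hA hB s (Finset.ne_of_mem_erase hs')),
    Finset.sum_const, Finset.card_erase_of_mem h0T, hTc]
  have h1 : (Finset.univ.filter (fun x : B => g x = 0)) = {0} := by
    ext x; simp [h0]
  rw [h1, Finset.card_singleton, smul_eq_mul]
  have hq : 1 < Fintype.card F := Fintype.one_lt_card
  obtain ⟨s, rfl⟩ : ∃ s, r = s + 1 := ⟨r - 1, by omega⟩
  have e : s + 1 - 1 = s := by omega
  rw [e]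
  generalize Fintype.card F = q at *
  have hp : 1 ≤ q ^ s := Nat.one_le_pow _ _ (by omega)
  have hle : q ≤ q ^ (s + 1) := Nat.le_self_pow (by omega) q
  rw [pow_succ] at *
  zify [hp, hle]
  ring

/-- The zero set of `Tr ∘ g` spans the big field. -/
theorem aux_span {F A B : Type} [Field F] [Field A] [Field B] [Fintype F] [Fintype A]
    [Fintype B] [Algebra F A] [Algebra F B] (g : B → A)
    (hmul : ∀ x y, g (x * y) = g x * g y) (h0 : ∀ x, g x = 0 ↔ x = 0)
    (hs : Function.Surjective g) (r : ℕ) (hr : 2 ≤ r)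
    (hA : Fintype.card A = Fintype.card F ^ r)
    (hB : Fintype.card B = (Fintype.card F ^ r) ^ 2) :
    (∃ x : B, x ≠ 0 ∧ Algebra.trace F A (g x) = 0) ∧
    Submodule.span F {x : B | Algebra.trace F A (g x) = 0} = ⊤ := by
  have hg1 : g 1 = 1 := by
    have h := hmul 1 1
    rw [mul_one] at h
    have h2 : g 1 ≠ 0 := fun h => one_ne_zero ((h0 1).1 h)
    exact (mul_eq_left₀ h2).1 h.symm
  have hq : 1 < Fintype.card F := Fintype.one_lt_card
  obtain ⟨x0, hx0, hx0T⟩ : ∃ x : B, x ≠ 0 ∧ Algebra.trace F A (g x) = 0 := by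
    have hk := aux_ker (Algebra.trace F A) (Algebra.trace_surjective F A)
    rw [aux_finrank r hA, Module.finrank_self] at hk
    have : 1 < Nat.card (LinearMap.ker (Algebra.trace F A)) := by
      rw [hk]; exact Nat.one_lt_pow (by omega) hq
    rw [Finite.one_lt_card_iff_nontrivial] at this
    obtain ⟨⟨t, ht⟩, hne⟩ := exists_ne (0 : LinearMap.ker (Algebra.trace F A))
    obtain ⟨x, rfl⟩ := hs t
    refine ⟨x, ?_, ht⟩
    rintro rfl
    apply hne
    ext
    simp [(h0 0).2]
  refine ⟨⟨x0, hx0, hx0T⟩, ?_⟩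
  let U : Submonoid B :=
    { carrier := {x | g x = 1}
      one_mem' := hg1
      mul_mem' := by
        intro x y hx hy
        simp only [Set.mem_ofPred_eq] at hx hy ⊢
        rw [hmul, hx, hy, one_mul] }
  let S : Subalgebra F B := Algebra.adjoin F (U : Set B)
  have hSspan : Subalgebra.toSubmodule S = Submodule.span F (U : Set B) := by
    rw [Algebra.adjoin_eq_span, Submonoid.closure_eq]
  have hScard : Fintype.card F ^ r + 1 ≤ Nat.card S := by
    rw [← aux_fiber g hmul h0 hs _ hA hB 1 one_ne_zero, ← Fintype.card_subtype,
      ← Nat.card_eq_fintype_card]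
    refine Nat.card_le_card_of_injective
      (fun x : {x : B // g x = 1} => (⟨x.1, Algebra.subset_adjoin x.2⟩ : S)) ?_
    intro x y h
    exact Subtype.ext (congrArg (fun z : S => (z : B)) h)
  have hStop : S = ⊤ := by
    have hcard : Nat.card S = Nat.card B := by
      let _ : Field S := (Finite.isField_of_domain S).toField
      have h1 := Module.natCard_eq_pow_finrank (K := S) (V := B)
      have h2 : Module.finrank S B ≤ 1 := by
        by_contra hcon
        have h3 : (Nat.card S) ^ 2 ≤ Nat.card S ^ Module.finrank S B :=
          Nat.pow_le_pow_right (by omega) (by omega)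
        rw [← h1, Nat.card_eq_fintype_card (α := B), hB] at h3
        have := Nat.pow_le_pow_left hScard 2
        nlinarith
      have h4 : 0 < Module.finrank S B := Module.finrank_pos
      have h5 : Module.finrank S B = 1 := by omega
      rw [h5, pow_one] at h1
      exact h1.symm
    have : (S : Set B) = Set.univ := by
      apply Set.eq_of_subset_of_ncard_le (Set.subset_univ _)
      rw [Set.ncard_univ, ← hcard]
      exact le_rfl
    exact SetLike.coe_injective (by simpa using this)
  rw [eq_top_iff]
  intro y _
  have hy : y / x0 ∈ Submodule.span F (U : Set B) := by
    rw [← hSspan, hStop]; trivial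
  have hmap := Submodule.mem_map_of_mem (f := LinearMap.mulLeft F x0) hy
  rw [Submodule.map_span, LinearMap.mulLeft_apply, mul_div_cancel₀ _ hx0] at hmap
  refine Submodule.span_mono ?_ hmap
  rintro _ ⟨u, hu, rfl⟩
  have hu : g u = 1 := hu
  simp [hmul, hu, hx0T]

/-- Dual codewords: weighted sum of the points and sum of the weights vanish. -/
theorem aux_dual {F K : Type} [Field F] [Field K] [Algebra F K] [Fintype F] [Fintype K]
    (P : K → Prop) [Fintype {x : K // P x}] (u : {x : K // P x} → F) :
    u ∈ dualCode (augCode F K P) ↔ (∑ d, u d • d.1 = 0) ∧ ∑ d, u d = 0 := by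
  have hexp : ∀ (b : K) (c : F), ∑ d, u d * (Algebra.trace F K (b * d.1) + c) =
      Algebra.trace F K (b * ∑ d, u d • d.1) + (∑ d, u d) * c := by
    intro b c
    rw [Finset.mul_sum, map_sum, Finset.sum_mul, ← Finset.sum_add_distrib]
    refine Finset.sum_congr rfl fun d _ => ?_
    rw [mul_smul_comm, map_smul, smul_eq_mul, mul_add]
  constructor
  · intro h
    have h' : ∀ (b : K) (c : F),
        Algebra.trace F K (b * ∑ d, u d • d.1) + (∑ d, u d) * c = 0 := by
      intro b c
      rw [← hexp]
      exact h (fun d => Algebra.trace F K (b * d.1) + c) ⟨b, c, fun d => rfl⟩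
    constructor
    · by_contra hne
      obtain ⟨y, hy⟩ := Algebra.trace_surjective F K 1
      have := h' (y / ∑ d, u d • d.1) 0
      rw [div_mul_cancel₀ _ hne, hy] at this
      simp at this
    · simpa using h' 0 1
  · rintro ⟨h1, h2⟩ v ⟨b, c, hv⟩
    simp only [hv]
    rw [hexp, h1, h2]
    simp

theorem aux_dim {F K : Type} [Field F] [Field K] [Algebra F K] [Fintype F] [Fintype K]
    (P : K → Prop) [Fintype {x : K // P x}] (h0 : P 0)
    (hspan : Submodule.span F {x : K | P x} = ⊤) :
    Nat.card (dualCode (augCode F K P)) =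
      Fintype.card F ^ (Fintype.card {x : K // P x} - (Module.finrank F K + 1)) := by
  let f : ({x : K // P x} → F) →ₗ[F] K × F :=
    { toFun := fun u => (∑ d, u d • d.1, ∑ d, u d)
      map_add' := by
        intro u v
        simp [add_smul, Finset.sum_add_distrib]
      map_smul' := by
        intro c u
        simp [mul_smul, Finset.smul_sum, Finset.mul_sum] }
  have hf : Function.Surjective f := by
    rintro ⟨k, c⟩
    have hk : k ∈ Submodule.span F (Set.range (Subtype.val : {x : K // P x} → K)) := by
      rw [Subtype.range_coe_subtype, hspan]; trivial
    obtain ⟨u, hu⟩ := (Submodule.mem_span_range_iff_exists_fun F).1 hk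
    refine ⟨u + Pi.single ⟨0, h0⟩ (c - ∑ d, u d), ?_⟩
    rw [map_add]
    refine Prod.ext ?_ ?_
    · change ∑ d, u d • d.1 + ∑ d, (Pi.single (⟨0, h0⟩ : {x : K // P x}) (c - ∑ d, u d) : _ → F) d • d.1 = k
      rw [hu, Finset.sum_eq_single ⟨0, h0⟩]
      · simp
      · intro b _ hb
        simp [hb]
      · simp
    · change ∑ d, u d + ∑ d, (Pi.single (⟨0, h0⟩ : {x : K // P x}) (c - ∑ d, u d) : _ → F) d = c
      rw [Finset.sum_pi_single']
      simp
  have h := aux_ker f hf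
  rw [Module.finrank_prod, Module.finrank_self, Module.finrank_fintype_fun_eq_card] at h
  rw [← h]
  refine Nat.card_congr (Equiv.setCongr ?_)
  ext u
  rw [aux_dual]
  change _ ↔ f u = 0
  rw [Prod.ext_iff]
  rfl

/-- Codeword supported on a prescribed finset. -/
theorem aux_word {F K : Type} [Field F] [Field K] [Algebra F K] [Fintype F] [Fintype K]
    (P : K → Prop) [Fintype {x : K // P x}] (s : Finset {x : K // P x}) (hs : s.Nonempty)
    (w : {x : K // P x} → F) (hw : ∀ d ∈ s, w d ≠ 0)
    (h1 : ∑ d ∈ s, w d • d.1 = 0) (h2 : ∑ d ∈ s, w d = 0) :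
    ∃ c ∈ dualCode (augCode F K P), c ≠ 0 ∧ hammingNorm c = s.card := by
  refine ⟨fun d => if d ∈ s then w d else 0, ?_, ?_, ?_⟩
  · rw [aux_dual]
    constructor
    · simpa [ite_smul, Finset.sum_ite_mem] using h1
    · simpa [Finset.sum_ite_mem] using h2
  · intro h
    obtain ⟨d, hd⟩ := hs
    have := congrFun h d
    simp only [hd, if_true, Pi.zero_apply] at this
    exact hw d hd this
  · unfold hammingNorm
    congr 1
    ext d
    simp only [Finset.mem_filter, Finset.mem_univ, true_and]
    by_cases hd : d ∈ s
    · simp [hd, hw d hd]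
    · simp [hd]

theorem aux_ge {F K : Type} [Field F] [Field K] [Algebra F K] [Fintype F] [Fintype K]
    (P : K → Prop) [Fintype {x : K // P x}] (u : {x : K // P x} → F)
    (hu : u ∈ dualCode (augCode F K P)) (hne : u ≠ 0) :
    3 ≤ hammingNorm u ∧ (Fintype.card F = 2 → 4 ≤ hammingNorm u) := by
  rw [aux_dual] at hu
  obtain ⟨h1, h2⟩ := hu
  set s : Finset {x : K // P x} := Finset.univ.filter (fun d => u d ≠ 0) with hs
  have hnorm : hammingNorm u = s.card := by
    unfold hammingNorm
    congr 1
  have h1' : ∑ d ∈ s, u d • d.1 = 0 := by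
    rw [← h1]
    refine Finset.sum_subset (Finset.subset_univ _) fun d _ hd => ?_
    have : u d = 0 := by simpa [hs] using hd
    simp [this]
  have h2' : ∑ d ∈ s, u d = 0 := by
    rw [← h2]
    refine Finset.sum_subset (Finset.subset_univ _) fun d _ hd => ?_
    simpa [hs] using hd
  have hmem : ∀ d ∈ s, u d ≠ 0 := fun d hd => (Finset.mem_filter.1 hd).2
  have hpos : s.Nonempty := by
    obtain ⟨d, hd⟩ := Function.ne_iff.1 hne
    exact ⟨d, by simpa [hs] using hd⟩
  have h3 : 3 ≤ s.card := by
    by_contra hlt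
    have : 0 < s.card := hpos.card_pos
    have h12 : s.card = 1 ∨ s.card = 2 := by omega
    rcases h12 with hc | hc
    · obtain ⟨d, hd⟩ := Finset.card_eq_one.1 hc
      rw [hd, Finset.sum_singleton] at h2'
      exact hmem d (by simp [hd]) h2'
    · obtain ⟨d, e, hde, hd⟩ := Finset.card_eq_two.1 hc
      rw [hd, Finset.sum_pair hde] at h1' h2'
      have hue : u e = - u d := by linear_combination h2'
      rw [hue, neg_smul, ← sub_eq_add_neg, ← smul_sub] at h1'
      rcases smul_eq_zero.1 h1' with h | h
      · exact hmem d (by simp [hd]) h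
      · exact hde (Subtype.ext (sub_eq_zero.1 h))
  rw [hnorm]
  refine ⟨h3, fun hF => ?_⟩
  by_contra hlt
  have h3' : s.card = 3 := by omega
  have hone : ∀ x : F, x ≠ 0 → x = 1 := by
    intro x hx
    have := FiniteField.pow_card x
    rw [hF] at this
    have h : x * (x - 1) = 0 := by linear_combination this
    rcases mul_eq_zero.1 h with h | h
    · exact absurd h hx
    · exact sub_eq_zero.1 h
  have h20 : (2 : F) = 0 := by
    have := FiniteField.cast_card_eq_zero F
    rw [hF] at this
    exact_mod_cast this
  rw [Finset.sum_congr rfl (fun d hd => hone _ (hmem d hd)), Finset.sum_const, h3'] at h2'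
  have : (3 : F) = 0 := by simpa using h2'
  exact one_ne_zero (α := F) (by linear_combination this - h20)

theorem aux_three {F K : Type} [Field F] [Field K] [Algebra F K] [Fintype F] [Fintype K]
    (P : K → Prop) [Fintype {x : K // P x}] (h0 : P 0) (hsm : ∀ (c : F) x, P x → P (c • x))
    (x : K) (hx : x ≠ 0) (hPx : P x) (hF : 2 < Fintype.card F) :
    IsMinDist (dualCode (augCode F K P)) 3 := by
  refine ⟨?_, fun c hc hne => (aux_ge P c hc hne).1⟩
  obtain ⟨c, hc⟩ : ∃ c : F, c ∉ ({0, 1} : Finset F) := by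
    by_contra hcon
    push Not at hcon
    have h1 := Finset.card_le_card (fun c _ => hcon c : (Finset.univ : Finset F) ⊆ _)
    have h2 := Finset.card_le_two (a := (0 : F)) (b := 1)
    rw [Finset.card_univ] at h1
    omega
  simp only [Finset.mem_insert, Finset.mem_singleton, not_or] at hc
  obtain ⟨hc0, hc1⟩ := hc
  let d0 : {x : K // P x} := ⟨0, h0⟩
  let d1 : {x : K // P x} := ⟨x, hPx⟩
  let d2 : {x : K // P x} := ⟨c • x, hsm c x hPx⟩
  have h01 : d0 ≠ d1 := fun h => hx (Subtype.ext_iff.1 h).symm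
  have h02 : d0 ≠ d2 := by
    intro h
    have h : (0 : K) = c • x := Subtype.ext_iff.1 h
    exact (smul_ne_zero hc0 hx) h.symm
  have h12 : d1 ≠ d2 := by
    intro h
    have h : x = c • x := Subtype.ext_iff.1 h
    have h' : (c - 1) • x = 0 := by rw [sub_smul, ← h, one_smul, sub_self]
    rcases smul_eq_zero.1 h' with h | h
    · exact hc1 (sub_eq_zero.1 h)
    · exact hx h
  have hcard : ({d0, d1, d2} : Finset {x : K // P x}).card = 3 :=
    Finset.card_eq_three.2 ⟨d0, d1, d2, h01, h02, h12, rfl⟩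
  have hn0 : d0 ∉ ({d1, d2} : Finset {x : K // P x}) := by simp [h01, h02]
  rw [← hcard]
  refine aux_word P {d0, d1, d2} ⟨d0, by simp⟩
    (fun d => if d = d0 then c - 1 else if d = d1 then -c else 1) ?_ ?_ ?_
  · intro d hd
    split_ifs
    · exact sub_ne_zero.2 hc1
    · exact neg_ne_zero.2 hc0
    · exact one_ne_zero
  · rw [Finset.sum_insert hn0, Finset.sum_pair h12]
    simp only [if_true, if_neg h01.symm, if_neg h02.symm, if_neg h12.symm]
    simp [d0, d1, d2]
  · rw [Finset.sum_insert hn0, Finset.sum_pair h12]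
    simp only [if_true, if_neg h01.symm, if_neg h02.symm, if_neg h12.symm]
    ring

theorem aux_four {F K : Type} [Field F] [Field K] [Algebra F K] [Fintype F] [Fintype K]
    (P : K → Prop) [Fintype {x : K // P x}] (hF : Fintype.card F = 2)
    (hlt : Fintype.card K < (Fintype.card {x : K // P x}).choose 2) :
    IsMinDist (dualCode (augCode F K P)) 4 := by
  refine ⟨?_, fun c hc hne => (aux_ge P c hc hne).2 hF⟩
  have h20 : (2 : F) = 0 := by
    have := FiniteField.cast_card_eq_zero F
    rw [hF] at this
    exact_mod_cast this
  have h20K : (2 : K) = 0 := by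
    have := congrArg (algebraMap F K) h20
    rwa [map_zero, map_ofNat] at this
  have hK : ∀ z : K, z + z = 0 := fun z => by linear_combination z * h20K
  rw [← Finset.card_univ, ← Finset.card_univ, ← Finset.card_powersetCard] at hlt
  obtain ⟨s, hs, t, ht, hst, heq⟩ := Finset.exists_ne_map_eq_of_card_lt_of_maps_to hlt
    (f := fun s => ∑ d ∈ s, d.1) (fun s _ => Finset.mem_coe.2 (Finset.mem_univ _))
  have hs := (Finset.mem_powersetCard.1 hs).2
  have ht := (Finset.mem_powersetCard.1 ht).2
  obtain ⟨a, b, hab, rfl⟩ := Finset.card_eq_two.1 hs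
  obtain ⟨a', b', hab', rfl⟩ := Finset.card_eq_two.1 ht
  simp only [Finset.sum_pair hab, Finset.sum_pair hab'] at heq
  have e1 : a ≠ a' := by
    rintro rfl
    exact hst (by rw [Subtype.ext (add_left_cancel heq)])
  have e2 : a ≠ b' := by
    rintro rfl
    apply hst
    have : b = a' := Subtype.ext (by linear_combination heq)
    rw [this, Finset.pair_comm]
  have e3 : b ≠ a' := by
    rintro rfl
    apply hst
    have : a = b' := Subtype.ext (by linear_combination heq)
    rw [this, Finset.pair_comm]
  have e4 : b ≠ b' := by
    rintro rfl
    exact hst (by rw [Subtype.ext (add_right_cancel heq)])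
  have hn1 : a ∉ ({b, a', b'} : Finset {x : K // P x}) := by simp [hab, e1, e2]
  have hn2 : b ∉ ({a', b'} : Finset {x : K // P x}) := by simp [e3, e4]
  have hcard : ({a, b, a', b'} : Finset {x : K // P x}).card = 4 := by
    rw [Finset.card_insert_of_notMem hn1, Finset.card_insert_of_notMem hn2,
      Finset.card_pair hab']
  rw [← hcard]
  refine aux_word P {a, b, a', b'} ⟨a, by simp⟩ (fun _ => 1) (fun _ _ => one_ne_zero) ?_ ?_
  · rw [Finset.sum_insert hn1, Finset.sum_insert hn2, Finset.sum_pair hab']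
    simp only [one_smul]
    linear_combination heq + hK (a'.1 + b'.1)
  · rw [Finset.sum_const, hcard]
    simp only [nsmul_eq_mul, mul_one]
    push_cast
    linear_combination 2 * h20

theorem stmt4 (p a q r m n : ℕ) (hp : p.Prime) (ha : 0 < a) (hqpa : q = p ^ a)
    (hr : 2 ≤ r) (hm : m = 2 * r) (hn : n = q ^ (r - 1) * (q ^ r - q + 1))
    (Fq Fr Fm : Type) [Field Fq] [Field Fr] [Field Fm]
    [Fintype Fq] [Fintype Fr] [Fintype Fm]
    [Algebra Fq Fr] [Algebra Fr Fm] [Algebra Fq Fm] [IsScalarTower Fq Fr Fm]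
    (hcq : Fintype.card Fq = q) (hcr : Fintype.card Fr = q ^ r)
    (hcm : Fintype.card Fm = q ^ m)
    (g : Fm → Fr) (hg : ∀ x : Fm, algebraMap Fr Fm (g x) = x ^ (q ^ r + 1))
    (Cd : Set ({x : Fm // Algebra.trace Fq Fr (g x) = 0} → Fq))
    (hCd : Cd = dualCode (augCode Fq Fm (fun x => Algebra.trace Fq Fr (g x) = 0))) :
    -- the length of the dual code
    Fintype.card {x : Fm // Algebra.trace Fq Fr (g x) = 0} = n ∧
    (2 < q → Nat.card Cd = q ^ (n - m - 1) ∧ IsMinDist Cd 3) ∧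
    (q = 2 → 2 < r → Nat.card Cd = q ^ (n - m - 1) ∧ IsMinDist Cd 4) := by
  have hinj := (algebraMap Fr Fm).injective
  have hmul : ∀ x y, g (x * y) = g x * g y := by
    intro x y
    apply hinj
    rw [map_mul, hg, hg, hg, mul_pow]
  have h0 : ∀ x, g x = 0 ↔ x = 0 := by
    intro x
    rw [← hinj.eq_iff, hg, map_zero]
    simp
  subst hcq
  have hA : Fintype.card Fr = Fintype.card Fq ^ r := hcr
  have hB : Fintype.card Fm = (Fintype.card Fq ^ r) ^ 2 := by
    rw [hcm, hm, ← pow_mul, mul_comm]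
  have hfr : Module.finrank Fr Fm = 2 := by
    apply aux_finrank
    rw [hB, hA]
  have hgn : ∀ x, g x = Algebra.norm Fr x := by
    intro x
    apply hinj
    rw [hg, FiniteField.algebraMap_norm_eq_pow, Nat.card_eq_fintype_card,
      Nat.card_eq_fintype_card, hB, hA]
    congr 1
    symm
    apply Nat.div_eq_of_eq_mul_left
    · have : 1 < Fintype.card Fr := Fintype.one_lt_card
      omega
    · rw [← Nat.sq_sub_sq, one_pow]
  have hs : Function.Surjective g := by
    intro t
    obtain ⟨x, hx⟩ := FiniteField.norm_surjective Fr Fm t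
    exact ⟨x, by rw [hgn, hx]⟩
  have hcard := aux_card (F := Fq) g hmul h0 hs r hr hA hB
  obtain ⟨⟨x, hx, hPx⟩, hspan⟩ := aux_span (F := Fq) g hmul h0 hs r hr hA hB
  have hP0 : Algebra.trace Fq Fr (g 0) = 0 := by rw [(h0 0).2 rfl, map_zero]
  have hfm : Module.finrank Fq Fm = m := aux_finrank m hcm
  have hdim := aux_dim (F := Fq) (fun x : Fm => Algebra.trace Fq Fr (g x) = 0) hP0 hspan
  rw [← hCd, hcard, ← hn, hfm, ← Nat.sub_sub] at hdim
  refine ⟨hcard.trans hn.symm, fun h2 => ⟨hdim, ?_⟩, fun h2 hr2 => ⟨hdim, ?_⟩⟩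
  · rw [hCd]
    refine aux_three _ hP0 ?_ x hx hPx h2
    intro c y hy
    have hc : g (c • y) = (c ^ 2) • g y := by
      rw [Algebra.smul_def, hmul, Algebra.smul_def]
      congr 1
      apply hinj
      rw [hg, ← IsScalarTower.algebraMap_apply, ← map_pow, pow_succ, FiniteField.pow_card_pow,
        ← sq]
    rw [hc, map_smul, hy, smul_zero]
  · rw [hCd]
    refine aux_four _ h2 ?_
    rw [hcard, hB, h2]
    obtain ⟨s, rfl⟩ : ∃ s, r = s + 1 := ⟨r - 1, by omega⟩
    have e : s + 1 - 1 = s := by omega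
    rw [e]
    have hN : 4 ≤ 2 ^ s := by
      calc 4 = 2 ^ 2 := by norm_num
        _ ≤ 2 ^ s := Nat.pow_le_pow_right (by norm_num) (by omega)
    rw [pow_succ 2 s]
    generalize 2 ^ s = N at *
    obtain ⟨M, rfl⟩ : ∃ M, N = M + 4 := ⟨N - 4, by omega⟩
    have e2 : (M + 4) * 2 - 2 + 1 = 2 * M + 7 := by omega
    rw [e2, Nat.choose_two_right, Nat.lt_div_iff_mul_lt (by norm_num)]
    have e3 : (M + 4) * (2 * M + 7) - 1 = 2 * M ^ 2 + 15 * M + 27 := by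
      have : (M + 4) * (2 * M + 7) = 2 * M ^ 2 + 15 * M + 27 + 1 := by ring
      omega
    rw [e3]
    apply Nat.lt_sub_of_add_lt
    nlinarith [sq_nonneg M, Nat.zero_le (M ^ 3), Nat.zero_le (M ^ 4)]
end
end

section
/- Let q be a prime power and m = 2r with r ≥ 2 and (q, r) ≠ (2, 2). Then the augmented code \overline{C_D} is self-orthogonal, i.e., \overline{C_D} ⊆ \overline{C_D}^⊥; equivalently, the standard inner product of any two codewords of \overline{C_D} is zero. -/
open scoped Classical

noncomputable section

theorem stmt6 (p a q r m : ℕ) (hp : p.Prime) (ha : 0 < a) (hqpa : q = p ^ a)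
    (hr : 2 ≤ r) (hm : m = 2 * r) (hqr : ¬(q = 2 ∧ r = 2))
    (Fq Fr Fm : Type) [Field Fq] [Field Fr] [Field Fm]
    [Fintype Fq] [Fintype Fr] [Fintype Fm]
    [Algebra Fq Fr] [Algebra Fr Fm] [Algebra Fq Fm] [IsScalarTower Fq Fr Fm]
    (hcq : Fintype.card Fq = q) (hcr : Fintype.card Fr = q ^ r)
    (hcm : Fintype.card Fm = q ^ m)
    (g : Fm → Fr) (hg : ∀ x : Fm, algebraMap Fr Fm (g x) = x ^ (q ^ r + 1)) :
    augCode Fq Fm (fun x => Algebra.trace Fq Fr (g x) = 0)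
      ⊆ dualCode (augCode Fq Fm (fun x => Algebra.trace Fq Fr (g x) = 0)) := by
  subst hm
  have hq2 : 2 ≤ q := hcq ▸ Fintype.one_lt_card
  have hfin : Module.finrank Fq Fm = 2 * r := by
    have h := Module.card_eq_pow_finrank (K := Fq) (V := Fm)
    rw [hcm, hcq] at h
    exact (Nat.pow_right_injective hq2 h).symm
  let e := Module.finBasisOfFinrankEq Fq Fm hfin
  let φ : Fm →ₗ[Fq] Fm := (FiniteField.frobeniusAlgHom Fr Fm).toLinearMap.restrictScalars Fq
  have hφ : ∀ x, φ x = x ^ (q ^ r) := by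
    intro x
    simp [φ, hcr]
  obtain ⟨s, hs⟩ := LinearMap.exists_leftInverse_of_injective
    ((Algebra.linearMap Fr Fm).restrictScalars Fq)
    (LinearMap.ker_eq_bot.2 (FaithfulSMul.algebraMap_injective Fr Fm))
  have hs' : ∀ y, s (algebraMap Fr Fm y) = y := fun y => LinearMap.congr_fun hs y
  let L : Fm →ₗ[Fq] Fq := (Algebra.trace Fq Fr).comp s
  have hL : ∀ x, Algebra.trace Fq Fr (g x) = L (x * φ x) := by
    intro x
    rw [hφ, mul_comm, ← pow_succ, ← hg]
    simp [L, hs']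
  let Q : MvPolynomial (Fin (2 * r)) Fq :=
    ∑ i, ∑ j, MvPolynomial.C (L (e i * φ (e j))) * (MvPolynomial.X i * MvPolynomial.X j)
  let A : Fm → Fq → MvPolynomial (Fin (2 * r)) Fq := fun b c =>
    (∑ i, MvPolynomial.C (Algebra.trace Fq Fm (b * e i)) * MvPolynomial.X i) + MvPolynomial.C c
  have hQe : ∀ v, MvPolynomial.eval v Q = Algebra.trace Fq Fr (g (e.equivFun.symm v)) := by
    intro v
    rw [hL]
    simp only [Q, map_sum, map_mul, MvPolynomial.eval_C, MvPolynomial.eval_X,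
      Module.Basis.equivFun_symm_apply, map_smul, Finset.sum_mul_sum, smul_mul_smul_comm,
      smul_eq_mul]
    exact Finset.sum_congr rfl fun i _ => Finset.sum_congr rfl fun j _ => by ring
  have hAe : ∀ b c v, MvPolynomial.eval v (A b c) =
      Algebra.trace Fq Fm (b * e.equivFun.symm v) + c := by
    intro b c v
    simp only [A, map_add, map_sum, map_mul, MvPolynomial.eval_C, MvPolynomial.eval_X,
      Module.Basis.equivFun_symm_apply, map_smul, Finset.mul_sum, mul_smul_comm, smul_eq_mul]
    congr 1
    exact Finset.sum_congr rfl fun i _ => by ring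
  have hQd : Q.totalDegree ≤ 2 := by
    refine MvPolynomial.totalDegree_finsetSum_le fun i _ =>
      MvPolynomial.totalDegree_finsetSum_le fun j _ => ?_
    refine (MvPolynomial.totalDegree_mul _ _).trans ?_
    have := MvPolynomial.totalDegree_mul (MvPolynomial.X i : MvPolynomial _ Fq) (MvPolynomial.X j)
    simp only [MvPolynomial.totalDegree_X, MvPolynomial.totalDegree_C] at this ⊢
    omega
  have hAd : ∀ b c, (A b c).totalDegree ≤ 1 := by
    intro b c
    refine (MvPolynomial.totalDegree_add _ _).trans (max_le ?_ (by simp))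
    refine MvPolynomial.totalDegree_finsetSum_le fun i _ => ?_
    refine (MvPolynomial.totalDegree_mul _ _).trans ?_
    simp
  rintro u ⟨b, c, hu⟩ w ⟨b', c', hw⟩
  have key := MvPolynomial.sum_eval_eq_zero ((1 - Q ^ (q - 1)) * (A b c * A b' c')) (by
    have h1 := MvPolynomial.totalDegree_mul (1 - Q ^ (q - 1)) (A b c * A b' c')
    have h2 := MvPolynomial.totalDegree_mul (A b c) (A b' c')
    have h3 := MvPolynomial.totalDegree_sub (1 : MvPolynomial _ Fq) (Q ^ (q - 1))
    have h4 := MvPolynomial.totalDegree_pow Q (q - 1)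
    have h5 := hAd b c
    have h6 := hAd b' c'
    have h7 : (q - 1) * Q.totalDegree ≤ (q - 1) * 2 := Nat.mul_le_mul_left _ hQd
    rw [MvPolynomial.totalDegree_one] at h3
    rw [hcq, Fintype.card_fin]
    have h8 : (q - 1) * 2 + 2 < (q - 1) * (2 * r) := by
      obtain ⟨t, rfl⟩ : ∃ t, q = t + 2 := ⟨q - 2, by omega⟩
      obtain ⟨k, rfl⟩ : ∃ k, r = k + 2 := ⟨r - 2, by omega⟩
      have : 0 < t ∨ 0 < k := by omega
      simp only [show t + 2 - 1 = t + 1 from rfl]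
      rcases this with h | h <;> nlinarith [Nat.zero_le (t * k)]
    have h9 : max 0 (Q ^ (q - 1)).totalDegree ≤ (q - 1) * 2 := by
      simpa using h4.trans h7
    omega)
  refine Eq.trans ?_ key
  have step : ∑ i : {x : Fm // Algebra.trace Fq Fr (g x) = 0}, u i * w i =
      ∑ x : Fm, if Algebra.trace Fq Fr (g x) = 0 then
        (Algebra.trace Fq Fm (b * x) + c) * (Algebra.trace Fq Fm (b' * x) + c') else 0 := by
    rw [← Finset.sum_filter, Finset.sum_subtype (p := fun x => Algebra.trace Fq Fr (g x) = 0) _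
      (by simp)]
    exact Finset.sum_congr rfl fun d _ => by rw [hu, hw]
  rw [step, ← e.equivFun.symm.toEquiv.sum_comp]
  refine Finset.sum_congr rfl fun v _ => ?_
  simp only [map_mul, map_sub, map_one, map_pow, hAe, hQe, LinearEquiv.coe_toEquiv]
  split_ifs with h
  · rw [h, zero_pow (by omega)]
    ring
  · rw [← hcq, FiniteField.pow_card_sub_one_eq_one _ h]
    ring
end
end

section
/- Let q = 2, m = 2r with r ≥ 3, and n = 2^{r−1}(2^r − 1). Then the augmented code \overline{C_D} has length n, dimension m + 1 and minimum distance 2^{r−1}(2^{r−1} − 1), and its weight enumerator is 1 + (2^{2r} − 1) z^{2^{r−1}(2^{r−1}−1)} + (2^{2r} − 1) z^{2^{2r−2}} + z^{2^{r−1}(2^r−1)}; the dual code \overline{C_D}^⊥ has length n, dimension n − m − 1 and minimum distance 4. Moreover, the supports of the codewords of weight 2^{r−1}(2^{r−1} − 1) in \overline{C_D} form a 2-(n, 2^{r−1}(2^{r−1} − 1), 2^{2r−2} − 2^{r−1} − 1) design, and the supports of the codewords of weight 4 in \overline{C_D}^⊥ form a 2-(n, 4, 2^{2r−3} − 2^{r−2}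 − 1) design. -/
open scoped Classical

noncomputable section

/-- The supports of the codewords of `C` of Hamming weight `κ` form a
`2-(n, κ, lam)` design: every pair of distinct coordinates lies in exactly `lam`
of these supports. -/
def Holds2Design {ι F : Type*} [Fintype ι] [CommRing F] (C : Set (ι → F))
    (κ lam : ℕ) : Prop :=
  ∀ i j : ι, i ≠ j →
    Nat.card {S : Set ι //
      (∃ c ∈ C, hammingNorm c = κ ∧ S = {k | c k ≠ 0}) ∧ i ∈ S ∧ j ∈ S} = lam


/-- The sign character of a field with two elements. -/
def sgn {F : Type*} [Field F] (x : F) : ℤ := if x = 0 then 1 else -1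

lemma f2_cases {F : Type*} [Field F] [Fintype F] (h : Fintype.card F = 2) (x : F) :
    x = 0 ∨ x = 1 := by
  by_contra hx
  push Not at hx
  have : ({0, 1, x} : Finset F).card ≤ Fintype.card F := Finset.card_le_univ _
  rw [Finset.card_eq_three.mpr ⟨0, 1, x, by simp, hx.1.symm, hx.2.symm, rfl⟩] at this
  omega

lemma f2_two {F : Type*} [Field F] [Fintype F] (h : Fintype.card F = 2) (x : F) :
    x + x = 0 := by
  have h1 : (1 : F) + 1 = 0 := by
    rcases f2_cases h ((1 : F) + 1) with h1 | h1
    · exact h1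
    · simp at h1
  rw [← mul_one x, ← mul_add, h1, mul_zero]

lemma sgn_zero {F : Type*} [Field F] : sgn (0 : F) = 1 := by simp [sgn]
lemma sgn_one {F : Type*} [Field F] : sgn (1 : F) = -1 := by simp [sgn]

lemma sgn_add {F : Type*} [Field F] [Fintype F] (h : Fintype.card F = 2) (x y : F) :
    sgn (x + y) = sgn x * sgn y := by
  have := f2_two h (1 : F)
  rcases f2_cases h x with rfl | rfl <;> rcases f2_cases h y with rfl | rfl <;>
    simp [sgn, this]

lemma sgn_mul_self {F : Type*} [Field F] (x : F) : sgn x * sgn x = 1 := by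
  unfold sgn; split_ifs <;> simp

lemma sum_sgn {F ι : Type*} [Field F] [Fintype ι] (f : ι → F) :
    ∑ i, sgn (f i) = (Fintype.card ι : ℤ) - 2 * (hammingNorm f : ℤ) := by
  have h : ∀ i, sgn (f i) = 1 - 2 * (if f i ≠ 0 then 1 else 0) := by
    intro i; unfold sgn; split_ifs <;> simp_all
  simp_rw [h, Finset.sum_sub_distrib, ← Finset.mul_sum, Finset.sum_boole]
  simp [hammingNorm]

lemma card_of_param {ι α : Type*} (P : Set ι → Prop) (A : Finset α) (f : α → Set ι)
    (hf : Set.InjOn f A) (h : ∀ S, P S ↔ ∃ a ∈ A, f a = S) :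
    Nat.card {S : Set ι // P S} = A.card := by
  have : {S : Set ι | P S} = f '' (A : Set α) := by
    ext S; simp [h]
  change Nat.card ({S : Set ι | P S} : Set (Set ι)) = _
  rw [this, Nat.card_coe_set_eq, hf.ncard_image, Set.ncard_coe_finset]

structure QD (F V : Type) [Field F] [Fintype F] [AddCommGroup V] [Fintype V]
    (Q : V → F) (B : V → V → F) (M : ℕ) : Prop where
  two : ∀ x : V, x + x = 0
  cF : Fintype.card F = 2
  polar : ∀ x y, Q (x + y) = Q x + Q y + B x y
  addR : ∀ x a b, B x (a + b) = B x a + B x b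
  sumQ : ∑ x, sgn (Q x) = - (4 * M : ℤ)
  sumB : ∀ a, a ≠ 0 → ∑ x, sgn (B x a) = 0
  cV : Fintype.card V = 16 * M ^ 2
  hM : 2 ≤ M

namespace QD

variable {F V : Type} [Field F] [Fintype F] [AddCommGroup V] [Fintype V]
    {Q : V → F} {B : V → V → F} {M : ℕ}

lemma B_zero (h : QD F V Q B M) (x : V) : B x 0 = 0 := by
  have := h.addR x 0 0
  simpa using this

lemma Q_zero (h : QD F V Q B M) : Q 0 = 0 := by
  have := h.polar 0 0
  rw [h.B_zero] at this
  simpa using this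

lemma symm (h : QD F V Q B M) (x y : V) : B x y = B y x := by
  have h1 := h.polar x y
  have h2 := h.polar y x
  rw [add_comm x y, h2] at h1
  have : Q y + Q x = Q x + Q y := add_comm _ _
  rw [this] at h1
  exact (add_left_cancel h1).symm

lemma addL (h : QD F V Q B M) (x y a : V) : B (x + y) a = B x a + B y a := by
  rw [h.symm, h.addR, h.symm a x, h.symm a y]

lemma nondeg (h : QD F V Q B M) (z : V) (hz : ∀ a, B z a = 0) : z = 0 := by
  by_contra hne
  have h1 := h.sumB z hne
  simp_rw [fun x => h.symm x z, hz, sgn_zero] at h1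
  simp [h.cV] at h1
  have := h.hM
  omega

lemma cD (h : QD F V Q B M) :
    (Fintype.card {x : V // Q x = 0} : ℤ) = 2 * M * (4 * M - 1) := by
  have h1 := sum_sgn Q
  have h2 : hammingNorm Q + Fintype.card {x : V // Q x = 0} = Fintype.card V := by
    rw [Fintype.card_subtype, hammingNorm, add_comm]
    exact Finset.card_filter_add_card_filter_not _
  rw [h.sumQ] at h1
  have h3 : (hammingNorm Q : ℤ) + Fintype.card {x : V // Q x = 0} = Fintype.card V := by
    exact_mod_cast h2
  have h4 : (Fintype.card V : ℤ) = 16 * M ^ 2 := by exact_mod_cast h.cV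
  nlinarith

/-- codewords -/
def cw (Q : V → F) (p : V × F) : {x : V // Q x = 0} → F := fun d => Q (d.1 + p.1) + p.2

lemma cw_eq (h : QD F V Q B M) (p : V × F) (d : {x : V // Q x = 0}) :
    cw Q p d = B d.1 p.1 + (Q p.1 + p.2) := by
  rw [cw, h.polar, d.2]; ring

lemma sum_cw (h : QD F V Q B M) (a : V) (c : F) (ha : a ≠ 0) :
    ∑ d, sgn (cw Q (a, c) d) = - (2 * M : ℤ) * sgn c := by
  have h1 : ∑ x : V, (1 + sgn (Q x)) * sgn (Q (x + a)) =
      2 * ∑ d : {x : V // Q x = 0}, sgn (Q (d.1 + a)) := by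
    rw [← Finset.sum_subtype (Finset.univ.filter fun x => Q x = 0) (by simp)
      (fun x => sgn (Q (x + a))), Finset.sum_filter, Finset.mul_sum]
    refine Finset.sum_congr rfl fun x _ => ?_
    by_cases hx : Q x = 0
    · simp [sgn, hx]
    · simp [sgn, hx]
  have h2 : ∑ x : V, (1 + sgn (Q x)) * sgn (Q (x + a)) = - (4 * M : ℤ) := by
    have h3 : ∀ x, (1 + sgn (Q x)) * sgn (Q (x + a)) =
        sgn (Q (x + a)) + sgn (Q a) * sgn (B x a) := by
      intro x
      rw [add_mul, one_mul]
      congr 1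
      rw [h.polar, sgn_add h.cF, sgn_add h.cF, ← mul_assoc, ← mul_assoc, sgn_mul_self, one_mul]
    simp_rw [h3, Finset.sum_add_distrib, ← Finset.mul_sum, h.sumB a ha]
    rw [mul_zero, add_zero, ← h.sumQ]
    exact Equiv.sum_comp (Equiv.addRight a) (fun x => sgn (Q x))
  have h4 : ∑ d, sgn (cw Q (a, c) d) =
      (∑ d : {x : V // Q x = 0}, sgn (Q (d.1 + a))) * sgn c := by
    rw [Finset.sum_mul]
    refine Finset.sum_congr rfl fun x _ => ?_
    rw [cw, sgn_add h.cF]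
  rw [h4]
  congr 1
  linarith

lemma wt0 (h : QD F V Q B M) (a : V) (ha : a ≠ 0) :
    hammingNorm (cw Q (a, 0)) = 4 * M ^ 2 := by
  have h1 := h.sum_cw a 0 ha
  rw [sum_sgn, h.cD, sgn_zero] at h1
  zify; nlinarith

lemma wt1 (h : QD F V Q B M) (a : V) (ha : a ≠ 0) :
    hammingNorm (cw Q (a, 1)) = 2 * M * (2 * M - 1) := by
  have h1 := h.sum_cw a 1 ha
  rw [sum_sgn, h.cD, sgn_one] at h1
  have := h.hM
  zify [show 1 ≤ 2 * M by omega]; nlinarith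

lemma wt00 (h : QD F V Q B M) : hammingNorm (cw Q (0, 0)) = 0 := by
  rw [hammingNorm_eq_zero]
  funext d
  simp [cw, d.2]

lemma cDn (h : QD F V Q B M) :
    Fintype.card {x : V // Q x = 0} = 2 * M * (4 * M - 1) := by
  have := h.hM
  zify [show 1 ≤ 4 * M by omega]
  exact h.cD

lemma wt01 (h : QD F V Q B M) : hammingNorm (cw Q (0, 1)) = 2 * M * (4 * M - 1) := by
  rw [← h.cDn, hammingNorm, Finset.filter_true_of_mem, Finset.card_univ]
  intro d _
  simp [cw, d.2]

lemma wt_pos (h : QD F V Q B M) (p : V × F) (hp : p ≠ 0) :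
    2 * M * (2 * M - 1) ≤ hammingNorm (cw Q p) := by
  obtain ⟨a, c⟩ := p
  have := h.hM
  have e1 : 2 * M * (2 * M - 1) ≤ 4 * M ^ 2 := by
    zify [show 1 ≤ 2 * M by omega]; nlinarith
  have e2 : 2 * M * (2 * M - 1) ≤ 2 * M * (4 * M - 1) := by gcongr; omega
  by_cases ha : a = 0
  · subst ha
    rcases f2_cases h.cF c with rfl | rfl
    · exact absurd rfl hp
    · rw [h.wt01]; exact e2
  · rcases f2_cases h.cF c with rfl | rfl
    · rw [h.wt0 a ha]; exact e1
    · rw [h.wt1 a ha]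

lemma min_pos (h : QD F V Q B M) : 0 < 2 * M * (2 * M - 1) := by
  have := h.hM
  apply Nat.mul_pos <;> omega

lemma wt_min_iff (h : QD F V Q B M) (p : V × F) :
    hammingNorm (cw Q p) = 2 * M * (2 * M - 1) ↔ p.1 ≠ 0 ∧ p.2 = 1 := by
  obtain ⟨a, c⟩ := p
  have := h.hM
  have e1 : 2 * M * (2 * M - 1) < 4 * M ^ 2 := by
    zify [show 1 ≤ 2 * M by omega]; nlinarith
  have e2 : 2 * M * (2 * M - 1) < 2 * M * (4 * M - 1) := by
    apply Nat.mul_lt_mul_of_pos_left <;> omega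
  have e3 := h.min_pos
  by_cases ha : a = 0
  · subst ha
    rcases f2_cases h.cF c with rfl | rfl
    · rw [h.wt00]; simp; omega
    · rw [h.wt01]; simp; omega
  · rcases f2_cases h.cF c with rfl | rfl
    · rw [h.wt0 a ha]; simp; omega
    · rw [h.wt1 a ha]; simp [ha]

lemma cw_add (h : QD F V Q B M) (p q : V × F) :
    cw Q p + cw Q q = cw Q (p.1 + q.1, p.2 + q.2 + B p.1 q.1) := by
  funext d
  have h2 := f2_two h.cF (B p.1 q.1)
  rw [Pi.add_apply, h.cw_eq, h.cw_eq, h.cw_eq, h.addR, h.polar]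
  linear_combination - h2

lemma cw_inj (h : QD F V Q B M) : Function.Injective (cw Q) := by
  intro p q hpq
  have h1 : cw Q p + cw Q q = 0 := by
    rw [hpq]; funext d; exact f2_two h.cF _
  rw [h.cw_add] at h1
  have h2 := h.min_pos
  have h3 : ((p.1 + q.1, p.2 + q.2 + B p.1 q.1) : V × F) = 0 := by
    by_contra hne
    have := h.wt_pos _ hne
    rw [h1, hammingNorm_zero] at this
    omega
  have h4 := congrArg Prod.fst h3
  have h5 := congrArg Prod.snd h3
  simp only [Prod.fst_zero, Prod.snd_zero] at h4 h5
  have h6 : p.1 = q.1 := by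
    have := h.two q.1
    exact add_right_cancel (h4.trans this.symm)
  refine Prod.ext h6 ?_
  have := congrFun hpq ⟨0, h.Q_zero⟩
  simp only [cw, h6] at this
  exact add_left_cancel this

/-- number of `x` with `x, x + a ∈ D` -/
lemma count (h : QD F V Q B M) (a : V) (ha : a ≠ 0) :
    (Finset.univ.filter fun d : {x : V // Q x = 0} => Q (d.1 + a) = 0).card
      = 2 * M * (2 * M - 1) := by
  have h1 := h.wt0 a ha
  have h2 := Finset.card_filter_add_card_filter_not (s := Finset.univ)
    (fun d : {x : V // Q x = 0} => Q (d.1 + a) = 0)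
  have h3 : (Finset.univ.filter fun d : {x : V // Q x = 0} => ¬ Q (d.1 + a) = 0).card
      = 4 * M ^ 2 := by
    rw [← h1, hammingNorm]; simp [cw]
  rw [h3, Finset.card_univ, h.cDn] at h2
  have := h.hM
  zify [show 1 ≤ 2 * M by omega, show 1 ≤ 4 * M by omega] at h2 ⊢
  linarith

/-- the code as a subspace -/
def sub (h : QD F V Q B M) : Submodule F ({x : V // Q x = 0} → F) where
  carrier := Set.range (cw Q)
  add_mem' := by
    rintro _ _ ⟨p, rfl⟩ ⟨q, rfl⟩
    exact ⟨_, (h.cw_add p q).symm⟩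
  zero_mem' := ⟨(0, 0), hammingNorm_eq_zero.mp h.wt00⟩
  smul_mem' := by
    rintro c _ ⟨p, rfl⟩
    rcases f2_cases h.cF c with rfl | rfl
    · exact ⟨(0, 0), by rw [zero_smul]; exact hammingNorm_eq_zero.mp h.wt00⟩
    · exact ⟨p, by rw [one_smul]⟩

lemma card_code (h : QD F V Q B M) : Nat.card (Set.range (cw Q)) = 32 * M ^ 2 := by
  rw [Nat.card_range_of_injective h.cw_inj, Nat.card_prod, Nat.card_eq_fintype_card,
    Nat.card_eq_fintype_card, h.cV, h.cF]
  ring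

lemma card_dual (h : QD F V Q B M) (k : ℕ) (hk : 32 * M ^ 2 = 2 ^ k) :
    Nat.card (dualCode (Set.range (cw Q)))
      = 2 ^ (Fintype.card {x : V // Q x = 0} - k) := by
  let β : LinearMap.BilinForm F ({x : V // Q x = 0} → F) := dotProductBilin F F
  have hβ : β.Nondegenerate := by
    refine ⟨fun x hx => dotProduct_eq_zero_iff.mp hx, fun x hx => dotProduct_eq_zero_iff.mp ?_⟩
    intro w
    rw [dotProduct_comm]
    exact hx w
  have h1 : dualCode (Set.range (cw Q)) = (β.orthogonal h.sub : Set _) := by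
    ext u
    rw [SetLike.mem_coe, LinearMap.BilinForm.mem_orthogonal_iff]
    refine forall₂_congr fun v _ => ?_
    change u ⬝ᵥ v = 0 ↔ v ⬝ᵥ u = 0
    rw [dotProduct_comm]
  have h2 := LinearMap.BilinForm.finrank_orthogonal hβ h.sub
  have h3 : Module.finrank F h.sub = k := by
    have e := Module.card_eq_pow_finrank (K := F) (V := h.sub)
    have e2 : Nat.card h.sub = 32 * M ^ 2 := h.card_code
    rw [← Nat.card_eq_fintype_card, e2, hk, h.cF] at e
    exact (Nat.pow_right_injective le_rfl e).symm
  rw [h3, Module.finrank_fintype_fun_eq_card] at h2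
  rw [← h2, h1, ← h.cF]
  have e := Module.card_eq_pow_finrank (K := F) (V := β.orthogonal h.sub)
  rw [← e, ← Nat.card_eq_fintype_card]
  rfl

end QD

namespace QD

variable {F V : Type} [Field F] [Fintype F] [AddCommGroup V] [Fintype V]
    {Q : V → F} {B : V → V → F} {M : ℕ}

lemma enum (h : QD F V Q B M) (C : Set ({x : V // Q x = 0} → F)) [Fintype C]
    (hC : C = Set.range (cw Q)) :
    (C.toFinset.val.map fun c => hammingNorm c)
      = Multiset.replicate 1 0
        + Multiset.replicate (16 * M ^ 2 - 1) (2 * M * (2 * M - 1))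
        + Multiset.replicate (16 * M ^ 2 - 1) (4 * M ^ 2)
        + Multiset.replicate 1 (2 * M * (4 * M - 1)) := by
  have h1 : C.toFinset = Finset.univ.map ⟨cw Q, h.cw_inj⟩ := by
    ext w; simp [hC]
  have hF : (Finset.univ : Finset F) = {0, 1} := by
    ext x; simpa using f2_cases h.cF x
  rw [h1, Finset.map_val, Multiset.map_map]
  have h2 : ∀ (f : V × F → ℕ), (Finset.univ : Finset (V × F)).val.map f =
      ∑ p : V × F, ({f p} : Multiset ℕ) := by
    intro f
    rw [← Multiset.sum_map_singleton (Multiset.map f _), Multiset.map_map]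
    rfl
  rw [h2, Fintype.sum_prod_type, Fintype.sum_eq_add_sum_compl 0]
  simp only [Function.comp_apply, Function.Embedding.coeFn_mk, hF]
  have h3 : ∀ a ∈ ({0}ᶜ : Finset V), (∑ c ∈ ({0, 1} : Finset F),
      ({hammingNorm (cw Q (a, c))} : Multiset ℕ)) =
      {4 * M ^ 2} + {2 * M * (2 * M - 1)} := by
    intro a ha
    have ha : a ≠ 0 := by simpa using ha
    rw [Finset.sum_pair (by simp), h.wt0 a ha, h.wt1 a ha]
  rw [Finset.sum_congr rfl h3, Finset.sum_const, Finset.sum_pair (by simp), h.wt00, h.wt01,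
    Finset.card_compl, Finset.card_singleton, h.cV, nsmul_add, Multiset.nsmul_singleton,
    Multiset.nsmul_singleton, Multiset.replicate_one, Multiset.replicate_one]
  abel

lemma design (h : QD F V Q B M) : Holds2Design (Set.range (cw Q)) (2 * M * (2 * M - 1))
    (2 * M * (2 * M - 1) - 1) := by
  intro i j hij
  have hij' : i.1 + j.1 ≠ 0 := by
    intro h0
    apply hij
    exact Subtype.ext (add_right_cancel (h0.trans (h.two j.1).symm))
  have hinj : Function.Injective fun a : V => {k | cw Q (a, 1) k ≠ 0} := by
    intro a b hab
    have : cw Q (a, 1) = cw Q (b, 1) := by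
      funext k
      have hk := Set.ext_iff.mp hab k
      simp only [Set.mem_ofPred_eq] at hk
      rcases f2_cases h.cF (cw Q (a, 1) k) with e1 | e1 <;>
      rcases f2_cases h.cF (cw Q (b, 1) k) with e2 | e2 <;> simp_all
    exact congrArg Prod.fst (h.cw_inj this)
  have h1 := f2_two h.cF (1 : F)
  have hne : ∀ x : F, x + 1 ≠ 0 ↔ x = 0 := by
    intro x
    rcases f2_cases h.cF x with rfl | rfl <;> simp [h1]
  rw [card_of_param _ (Finset.univ.filter fun a : V => a ≠ 0 ∧ Q (i.1 + a) = 0 ∧ Q (j.1 + a) = 0)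
    (fun a => {k | cw Q (a, 1) k ≠ 0}) hinj.injOn]
  · rw [← h.count _ hij']
    have e : (Finset.univ.filter fun a : V => a ≠ 0 ∧ Q (i.1 + a) = 0 ∧ Q (j.1 + a) = 0)
      = ((Finset.univ.filter fun a : V => Q (i.1 + a) = 0 ∧ Q (j.1 + a) = 0)).erase 0 := by
      ext a; simp
    rw [e, Finset.card_erase_of_mem (by simp [i.2, j.2])]
    congr 1
    symm
    refine Finset.card_bij (fun d _ => i.1 + d.1) ?_ ?_ ?_
    · intro d hd
      simp only [Finset.mem_filter, Finset.mem_univ, true_and] at hd ⊢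
      rw [← add_assoc, h.two, zero_add, d.2]
      refine ⟨rfl, ?_⟩
      refine Eq.trans ?_ hd; congr 1; abel
    · intro d _ d' _ hdd
      exact Subtype.ext (add_left_cancel hdd)
    · intro a ha
      simp only [Finset.mem_filter, Finset.mem_univ, true_and] at ha
      refine ⟨⟨i.1 + a, ha.1⟩, ?_, ?_⟩
      · simp only [Finset.mem_filter, Finset.mem_univ, true_and]
        refine Eq.trans ?_ ha.2
        congr 1
        have : i.1 + a + (i.1 + j.1) = (i.1 + i.1) + (j.1 + a) := by abel
        rw [this, h.two, zero_add]
      · simp only [← add_assoc, h.two, zero_add]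
  · intro S
    simp only [Finset.mem_filter, Finset.mem_univ, true_and]
    constructor
    · rintro ⟨⟨_, ⟨p, rfl⟩, hp, rfl⟩, hi, hj⟩
      rw [h.wt_min_iff] at hp
      obtain ⟨a, c⟩ := p
      obtain ⟨hp1, hp2⟩ := hp
      simp only at hp1 hp2
      subst hp2
      simp only [cw, Set.mem_ofPred_eq, hne] at hi hj
      exact ⟨a, ⟨hp1, hi, hj⟩, rfl⟩
    · rintro ⟨a, ⟨ha, hi, hj⟩, rfl⟩
      refine ⟨⟨_, ⟨(a, 1), rfl⟩, h.wt1 a ha, rfl⟩, ?_, ?_⟩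
      · simpa only [cw, Set.mem_ofPred_eq, hne] using hi
      · simpa only [cw, Set.mem_ofPred_eq, hne] using hj

lemma B_sum (h : QD F V Q B M) (S : Finset {x : V // Q x = 0}) (a : V) :
    ∑ d ∈ S, B d.1 a = B (∑ d ∈ S, d.1) a := by
  let f : V →+ F := AddMonoidHom.mk' (fun x => B x a) (fun x y => h.addL x y a)
  exact (map_sum f (fun d : {x : V // Q x = 0} => d.1) S).symm

lemma mem_dual (h : QD F V Q B M) (u : {x : V // Q x = 0} → F) :
    u ∈ dualCode (Set.range (cw Q)) ↔ Even (hammingNorm u) ∧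
      ∑ d ∈ Finset.univ.filter (fun d => u d ≠ 0), d.1 = 0 := by
  set S := Finset.univ.filter (fun d => u d ≠ 0) with hS
  have h0 : hammingNorm u = S.card := rfl
  have hev : Even S.card ↔ (S.card : F) = 0 := by
    have h2 : ((2 : ℕ) : F) = 0 := by
      have := f2_two h.cF (1 : F)
      push_cast; rw [← this]; norm_num
    constructor
    · rintro ⟨k, hk⟩
      rw [hk, ← two_mul, Nat.cast_mul, h2, zero_mul]
    · intro hc
      by_contra hodd
      rw [Nat.not_even_iff_odd] at hodd
      obtain ⟨k, hk⟩ := hodd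
      rw [hk, Nat.cast_add, Nat.cast_mul, h2] at hc
      simp at hc
  have key : ∀ p : V × F, ∑ d, u d * cw Q p d =
      B (∑ d ∈ S, d.1) p.1 + S.card * (Q p.1 + p.2) := by
    intro p
    rw [← h.B_sum, ← nsmul_eq_mul, ← Finset.sum_const, ← Finset.sum_add_distrib, hS,
      Finset.sum_filter]
    refine Finset.sum_congr rfl fun d _ => ?_
    rw [← h.cw_eq]
    rcases f2_cases h.cF (u d) with e | e <;> simp [e]
  rw [h0, hev]
  constructor
  · intro hu
    have hc : (S.card : F) = 0 := by
      have := hu _ ⟨(0, 1), rfl⟩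
      rw [key] at this
      simpa [h.B_zero, h.Q_zero] using this
    refine ⟨hc, h.nondeg _ fun a => ?_⟩
    have := hu _ ⟨(a, 0), rfl⟩
    rw [key] at this
    simpa [hc] using this
  · rintro ⟨hc, hs⟩ _ ⟨p, rfl⟩
    rw [key, hc, hs, h.symm, h.B_zero]
    simp

lemma eq_of_add (h : QD F V Q B M) {x y : V} (hxy : x + y = 0) : x = y :=
  add_right_cancel (hxy.trans (h.two y).symm)

/-- blocks of the dual design -/
def blk (i j : {x : V // Q x = 0}) : Finset (Finset {x : V // Q x = 0}) :=
  Finset.univ.filter fun S => (S.card = 4 ∧ ∑ d ∈ S, d.1 = 0) ∧ i ∈ S ∧ j ∈ S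

lemma card_blk (h : QD F V Q B M) (i j : {x : V // Q x = 0}) (hij : i ≠ j) :
    2 * (blk i j).card = 2 * M * (2 * M - 1) - 2 := by
  have hij' : i.1 + j.1 ≠ 0 := fun h0 => hij (Subtype.ext (h.eq_of_add h0))
  set E := ((Finset.univ.filter fun d : {x : V // Q x = 0} =>
    Q (d.1 + (i.1 + j.1)) = 0).erase i).erase j with hE
  have hEi : i ∈ Finset.univ.filter fun d : {x : V // Q x = 0} =>
      Q (d.1 + (i.1 + j.1)) = 0 := by
    simp [← add_assoc, h.two, j.2]
  have hEj : j ∈ Finset.univ.filter fun d : {x : V // Q x = 0} =>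
      Q (d.1 + (i.1 + j.1)) = 0 := by
    simp [add_comm i.1, ← add_assoc, h.two, i.2]
  have hEc : E.card = 2 * M * (2 * M - 1) - 2 := by
    rw [hE, Finset.card_erase_of_mem (Finset.mem_erase.mpr ⟨hij.symm, hEj⟩),
      Finset.card_erase_of_mem hEi, h.count _ hij']
    omega
  have hsum : ∀ S : Finset {x : V // Q x = 0}, ∀ k, i ∈ S → j ∈ S → k ∈ S → k ≠ i → k ≠ j →
      ∑ d ∈ S, d.1 = i.1 + (j.1 + (k.1 + ∑ d ∈ ((S.erase i).erase j).erase k, d.1)) := by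
    intro S k hi hj hk hki hkj
    rw [Finset.add_sum_erase _ _ (by simp [hk, hki, hkj]),
      Finset.add_sum_erase _ _ (by simp [hj, hij.symm]), Finset.add_sum_erase _ _ hi]
  have hb := Finset.sum_card_bipartiteAbove_eq_sum_card_bipartiteBelow
    (s := blk i j) (t := E) (fun S k => k ∈ S)
  have hl : ∀ S ∈ blk i j, (Finset.bipartiteAbove (fun S k => k ∈ S) E S).card = 2 := by
    intro S hS
    simp only [blk, Finset.mem_filter, Finset.mem_univ, true_and] at hS
    obtain ⟨⟨hc, hs⟩, hi, hj⟩ := hS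
    have : Finset.bipartiteAbove (fun S k => k ∈ S) E S = (S.erase i).erase j := by
      ext k
      simp only [Finset.mem_bipartiteAbove, hE, Finset.mem_erase, Finset.mem_filter,
        Finset.mem_univ, true_and]
      constructor
      · tauto
      · rintro ⟨hkj, hki, hk⟩
        refine ⟨⟨hkj, hki, ?_⟩, hk⟩
        have h1 := hsum S k hi hj hk hki hkj
        have h2 : (((S.erase i).erase j).erase k).card = 1 := by
          rw [Finset.card_erase_of_mem (by simp [hk, hki, hkj]),
            Finset.card_erase_of_mem (by simp [hj, hij.symm]), Finset.card_erase_of_mem hi, hc]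
        obtain ⟨l, hl⟩ := Finset.card_eq_one.mp h2
        rw [hl, Finset.sum_singleton, hs] at h1
        have h3 : k.1 + (i.1 + j.1) = l.1 := by
          apply h.eq_of_add
          rw [h1]; abel
        rw [h3, l.2]
    rw [this, Finset.card_erase_of_mem (by simp [hj, hij.symm]), Finset.card_erase_of_mem hi, hc]
  have hr : ∀ k ∈ E, (Finset.bipartiteBelow (fun S k => k ∈ S) (blk i j) k).card = 1 := by
    intro k hk
    simp only [hE, Finset.mem_erase, Finset.mem_filter, Finset.mem_univ, true_and] at hk
    obtain ⟨hkj, hki, hk⟩ := hk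
    let l : {x : V // Q x = 0} := ⟨k.1 + (i.1 + j.1), hk⟩
    have hli : l ≠ i := by
      intro e
      apply hkj
      have e := congrArg Subtype.val e
      apply Subtype.ext
      apply h.eq_of_add
      apply add_right_cancel (b := i.1)
      rw [zero_add]
      refine Eq.trans ?_ e
      simp only [l]; abel
    have hlj : l ≠ j := by
      intro e
      apply hki
      have e := congrArg Subtype.val e
      apply Subtype.ext
      apply h.eq_of_add
      apply add_right_cancel (b := j.1)
      rw [zero_add]
      refine Eq.trans ?_ e
      simp only [l]; abel
    have hlk : l ≠ k := by
      intro e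
      apply hij'
      have e := congrArg Subtype.val e
      simpa [l] using e
    rw [Finset.card_eq_one]
    refine ⟨{i, j, k, l}, ?_⟩
    ext S
    simp only [Finset.mem_bipartiteBelow, blk, Finset.mem_filter, Finset.mem_univ, true_and,
      Finset.mem_singleton]
    constructor
    · rintro ⟨⟨⟨hc, hs⟩, hi, hj⟩, hk⟩
      have h1 := hsum S k hi hj hk hki hkj
      have h2 : (((S.erase i).erase j).erase k).card = 1 := by
        rw [Finset.card_erase_of_mem (by simp [hk, hki, hkj]),
          Finset.card_erase_of_mem (by simp [hj, hij.symm]), Finset.card_erase_of_mem hi, hc]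
      obtain ⟨l', hl⟩ := Finset.card_eq_one.mp h2
      rw [hl, Finset.sum_singleton, hs] at h1
      have h3 : l = l' := by
        apply Subtype.ext
        apply h.eq_of_add
        rw [h1]; simp only [l]; abel
      rw [h3, ← Finset.insert_erase hi, ← Finset.insert_erase (a := j) (s := S.erase i)
        (by simp [hj, hij.symm]), ← Finset.insert_erase (a := k) (s := (S.erase i).erase j)
        (by simp [hk, hki, hkj]), hl]
    · rintro rfl
      refine ⟨⟨⟨?_, ?_⟩, by simp, by simp⟩, by simp⟩
      · rw [Finset.card_insert_of_notMem, Finset.card_insert_of_notMem,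
          Finset.card_insert_of_notMem, Finset.card_singleton] <;>
        simp [hij, hki.symm, hkj.symm, hli.symm, hlj.symm, hlk.symm]
      · rw [Finset.sum_insert, Finset.sum_insert, Finset.sum_insert, Finset.sum_singleton]
        · have : i.1 + (j.1 + (k.1 + l.1)) = (i.1 + i.1) + (j.1 + j.1) + (k.1 + k.1) := by
            simp only [l]; abel
          rw [this]; simp [h.two]
        all_goals simp [hij, hki.symm, hkj.symm, hli.symm, hlj.symm, hlk.symm]
  rw [Finset.sum_congr rfl hl, Finset.sum_congr rfl hr, Finset.sum_const, Finset.sum_const] at hb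
  rw [← hEc]
  simp only [smul_eq_mul, mul_one] at hb
  omega

lemma card_blk' (h : QD F V Q B M) (i j : {x : V // Q x = 0}) (hij : i ≠ j) :
    (blk i j).card = 2 * M ^ 2 - M - 1 := by
  have h1 := h.card_blk i j hij
  have : 2 * M * (2 * M - 1) = 2 * (2 * M ^ 2 - M) := by
    rw [Nat.mul_sub, Nat.mul_sub]; congr 1 <;> ring
  rw [this] at h1
  omega

lemma ind_supp (S : Finset {x : V // Q x = 0}) :
    (Finset.univ.filter fun d => (if d ∈ S then (1 : F) else 0) ≠ 0) = S := by
  ext d; simp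

lemma ind_mem (h : QD F V Q B M) (S : Finset {x : V // Q x = 0}) (hS : S.card = 4)
    (hs : ∑ d ∈ S, d.1 = 0) :
    (fun d => if d ∈ S then (1 : F) else 0) ∈ dualCode (Set.range (cw Q)) ∧
    hammingNorm (fun d => if d ∈ S then (1 : F) else 0) = 4 := by
  have h1 : hammingNorm (fun d => if d ∈ S then (1 : F) else 0) = 4 := by
    rw [hammingNorm]
    convert hS
    exact ind_supp S
  refine ⟨?_, h1⟩
  rw [h.mem_dual, h1]
  refine ⟨by decide, ?_⟩
  convert hs
  exact ind_supp S

lemma dual_design (h : QD F V Q B M) : Holds2Design (dualCode (Set.range (cw Q))) 4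
    (2 * M ^ 2 - M - 1) := by
  intro i j hij
  rw [← h.card_blk' i j hij]
  refine card_of_param _ _ (fun S : Finset _ => (S : Set _)) Finset.coe_injective.injOn ?_
  intro S
  simp only [blk, Finset.mem_filter, Finset.mem_univ, true_and]
  constructor
  · rintro ⟨⟨u, hu, hu4, rfl⟩, hi, hj⟩
    refine ⟨Finset.univ.filter fun d => u d ≠ 0, ⟨⟨hu4, ((h.mem_dual u).mp hu).2⟩, ?_, ?_⟩, ?_⟩
    · simpa using hi
    · simpa using hj
    · simp
  · rintro ⟨T, ⟨⟨hT, hs⟩, hi, hj⟩, rfl⟩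
    have := h.ind_mem T hT hs
    refine ⟨⟨_, this.1, this.2, ?_⟩, hi, hj⟩
    ext d; simp

lemma dual_min (h : QD F V Q B M) : IsMinDist (dualCode (Set.range (cw Q))) 4 := by
  have hM := h.hM
  constructor
  · have : 1 < Fintype.card {x : V // Q x = 0} := by
      rw [h.cDn]
      have : 2 * 2 * 1 ≤ 2 * M * (4 * M - 1) := by gcongr; omega
      omega
    obtain ⟨i, j, hij⟩ := Fintype.exists_pair_of_one_lt_card this
    have hc := h.card_blk' i j hij
    have : 0 < (blk i j).card := by
      rw [hc]
      have : 2 * M ≤ M ^ 2 := by nlinarith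
      omega
    obtain ⟨S, hS⟩ := Finset.card_pos.mp this
    simp only [blk, Finset.mem_filter, Finset.mem_univ, true_and] at hS
    have := h.ind_mem S hS.1.1 hS.1.2
    refine ⟨_, this.1, ?_, this.2⟩
    intro h0
    rw [h0, hammingNorm_zero] at this
    omega
  · intro u hu hne
    rw [h.mem_dual] at hu
    obtain ⟨hev, hs⟩ := hu
    have h0 : hammingNorm u ≠ 0 := hammingNorm_ne_zero_iff.mpr hne
    have h2 : hammingNorm u ≠ 2 := by
      intro h2
      obtain ⟨x, y, hxy, he⟩ := Finset.card_eq_two.mp h2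
      rw [he, Finset.sum_pair hxy] at hs
      exact hxy (Subtype.ext (h.eq_of_add hs))
    obtain ⟨k, hk⟩ := hev
    omega

lemma code_min (h : QD F V Q B M) :
    IsMinDist (Set.range (cw Q)) (2 * M * (2 * M - 1)) := by
  have hp := h.min_pos
  constructor
  · have : 1 < Fintype.card V := by rw [h.cV]; have := h.hM; nlinarith
    obtain ⟨a, ha⟩ := Fintype.exists_ne_of_one_lt_card this 0
    refine ⟨_, ⟨(a, 1), rfl⟩, ?_, h.wt1 a ha⟩
    rw [← hammingNorm_ne_zero_iff, h.wt1 a ha]; omega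
  · rintro _ ⟨p, rfl⟩ hne
    apply h.wt_pos
    rintro rfl
    exact hne (hammingNorm_eq_zero.mp h.wt00)

end QD

lemma sum_sgn_add {F V : Type*} [Field F] [Fintype F] [AddCommGroup V] [Fintype V]
    (hF : Fintype.card F = 2) (f : V → F) (hf : ∀ x y, f (x + y) = f x + f y)
    (x0 : V) (hx : f x0 ≠ 0) : ∑ x, sgn (f x) = 0 := by
  have h1 : ∑ x, sgn (f (x + x0)) = ∑ x, sgn (f x) :=
    Equiv.sum_comp (Equiv.addRight x0) (fun x => sgn (f x))
  have h2 : sgn (f x0) = -1 := by simp [sgn, hx]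
  simp_rw [hf, sgn_add hF, h2, ← Finset.sum_mul] at h1
  linarith

lemma sum_norm {K L : Type*} [Field K] [Field L] [Fintype K] [Fintype L] [Algebra K L]
    (G : K → ℤ) :
    ∑ x : L, G (Algebra.norm K x) = G 0 +
      ((Finset.univ.filter fun x : L => Algebra.norm K x = 1).card : ℤ) *
        (∑ y, G y - G 0) := by
  have h1 : ∑ x : L, G (Algebra.norm K x) =
      ∑ y : K, ((Finset.univ.filter fun x : L => Algebra.norm K x = y).card : ℤ) * G y := by
    rw [← Finset.sum_fiberwise (s := Finset.univ) (g := fun x : L => Algebra.norm K x)]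
    refine Finset.sum_congr rfl fun y _ => ?_
    rw [Finset.sum_congr rfl (g := fun _ => G y), Finset.sum_const, nsmul_eq_mul]
    intro x hx
    simp only [Finset.mem_filter, Finset.mem_univ, true_and] at hx
    rw [hx]
  have h0 : (Finset.univ.filter fun x : L => Algebra.norm K x = 0) = {0} := by
    ext x; simp [Algebra.norm_eq_zero_iff]
  have hy : ∀ y : K, y ≠ 0 → (Finset.univ.filter fun x : L => Algebra.norm K x = y).card =
      (Finset.univ.filter fun x : L => Algebra.norm K x = 1).card := by
    intro y hy
    obtain ⟨z, hz⟩ := FiniteField.norm_surjective K L y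
    have hz0 : z ≠ 0 := by
      rintro rfl
      rw [Algebra.norm_zero] at hz
      exact hy hz.symm
    symm
    refine Finset.card_bij (fun x _ => x * z) ?_ ?_ ?_
    · intro x hx
      simp only [Finset.mem_filter, Finset.mem_univ, true_and] at hx ⊢
      rw [map_mul, hx, hz, one_mul]
    · intro x _ x' _ e
      exact mul_right_cancel₀ hz0 e
    · intro x hx
      simp only [Finset.mem_filter, Finset.mem_univ, true_and] at hx
      refine ⟨x * z⁻¹, ?_, by simp [hz0]⟩
      simp only [Finset.mem_filter, Finset.mem_univ, true_and]
      have : Algebra.norm K (x * z⁻¹) * y = y := by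
        rw [← hz, ← map_mul, inv_mul_cancel_right₀ hz0, hx, hz]
      exact mul_right_cancel₀ hy (by rw [this, one_mul])
  rw [h1, Fintype.sum_eq_add_sum_compl 0, Fintype.sum_eq_add_sum_compl 0 G, h0,
    add_sub_cancel_left, Finset.mul_sum]
  congr 1
  · simp
  · refine Finset.sum_congr rfl fun y hy' => ?_
    rw [hy y (by simpa using hy')]

lemma mkQD (r : ℕ) (hr : 3 ≤ r)
    (Fq Fr Fm : Type) [Field Fq] [Field Fr] [Field Fm]
    [Fintype Fq] [Fintype Fr] [Fintype Fm]
    [Algebra Fq Fr] [Algebra Fr Fm] [Algebra Fq Fm] [IsScalarTower Fq Fr Fm]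
    (hcq : Fintype.card Fq = 2) (hcr : Fintype.card Fr = 2 ^ r)
    (hcm : Fintype.card Fm = 2 ^ (2 * r))
    (g : Fm → Fr) (hg : ∀ x : Fm, algebraMap Fr Fm (g x) = x ^ (2 ^ r + 1)) :
    QD Fq Fm (fun x => Algebra.trace Fq Fr (g x))
      (fun x a => Algebra.trace Fq Fm (a ^ (2 ^ r) * x)) (2 ^ (r - 2)) := by
  have hfin : Module.finrank Fr Fm = 2 := by
    have e := Module.card_eq_pow_finrank (K := Fr) (V := Fm)
    rw [hcm, hcr, ← pow_mul, mul_comm] at e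
    exact (Nat.eq_of_mul_eq_mul_left (by omega) (Nat.pow_right_injective le_rfl e)).symm
  have hinj := (algebraMap Fr Fm).injective
  have hgN : ∀ x, g x = Algebra.norm Fr x := by
    intro x
    apply hinj
    rw [hg, FiniteField.algebraMap_norm_eq_pow_sum, hfin, Nat.card_eq_fintype_card, hcr]
    congr 1
    simp [Finset.sum_range_succ, add_comm]
  have hT : ∀ z : Fm, algebraMap Fr Fm (Algebra.trace Fr Fm z) = z + z ^ (2 ^ r) := by
    intro z
    rw [FiniteField.algebraMap_trace_eq_sum_pow, hfin, Nat.card_eq_fintype_card, hcr]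
    simp [Finset.sum_range_succ]
  have h2 : (2 : Fm) = 0 := by
    have h1 := f2_two hcq (1 : Fq)
    have h3 := congrArg (algebraMap Fq Fm) h1
    rw [map_add, map_one, map_zero] at h3
    rw [← h3]; norm_num
  haveI : CharP Fm 2 := CharTwo.of_one_ne_zero_of_two_eq_zero one_ne_zero h2
  haveI : Fact (Nat.Prime 2) := ⟨Nat.prime_two⟩
  have hfr : ∀ x : Fm, (x ^ (2 ^ r)) ^ (2 ^ r) = x := by
    intro x
    rw [← pow_mul, ← pow_add, ← two_mul, ← hcm, FiniteField.pow_card]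
  have h4M : 4 * 2 ^ (r - 2) = 2 ^ r := by
    obtain ⟨k, rfl⟩ := Nat.exists_eq_add_of_le hr
    rw [show 3 + k - 2 = k + 1 by omega]; ring
  refine ⟨?_, hcq, ?_, ?_, ?_, ?_, ?_, ?_⟩
  · intro x; rw [← two_mul, h2, zero_mul]
  · intro x y
    have : g (x + y) = g x + g y + Algebra.trace Fr Fm (y ^ (2 ^ r) * x) := by
      apply hinj
      rw [map_add, map_add, hT, hg, hg, hg, pow_succ, add_pow_char_pow, mul_pow, hfr]
      ring
    simp only [this, map_add, Algebra.trace_trace]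
  · intro x a b
    simp only [add_pow_char_pow, add_mul, map_add]
  · simp_rw [hgN]
    have hG := sum_norm (K := Fr) (L := Fm) (fun y => sgn (Algebra.trace Fq Fr y))
    have h1 := sum_norm (K := Fr) (L := Fm) (fun y => 1)
    simp only [Finset.sum_const, Finset.card_univ, hcm, hcr, nsmul_eq_mul, mul_one] at h1
    have h0 : ∑ y : Fr, sgn (Algebra.trace Fq Fr y) = 0 := by
      have : ∃ y : Fr, Algebra.trace Fq Fr y ≠ 0 := by
        obtain ⟨y, hy⟩ := Algebra.trace_surjective Fq Fr 1
        exact ⟨y, by rw [hy]; exact one_ne_zero⟩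
      obtain ⟨y, hy⟩ := this
      exact sum_sgn_add hcq _ (fun x y => map_add _ x y) y hy
    rw [hG, h0, map_zero, sgn_zero]
    have h4' : (4 * (2 ^ (r - 2) : ℕ) : ℤ) = 2 ^ r := by exact_mod_cast h4M
    rw [h4']
    push_cast at h1
    have hlt : (1 : ℤ) < 2 ^ r := one_lt_pow₀ (by norm_num) (by omega)
    rw [mul_comm 2 r, pow_mul] at h1
    have : ((2 : ℤ) ^ r - 1) * ((Finset.univ.filter fun x : Fm => Algebra.norm Fr x = 1).card : ℤ)
        = (2 ^ r - 1) * (2 ^ r + 1) := by linarith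
    have := mul_left_cancel₀ (by linarith) this
    rw [this]; ring
  · intro a ha
    have : ∃ y : Fm, Algebra.trace Fq Fm (a ^ (2 ^ r) * y) ≠ 0 := by
      obtain ⟨y, hy⟩ := Algebra.trace_surjective Fq Fm 1
      refine ⟨(a ^ (2 ^ r))⁻¹ * y, ?_⟩
      rw [mul_inv_cancel_left₀ (pow_ne_zero _ ha), hy]; exact one_ne_zero
    obtain ⟨y, hy⟩ := this
    exact sum_sgn_add hcq (fun x => Algebra.trace Fq Fm (a ^ (2 ^ r) * x))
      (fun x y => by rw [mul_add, map_add]) y hy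
  · rw [hcm, mul_comm 2 r, pow_mul, ← h4M]; ring
  · calc 2 = 2 ^ 1 := by norm_num
      _ ≤ 2 ^ (r - 2) := Nat.pow_le_pow_right (by norm_num) (by omega)

theorem stmt7 (r m n : ℕ) (hr : 3 ≤ r) (hm : m = 2 * r)
    (hn : n = 2 ^ (r - 1) * (2 ^ r - 1))
    (Fq Fr Fm : Type) [Field Fq] [Field Fr] [Field Fm]
    [Fintype Fq] [Fintype Fr] [Fintype Fm]
    [Algebra Fq Fr] [Algebra Fr Fm] [Algebra Fq Fm] [IsScalarTower Fq Fr Fm]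
    (hcq : Fintype.card Fq = 2) (hcr : Fintype.card Fr = 2 ^ r)
    (hcm : Fintype.card Fm = 2 ^ m)
    (g : Fm → Fr) (hg : ∀ x : Fm, algebraMap Fr Fm (g x) = x ^ (2 ^ r + 1))
    (C : Set ({x : Fm // Algebra.trace Fq Fr (g x) = 0} → Fq))
    (hC : C = augCode Fq Fm (fun x => Algebra.trace Fq Fr (g x) = 0)) :
    -- length
    Fintype.card {x : Fm // Algebra.trace Fq Fr (g x) = 0} = n ∧
    -- dimension `m + 1`
    Nat.card C = 2 ^ (m + 1) ∧
    -- minimum distance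
    IsMinDist C (2 ^ (r - 1) * (2 ^ (r - 1) - 1)) ∧
    -- weight enumerator
    (C.toFinset.val.map fun c => hammingNorm c)
      = Multiset.replicate 1 0
        + Multiset.replicate (2 ^ (2 * r) - 1) (2 ^ (r - 1) * (2 ^ (r - 1) - 1))
        + Multiset.replicate (2 ^ (2 * r) - 1) (2 ^ (2 * r - 2))
        + Multiset.replicate 1 (2 ^ (r - 1) * (2 ^ r - 1)) ∧
    -- the dual code has dimension `n - m - 1` and minimum distance `4`
    Nat.card (dualCode C) = 2 ^ (n - m - 1) ∧
    IsMinDist (dualCode C) 4 ∧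
    -- the minimum weight codewords hold a 2-design
    Holds2Design C (2 ^ (r - 1) * (2 ^ (r - 1) - 1)) (2 ^ (2 * r - 2) - 2 ^ (r - 1) - 1) ∧
    -- the minimum weight codewords of the dual hold a 2-design
    Holds2Design (dualCode C) 4 (2 ^ (2 * r - 3) - 2 ^ (r - 2) - 1) := by
  subst hm
  have h := mkQD r hr Fq Fr Fm hcq hcr hcm g hg
  have hfr : ∀ x : Fm, (x ^ (2 ^ r)) ^ (2 ^ r) = x := by
    intro x
    rw [← pow_mul, ← pow_add, ← two_mul, ← hcm, FiniteField.pow_card]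
  have hC' : C = Set.range (QD.cw (fun x => Algebra.trace Fq Fr (g x))) := by
    rw [hC]
    ext w
    constructor
    · rintro ⟨b, c, hw⟩
      refine ⟨(b ^ (2 ^ r), c - Algebra.trace Fq Fr (g (b ^ (2 ^ r)))), ?_⟩
      funext d
      rw [h.cw_eq, hw]
      simp [hfr]
    · rintro ⟨⟨a, c⟩, rfl⟩
      exact ⟨a ^ (2 ^ r), Algebra.trace Fq Fr (g a) + c, fun d => h.cw_eq (a, c) d⟩
  obtain ⟨k, rfl⟩ := Nat.exists_eq_add_of_le hr
  have e1 : 3 + k - 1 = k + 2 := by omega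
  have e2 : 3 + k - 2 = k + 1 := by omega
  have e3 : 2 * (3 + k) - 2 = 2 * k + 4 := by omega
  have e4 : 2 * (3 + k) - 3 = 2 * k + 3 := by omega
  rw [e1] at hn
  rw [e1, e2, e3, e4]
  rw [e2] at h
  have p1 : 2 ^ (k + 2) = 2 * 2 ^ (k + 1) := by ring
  have p2 : 2 ^ (3 + k) = 4 * 2 ^ (k + 1) := by ring
  have p3 : 2 ^ (2 * k + 4) = 4 * (2 ^ (k + 1)) ^ 2 := by ring
  have p4 : 2 ^ (2 * k + 3) = 2 * (2 ^ (k + 1)) ^ 2 := by ring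
  have p5 : 2 ^ (2 * (3 + k)) = 16 * (2 ^ (k + 1)) ^ 2 := by ring
  have p6 : 2 ^ (2 * (3 + k) + 1) = 32 * (2 ^ (k + 1)) ^ 2 := by ring
  have hlam : 4 * (2 ^ (k + 1)) ^ 2 - 2 * 2 ^ (k + 1) - 1 =
      2 * 2 ^ (k + 1) * (2 * 2 ^ (k + 1) - 1) - 1 := by
    rw [Nat.mul_sub]; congr 2 <;> ring
  have hn' : Fintype.card {x : Fm // Algebra.trace Fq Fr (g x) = 0} = n := by
    rw [hn, p1, p2]
    exact h.cDn
  have hen := h.enum C hC'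
  refine ⟨hn', ?_, ?_, ?_, ?_, ?_, ?_, ?_⟩
  · rw [hC', p6]; exact h.card_code
  · rw [hC', p1]; exact h.code_min
  · rw [p1, p2, p3, p5]
    convert hen
  · rw [hC', Nat.sub_sub, ← hn']
    exact h.card_dual _ p6.symm
  · rw [hC']; exact h.dual_min
  · rw [hC', p1, p3, hlam]; exact h.design
  · rw [hC', p4]; exact h.dual_design
end
end

section
/- Let q = 2, m = 2r with r ≥ 3, and n = 2^{r−1}(2^r − 1). Then the augmented code \overline{C_D} is a binary linear code of length n, dimension m + 1 and minimum distance 2^{r−1}(2^{r−1} − 1) which has locality 3, and its dual \overline{C_D}^⊥ is a binary linear code of length n, dimension n − m − 1 and minimum distance 4 which has locality 2^{r−1}(2^{r−1} − 1) − 1. -/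
open scoped Classical

noncomputable section

section helpers

variable {F : Type*} [Field F] [Fintype F]

lemma card_dualCode {ι : Type*} [Fintype ι] (W : Submodule F (ι → F)) :
    Nat.card (dualCode (W : Set (ι → F))) = Fintype.card F ^ (Fintype.card ι - Module.finrank F W) := by
  have h1 := Subspace.finrank_add_finrank_dualAnnihilator_eq W
  have e : dualCode (W : Set (ι → F)) ≃ W.dualAnnihilator :=
    { toFun := fun u => ⟨dotProductEquiv F ι u.1, by
        rw [Submodule.mem_dualAnnihilator]
        intro w hw
        exact u.2 w hw⟩
      invFun := fun φ => ⟨(dotProductEquiv F ι).symm φ.1, by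
        intro v hv
        have := (Submodule.mem_dualAnnihilator φ.1).1 φ.2 v hv
        rw [← (dotProductEquiv F ι).apply_symm_apply φ.1] at this
        exact this⟩
      left_inv := fun u => by simp
      right_inv := fun u => by simp }
  rw [Nat.card_congr e, Module.natCard_eq_pow_finrank (K := F), Nat.card_eq_fintype_card]
  congr 1
  rw [Module.finrank_fintype_fun_eq_card] at h1
  omega

def chi (y : F) : ℤ := if y = 0 then 1 else -1

lemma two_cases (h : Fintype.card F = 2) (y : F) : y = 0 ∨ y = 1 := by
  by_contra hc
  push Not at hc
  have : ({0, 1, y} : Finset F).card = 3 := by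
    rw [Finset.card_eq_three]
    exact ⟨0, 1, y, zero_ne_one, hc.1.symm, hc.2.symm, rfl⟩
  have h2 := Finset.card_le_univ ({0, 1, y} : Finset F)
  rw [this, h] at h2
  omega

lemma charTwo_of_card {K : Type*} [Field K] [Fintype K] {k : ℕ} (h : Fintype.card K = 2 ^ k) :
    CharP K 2 := by
  have : (2 : K) ^ k = 0 := by
    have := FiniteField.cast_card_eq_zero K
    rw [h] at this
    exact_mod_cast this
  exact CharTwo.of_one_ne_zero_of_two_eq_zero one_ne_zero (by by_contra h0; exact pow_ne_zero k h0 this)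

lemma chi_add (h : Fintype.card F = 2) (x y : F) : chi (x + y) = chi x * chi y := by
  have : CharP F 2 := charTwo_of_card (k := 1) (by simpa using h)
  have h11 : (1 : F) + 1 = 0 := CharTwo.add_self_eq_zero 1
  rcases two_cases h x with rfl | rfl <;> rcases two_cases h y with rfl | rfl <;>
    simp [chi, h11]

lemma sum_chi_zero (h : Fintype.card F = 2) {V : Type*} [AddCommGroup V] [Fintype V]
    (f : V → F) (hf : ∀ x y, f (x + y) = f x + f y) (x₀ : V) (hx : f x₀ ≠ 0) :
    ∑ x, chi (f x) = 0 := by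
  have h1 : ∑ x, chi (f (x + x₀)) = ∑ x, chi (f x) :=
    Fintype.sum_equiv (Equiv.addRight x₀) _ _ (fun x => rfl)
  have h2 : ∑ x, chi (f (x + x₀)) = - ∑ x, chi (f x) := by
    rw [← Finset.sum_neg_distrib]
    refine Finset.sum_congr rfl fun x _ => ?_
    rw [hf, chi_add h]
    simp [chi, hx]
  linarith

end helpers
section fieldpart

variable {r : ℕ} {Fq Fr Fm : Type} [Field Fq] [Field Fr] [Field Fm]
    [Fintype Fq] [Fintype Fr] [Fintype Fm]
    [Algebra Fq Fr] [Algebra Fr Fm] [Algebra Fq Fm] [IsScalarTower Fq Fr Fm]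
    
lemma finrank_two (hr : 3 ≤ r) (hcr : Fintype.card Fr = 2 ^ r)
    (hcm : Fintype.card Fm = 2 ^ (2 * r)) : Module.finrank Fr Fm = 2 := by
  have h := Module.card_eq_pow_finrank (K := Fr) (V := Fm)
  rw [hcr, hcm, ← pow_mul] at h
  have := Nat.pow_right_injective (le_refl 2) h
  have h2 : r * 2 = r * Module.finrank Fr Fm := by rw [← this]; ring
  exact (Nat.eq_of_mul_eq_mul_left (by omega) h2).symm

lemma g_eq_norm (hr : 3 ≤ r) (hcr : Fintype.card Fr = 2 ^ r)
    (hcm : Fintype.card Fm = 2 ^ (2 * r))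
    (g : Fm → Fr) (hg : ∀ x : Fm, algebraMap Fr Fm (g x) = x ^ (2 ^ r + 1)) (x : Fm) :
    g x = Algebra.norm Fr x := by
  apply (algebraMap Fr Fm).injective
  rw [hg, FiniteField.algebraMap_norm_eq_prod_pow, finrank_two hr hcr hcm, Nat.card_eq_fintype_card,
    hcr]
  simp [Finset.prod_range_succ]
  ring

lemma g_pol (hr : 3 ≤ r) (hcr : Fintype.card Fr = 2 ^ r)
    (hcm : Fintype.card Fm = 2 ^ (2 * r))
    (g : Fm → Fr) (hg : ∀ x : Fm, algebraMap Fr Fm (g x) = x ^ (2 ^ r + 1)) (x a : Fm) :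
    Algebra.trace Fq Fm (a ^ (2 ^ r) * x) = Algebra.trace Fq Fr (g (x + a)) +
      Algebra.trace Fq Fr (g x) + Algebra.trace Fq Fr (g a) := by
  have : CharP Fm 2 := charTwo_of_card hcm
  have : CharP Fr 2 := charTwo_of_card hcr
  have ha : (a ^ (2 ^ r)) ^ (2 ^ r) = a := by
    rw [← pow_mul, ← pow_add, ← two_mul, ← hcm, FiniteField.pow_card]
  have h : Algebra.trace Fr Fm (a ^ (2 ^ r) * x) = g (x + a) + g x + g a := by
    apply (algebraMap Fr Fm).injective
    rw [FiniteField.algebraMap_trace_eq_sum_pow, finrank_two hr hcr hcm, Nat.card_eq_fintype_card,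
      hcr, map_add, map_add, hg, hg, hg, pow_succ (x + a), add_pow_char_pow]
    simp only [Finset.sum_range_succ, Finset.sum_range_zero, pow_zero, pow_one, mul_pow, ha]
    have h2 : (2 : Fm) = 0 := CharTwo.two_eq_zero
    linear_combination (-x ^ (2 ^ r + 1) - a ^ (2 ^ r + 1)) * h2
  rw [← Algebra.trace_trace (S := Fr), h, map_add, map_add]

lemma sum_zero_add_units {K : Type*} [Field K] [Fintype K] (h : K → ℤ) :
    ∑ x, h x = h 0 + ∑ u : Kˣ, h u := by
  rw [Fintype.sum_eq_add_sum_compl 0]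
  congr 1
  rw [Finset.sum_subtype (p := fun x => x ≠ 0) _ (by simp)]
  exact (Fintype.sum_equiv (unitsEquivNeZero) _ _ (fun x => rfl)).symm

lemma sum_g (hr : 3 ≤ r) (hcr : Fintype.card Fr = 2 ^ r)
    (hcm : Fintype.card Fm = 2 ^ (2 * r))
    (g : Fm → Fr) (hg : ∀ x : Fm, algebraMap Fr Fm (g x) = x ^ (2 ^ r + 1)) (h : Fr → ℤ) :
    ∑ x, h (g x) = h 0 + (2 ^ r + 1) * (∑ t, h t - h 0) := by
  obtain ⟨k, hk⟩ : ∃ k : ℤ, ∀ h : Fr → ℤ, ∑ x, h (g x) = h 0 + k * (∑ t, h t - h 0) := by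
    let f : Fmˣ →* Frˣ := Units.map (Algebra.norm Fr (S := Fm))
    have hf : Function.Surjective f := FiniteField.unitsMap_norm_surjective Fr Fm
    refine ⟨(Finset.univ.filter fun u => f u = 1).card, fun h => ?_⟩
    rw [sum_zero_add_units, sum_zero_add_units h]
    have h0 : g 0 = 0 := by rw [g_eq_norm hr hcr hcm g hg, Algebra.norm_zero]
    rw [h0, add_sub_cancel_left]
    congr 1
    rw [← Finset.sum_fiberwise Finset.univ f, Finset.mul_sum]
    refine Finset.sum_congr rfl fun v _ => ?_
    rw [MonoidHom.card_fiber_eq_of_mem_range f (hf 1) (hf v), ← nsmul_eq_mul,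
      ← Finset.sum_const]
    refine Finset.sum_congr rfl fun u hu => ?_
    rw [← (Finset.mem_filter.1 hu).2, g_eq_norm hr hcr hcm g hg]
    rfl
  have h1 := hk (fun _ => 1)
  simp only [Finset.sum_const, Finset.card_univ, hcr, hcm, nsmul_eq_mul, mul_one] at h1
  push_cast at h1
  have h8 : (8 : ℤ) ≤ 2 ^ r := by
    calc (8 : ℤ) = 2 ^ 3 := by norm_num
      _ ≤ 2 ^ r := pow_le_pow_right₀ (by norm_num) hr
  rw [mul_comm 2 r, pow_mul] at h1
  have : k = 2 ^ r + 1 := by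
    have h3 : ((2 : ℤ) ^ r - 1) * k = (2 ^ r - 1) * (2 ^ r + 1) := by linear_combination -h1
    exact mul_left_cancel₀ (by omega) h3
  rw [hk, this]

lemma sum_chi_Q (hr : 3 ≤ r) (hcq : Fintype.card Fq = 2) (hcr : Fintype.card Fr = 2 ^ r)
    (hcm : Fintype.card Fm = 2 ^ (2 * r))
    (g : Fm → Fr) (hg : ∀ x : Fm, algebraMap Fr Fm (g x) = x ^ (2 ^ r + 1)) :
    ∑ x, chi (Algebra.trace Fq Fr (g x)) = - 2 ^ r := by
  rw [sum_g hr hcr hcm g hg (fun t => chi (Algebra.trace Fq Fr t))]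
  obtain ⟨t, ht⟩ := Algebra.trace_surjective Fq Fr 1
  rw [sum_chi_zero hcq _ (fun x y => map_add _ x y) t (by simp [ht])]
  simp [chi]

lemma lines (hr : 3 ≤ r) (hcq : Fintype.card Fq = 2) (hcr : Fintype.card Fr = 2 ^ r)
    (hcm : Fintype.card Fm = 2 ^ (2 * r))
    (g : Fm → Fr) (hg : ∀ x : Fm, algebraMap Fr Fm (g x) = x ^ (2 ^ r + 1))
    (i : Fm) (hi : Algebra.trace Fq Fr (g i) = 0) :
    ∃ j k, Algebra.trace Fq Fr (g j) = 0 ∧ Algebra.trace Fq Fr (g k) = 0 ∧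
      Algebra.trace Fq Fr (g (i + j + k)) = 0 ∧ i ≠ j ∧ i ≠ k ∧ j ≠ k := by
  have : CharP Fr 2 := charTwo_of_card hcr
  obtain ⟨e, he, s, rfl⟩ : ∃ e : Fm, e ≠ 0 ∧ ∃ s : Fr, i = e * algebraMap Fr Fm s := by
    by_cases h : i = 0
    · exact ⟨1, one_ne_zero, 0, by simp [h]⟩
    · exact ⟨i, h, 1, by simp⟩
  have hge : ∀ t : Fr, g (e * algebraMap Fr Fm t) = g e * t ^ 2 := by
    intro t
    rw [g_eq_norm hr hcr hcm g hg, g_eq_norm hr hcr hcm g hg, map_mul, Algebra.norm_algebraMap,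
      finrank_two hr hcr hcm]
  let L : Fr →+ Fq := 
    { toFun := fun t => Algebra.trace Fq Fr (g (e * algebraMap Fr Fm t))
      map_zero' := by rw [hge]; simp
      map_add' := fun t t' => by
        rw [hge, hge, hge, CharTwo.add_sq, mul_add, map_add] }
  have hL : ∀ t, t ∈ L.ker ↔ Algebra.trace Fq Fr (g (e * algebraMap Fr Fm t)) = 0 := fun t => Iff.rfl
  have hcard : 4 ≤ Nat.card L.ker := by
    have h1 := AddSubgroup.card_mul_index L.ker
    rw [AddSubgroup.index_ker, Nat.card_eq_fintype_card (α := Fr), hcr] at h1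
    have h2 : Nat.card L.range ≤ 2 := by
      rw [← hcq, ← Nat.card_eq_fintype_card]
      exact Nat.card_le_card_of_injective _ Subtype.val_injective
    have h8 : 8 ≤ 2 ^ r := by
      calc 8 = 2 ^ 3 := by norm_num
        _ ≤ 2 ^ r := Nat.pow_le_pow_right (by norm_num) hr
    have := Nat.mul_le_mul_left (Nat.card L.ker) h2
    omega
  have hex : ∀ A : Finset Fr, A.card ≤ 2 → ∃ t ∈ L.ker, t ∉ A := by
    intro A hA
    by_contra hc
    push Not at hc
    have : Nat.card L.ker ≤ A.card := by
      rw [← Fintype.card_coe A, ← Nat.card_eq_fintype_card]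
      exact Nat.card_le_card_of_injective (fun t : L.ker => (⟨t.1, hc t.1 t.2⟩ : A))
        (fun a b h => Subtype.ext (Subtype.mk.inj h))
    omega
  obtain ⟨j, hj, hj'⟩ := hex {s} (by simp)
  obtain ⟨k, hk, hk'⟩ := hex {s, j} Finset.card_le_two
  simp only [Finset.mem_insert, Finset.mem_singleton, not_or] at hj' hk'
  have hinj : ∀ t t' : Fr, t ≠ t' → e * algebraMap Fr Fm t ≠ e * algebraMap Fr Fm t' := by
    intro t t' h h'
    exact h ((algebraMap Fr Fm).injective (mul_left_cancel₀ he h'))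
  refine ⟨e * algebraMap Fr Fm j, e * algebraMap Fr Fm k, hj, hk, ?_, hinj _ _ (Ne.symm hj'),
    hinj _ _ (Ne.symm hk'.1), hinj _ _ (Ne.symm hk'.2)⟩
  have := L.ker.add_mem (L.ker.add_mem ((hL s).2 hi) hj) hk
  rw [hL, map_add, map_add, mul_add, mul_add] at this
  exact this

end fieldpart
section core

variable {s : ℕ} {Fq Fm : Type} [Field Fq] [Field Fm] [Fintype Fq] [Fintype Fm] [Algebra Fq Fm]

lemma count_D (hcm : Fintype.card Fm = 2 ^ (2 * (s + 1)))
    (Q : Fm → Fq) (hS : ∑ x, chi (Q x) = - 2 ^ (s + 1)) :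
    Fintype.card {x : Fm // Q x = 0} = 2 ^ s * (2 ^ (s + 1) - 1) := by
  rw [Fintype.card_subtype]
  have h1 : 2 * ((Finset.univ.filter fun x => Q x = 0).card : ℤ) = ∑ x, (1 + chi (Q x)) := by
    rw [Finset.card_filter]
    push_cast
    rw [Finset.mul_sum]
    refine Finset.sum_congr rfl fun x _ => ?_
    by_cases h : Q x = 0 <;> simp [chi, h]
  rw [Finset.sum_add_distrib, hS] at h1
  simp only [Finset.sum_const, Finset.card_univ, hcm, nsmul_eq_mul, mul_one] at h1
  zify [Nat.one_le_two_pow]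
  push_cast at h1
  rw [mul_comm 2 (s + 1), pow_mul, pow_succ (2 : ℤ) s] at h1
  rw [pow_succ]
  linarith

lemma count_DD (hcq : Fintype.card Fq = 2) (hcm : Fintype.card Fm = 2 ^ (2 * (s + 1)))
    (Q : Fm → Fq) (hS : ∑ x, chi (Q x) = - 2 ^ (s + 1)) (conj : Fm → Fm)
    (hpol : ∀ a x, Algebra.trace Fq Fm (conj a * x) = Q (x + a) + Q x + Q a)
    (hc0 : ∀ a, conj a = 0 → a = 0) (a : Fm) (ha : a ≠ 0) :
    (Finset.univ.filter fun d : {x : Fm // Q x = 0} => Q (d.1 + a) = 0).card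
      = 2 ^ s * (2 ^ s - 1) := by
  have : CharP Fq 2 := charTwo_of_card (k := 1) (by simpa using hcq)
  have h0 : (Finset.univ.filter fun d : {x : Fm // Q x = 0} => Q (d.1 + a) = 0).card =
      (Finset.univ.filter fun x => Q x = 0 ∧ Q (x + a) = 0).card := by
    rw [← Finset.card_map (Function.Embedding.subtype _)]
    congr 1
    ext x
    simp [and_comm]
  rw [h0]
  have hQa : ∀ x, chi (Q x) * chi (Q (x + a)) = chi (Q a) * chi (Algebra.trace Fq Fm (conj a * x)) := by
    intro x
    rw [← chi_add hcq, ← chi_add hcq, hpol]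
    congr 1
    have : (2 : Fq) = 0 := CharTwo.two_eq_zero
    linear_combination (- Q a) * this
  have h1 : 4 * ((Finset.univ.filter fun x => Q x = 0 ∧ Q (x + a) = 0).card : ℤ) =
      ∑ x, (1 + chi (Q x) + chi (Q (x + a)) +
        chi (Q a) * chi (Algebra.trace Fq Fm (conj a * x))) := by
    rw [Finset.card_filter]
    push_cast
    rw [Finset.mul_sum]
    refine Finset.sum_congr rfl fun x _ => ?_
    rw [← hQa]
    by_cases h : Q x = 0 <;> by_cases h' : Q (x + a) = 0 <;> simp [chi, h, h']
  have h2 : ∑ x, chi (Q (x + a)) = - 2 ^ (s + 1) := by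
    rw [← hS]
    exact Fintype.sum_equiv (Equiv.addRight a) _ _ (fun x => rfl)
  obtain ⟨t, ht⟩ := Algebra.trace_surjective Fq Fm 1
  have h3 : ∑ x, chi (Algebra.trace Fq Fm (conj a * x)) = 0 := by
    refine sum_chi_zero hcq _ (fun x y => by rw [mul_add, map_add]) ((conj a)⁻¹ * t) ?_
    rw [mul_inv_cancel_left₀ (fun h => ha (hc0 a h)), ht]
    exact one_ne_zero
  rw [Finset.sum_add_distrib, Finset.sum_add_distrib, Finset.sum_add_distrib, ← Finset.mul_sum,
    h2, h3, hS] at h1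
  simp only [Finset.sum_const, Finset.card_univ, hcm, nsmul_eq_mul, mul_one] at h1
  zify [Nat.one_le_two_pow]
  push_cast at h1
  rw [mul_comm 2 (s + 1), pow_mul, pow_succ (2 : ℤ) s] at h1
  linarith

theorem core (hs : 2 ≤ s) (hcq : Fintype.card Fq = 2)
    (hcm : Fintype.card Fm = 2 ^ (2 * (s + 1)))
    (Q : Fm → Fq) (hQ0 : Q 0 = 0) (hS : ∑ x, chi (Q x) = - 2 ^ (s + 1)) (conj : Fm → Fm)
    (hpol : ∀ a x, Algebra.trace Fq Fm (conj a * x) = Q (x + a) + Q x + Q a)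
    (hc0 : ∀ a, conj a = 0 → a = 0) (hcs : Function.Surjective conj)
    (hlines : ∀ i, Q i = 0 → ∃ j k, Q j = 0 ∧ Q k = 0 ∧ Q (i + j + k) = 0 ∧
      i ≠ j ∧ i ≠ k ∧ j ≠ k)
    (C : Set ({x : Fm // Q x = 0} → Fq)) (hC : C = augCode Fq Fm (fun x => Q x = 0)) :
    Nat.card C = 2 ^ (2 * (s + 1) + 1) ∧
    IsMinDist C (2 ^ s * (2 ^ s - 1)) ∧
    HasLocality C 3 ∧
    Nat.card (dualCode C) = 2 ^ (2 ^ s * (2 ^ (s + 1) - 1) - 2 * (s + 1) - 1) ∧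
    IsMinDist (dualCode C) 4 ∧
    HasLocality (dualCode C) (2 ^ s * (2 ^ s - 1) - 1) := by
  have : CharP Fq 2 := charTwo_of_card (k := 1) (by simpa using hcq)
  have : CharP Fm 2 := charTwo_of_card hcm
  have h2q : (2 : Fq) = 0 := CharTwo.two_eq_zero
  have h2m : (2 : Fm) = 0 := CharTwo.two_eq_zero
  have hP : 4 ≤ 2 ^ s := by
    calc 4 = 2 ^ 2 := by norm_num
      _ ≤ 2 ^ s := Nat.pow_le_pow_right (by norm_num) hs
  have hn := count_D hcm Q hS
  have hN := count_DD hcq hcm Q hS conj hpol hc0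
  -- representation of codewords
  have hrep : ∀ b c, ∃ a, (b ≠ 0 → a ≠ 0) ∧ (a = 0 → b = 0) ∧ ∀ d : {x : Fm // Q x = 0},
      Algebra.trace Fq Fm (b * d.1) + c = Q (d.1 + a) + (Q a + c) := by
    intro b c
    obtain ⟨a, rfl⟩ := hcs b
    have hz : conj 0 = 0 := by
      obtain ⟨a, ha⟩ := hcs 0
      have := hc0 a ha
      rw [this] at ha
      exact ha
    refine ⟨a, ?_, ?_, ?_⟩
    · rintro h rfl
      exact h hz
    · rintro rfl
      exact hz
    · intro d
      rw [hpol, d.2]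
      ring
  have hmem : ∀ a c, (fun d : {x : Fm // Q x = 0} => Q (d.1 + a) + c) ∈ C := by
    intro a c
    rw [hC]
    refine ⟨conj a, Q a + c, fun d => ?_⟩
    rw [hpol, d.2]
    linear_combination - Q a * h2q
  have hwt1 : ∀ a, a ≠ 0 → hammingNorm (fun d : {x : Fm // Q x = 0} => Q (d.1 + a) + 1) =
      2 ^ s * (2 ^ s - 1) := by
    intro a ha
    rw [← hN a ha, hammingNorm]
    congr 1
    ext d
    have h11 : (1 : Fq) + 1 = 0 := CharTwo.add_self_eq_zero 1
    rcases two_cases hcq (Q (d.1 + a)) with h | h <;> simp [h, h11]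
  have hwt0 : ∀ a, a ≠ 0 → hammingNorm (fun d : {x : Fm // Q x = 0} => Q (d.1 + a) + 0) =
      2 ^ s * 2 ^ s := by
    intro a ha
    have h1 := Finset.card_filter_add_card_filter_not (s := Finset.univ) 
      (fun d : {x : Fm // Q x = 0} => Q (d.1 + a) = 0)
    rw [hN a ha, Finset.card_univ, hn] at h1
    have h2 : hammingNorm (fun d : {x : Fm // Q x = 0} => Q (d.1 + a) + 0) = 
      (Finset.univ.filter (fun d : {x : Fm // Q x = 0} => ¬ Q (d.1 + a) = 0)).card := by
      simp [hammingNorm]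
    rw [h2]
    have : 2 ^ s * (2 ^ (s + 1) - 1) = 2 ^ s * (2 ^ s - 1) + 2 ^ s * 2 ^ s := by
      rw [← mul_add]
      congr 1
      omega
    omega
  have hlam : 0 < 2 ^ s * (2 ^ s - 1) := Nat.mul_pos (by omega) (by omega)
  have hlam2 : 2 ^ s * (2 ^ s - 1) ≤ 2 ^ s * 2 ^ s := Nat.mul_le_mul_left _ (by omega)
  have hwt : ∀ a c, a ≠ 0 → 2 ^ s * (2 ^ s - 1) ≤
      hammingNorm (fun d : {x : Fm // Q x = 0} => Q (d.1 + a) + c) := by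
    intro a c ha
    rcases two_cases hcq c with rfl | rfl
    · rw [hwt0 a ha]; exact hlam2
    · rw [hwt1 a ha]
  -- the linear parametrization
  let φ : (Fm × Fq) →ₗ[Fq] ({x : Fm // Q x = 0} → Fq) :=
    { toFun := fun p d => Algebra.trace Fq Fm (p.1 * d.1) + p.2
      map_add' := fun p p' => by
        ext d
        simp only [Prod.fst_add, Prod.snd_add, add_mul, map_add, Pi.add_apply]
        ring
      map_smul' := fun t p => by
        ext d
        simp [mul_add] }
  have hCφ : C = (LinearMap.range φ : Set ({x : Fm // Q x = 0} → Fq)) := by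
    rw [hC]
    ext w
    constructor
    · rintro ⟨b, c, h⟩
      exact ⟨(b, c), funext fun d => (h d).symm⟩
    · rintro ⟨⟨b, c⟩, rfl⟩
      exact ⟨b, c, fun d => rfl⟩
  have hinj : Function.Injective φ := by
    rw [injective_iff_map_eq_zero]
    rintro ⟨b, c⟩ h
    have hd : ∀ d : {x : Fm // Q x = 0}, Algebra.trace Fq Fm (b * d.1) + c = 0 := fun d => congrFun h d
    obtain ⟨a, ha1, ha2, ha3⟩ := hrep b c
    have hb : b = 0 := by
      by_contra hb
      have h1 := hwt a (Q a + c) (ha1 hb)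
      have h2 : (fun d : {x : Fm // Q x = 0} => Q (d.1 + a) + (Q a + c)) = 0 := 
        funext fun d => by rw [← ha3 d, hd d]; rfl
      rw [h2, hammingNorm_zero] at h1
      omega
    have := hd ⟨0, hQ0⟩
    simp at this
    simp [hb, this]
  have hcardFm : Module.finrank Fq Fm = 2 * (s + 1) := by
    have h := Module.card_eq_pow_finrank (K := Fq) (V := Fm)
    rw [hcq, hcm] at h
    exact (Nat.pow_right_injective (le_refl 2) h).symm
  have hfr : Module.finrank Fq (LinearMap.range φ) = 2 * (s + 1) + 1 := by
    rw [LinearMap.finrank_range_of_inj hinj, Module.finrank_prod, hcardFm, Module.finrank_self]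
  -- weight four words
  have hfour : ∀ v ∈ C, ∀ i j k l : {x : Fm // Q x = 0}, l.1 = i.1 + j.1 + k.1 →
      v i + v j + v k + v l = 0 := by
    intro v hv i j k l hl
    rw [hC] at hv
    obtain ⟨b, c, h⟩ := hv
    rw [h, h, h, h, hl, mul_add, mul_add, map_add, map_add]
    linear_combination (Algebra.trace Fq Fm (b * i.1) + Algebra.trace Fq Fm (b * j.1) +
      Algebra.trace Fq Fm (b * k.1) + 2 * c) * h2q
  have hquad : ∀ i : {x : Fm // Q x = 0}, ∃ j k l : {x : Fm // Q x = 0}, l.1 = i.1 + j.1 + k.1 ∧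
      i ≠ j ∧ i ≠ k ∧ j ≠ k ∧ i ≠ l ∧ j ≠ l ∧ k ≠ l := by
    intro i
    obtain ⟨j, k, hj, hk, hl, hij, hik, hjk⟩ := hlines i.1 i.2
    refine ⟨⟨j, hj⟩, ⟨k, hk⟩, ⟨_, hl⟩, rfl, ?_, ?_, ?_, ?_, ?_, ?_⟩ <;> intro h
    · exact hij (congrArg Subtype.val h)
    · exact hik (congrArg Subtype.val h)
    · exact hjk (congrArg Subtype.val h)
    · have h' : i.1 = i.1 + j + k := congrArg Subtype.val h
      exact hjk (by linear_combination (-1 : Fm) * h' - k * h2m)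
    · have h' : j = i.1 + j + k := congrArg Subtype.val h
      exact hik (by linear_combination (-1 : Fm) * h' - k * h2m)
    · have h' : k = i.1 + j + k := congrArg Subtype.val h
      exact hij (by linear_combination (-1 : Fm) * h' - j * h2m)
  refine ⟨?_, ⟨?_, ?_⟩, ?_, ?_, ⟨?_, ?_⟩, ?_⟩
  · rw [hCφ, SetLike.coe_sort_coe, Module.natCard_eq_pow_finrank (K := Fq), hfr,
      Nat.card_eq_fintype_card, hcq]
  · refine ⟨_, hmem 1 1, ?_, hwt1 1 one_ne_zero⟩
    intro h
    have := hwt1 1 one_ne_zero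
    rw [h, hammingNorm_zero] at this
    omega
  · intro v hv hv0
    rw [hC] at hv
    obtain ⟨b, c, h⟩ := hv
    by_cases hb : b = 0
    · have hc : c ≠ 0 := by
        rintro rfl
        apply hv0
        ext d
        rw [h, hb]
        simp
      have : hammingNorm v = 2 ^ s * (2 ^ (s + 1) - 1) := by
        rw [← hn, hammingNorm, ← Finset.card_univ]
        congr 1
        ext d
        simp [h, hb, hc]
      rw [this]
      exact Nat.mul_le_mul_left _ (by omega)
    · obtain ⟨a, ha1, ha2, ha3⟩ := hrep b c
      have : v = fun d => Q (d.1 + a) + (Q a + c) := funext fun d => by rw [h, ha3]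
      rw [this]
      exact hwt a _ (ha1 hb)
  · intro i
    obtain ⟨j, k, l, hl, hij, hik, hjk, hil, hjl, hkl⟩ := hquad i
    refine ⟨{j, k, l}, Finset.card_eq_three.2 ⟨j, k, l, hjk, hjl, hkl, rfl⟩, by simp [*], ?_⟩
    intro v hv w hw h
    have h1 := hfour v hv i j k l hl
    have h2 := hfour w hw i j k l hl
    rw [h j (by simp), h k (by simp), h l (by simp)] at h1
    linear_combination h1 - h2
  · rw [hCφ, card_dualCode, hfr, hn, hcq, Nat.sub_sub]
  · obtain ⟨j, k, l, hl, hij, hik, hjk, hil, hjl, hkl⟩ := hquad ⟨0, hQ0⟩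
    set i : {x : Fm // Q x = 0} := ⟨0, hQ0⟩
    have hT : ({i, j, k, l} : Finset {x : Fm // Q x = 0}).card = 4 := by
      simp [*]
    have hw : hammingNorm (fun d => if d ∈ ({i, j, k, l} : Finset {x : Fm // Q x = 0})
        then (1 : Fq) else 0) = 4 := by
      rw [← hT, hammingNorm]
      congr 1
      ext d
      simp
      tauto
    refine ⟨_, ?_, ?_, hw⟩
    · intro v hv
      simp only [ite_mul, one_mul, zero_mul]
      rw [Finset.sum_ite_mem, Finset.univ_inter, Finset.sum_insert (by simp [*]),
        Finset.sum_insert (by simp [*]), Finset.sum_insert (by simp [*]), Finset.sum_singleton,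
        ← hfour v hv i j k l hl]
      ring
    · intro h
      rw [h, hammingNorm_zero] at hw
      omega
  · intro u hu hu0
    have hsum : ∑ d, u d = 0 := by
      have := hu (fun d => 1) (by rw [hC]; exact ⟨0, 1, fun d => by simp⟩)
      simpa using this
    have hu1 : ∀ d, u d = if u d ≠ 0 then 1 else 0 := by
      intro d
      rcases two_cases hcq (u d) with h | h <;> simp [h]
    have hdot : ∀ v : {x : Fm // Q x = 0} → Fq, ∑ d, u d * v d = ∑ d with u d ≠ 0, v d := by
      intro v
      rw [Finset.sum_filter]
      refine Finset.sum_congr rfl fun d _ => ?_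
      rcases two_cases hcq (u d) with h | h <;> simp [h]
    have heven : Even (hammingNorm u) := by
      have h1 := hdot (fun _ => 1)
      simp only [mul_one, hsum, Finset.sum_const, nsmul_eq_mul] at h1
      rw [even_iff_two_dvd]
      exact (CharP.cast_eq_zero_iff Fq 2 _).1 h1.symm
    have hpos : hammingNorm u ≠ 0 := by simpa using hu0
    have hne2 : hammingNorm u ≠ 2 := by
      intro h
      obtain ⟨x, y, hxy, hsupp⟩ := Finset.card_eq_two.1 h
      apply hxy
      by_contra _
      obtain ⟨t, ht⟩ := Algebra.trace_surjective Fq Fm 1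
      have hne : x.1 + y.1 ≠ 0 := by
        intro h0
        apply hxy
        apply Subtype.ext
        linear_combination h0 - y.1 * h2m
      have h1 := hu (fun d => Algebra.trace Fq Fm (t * (x.1 + y.1)⁻¹ * d.1) + 0)
        (by rw [hC]; exact ⟨_, 0, fun d => rfl⟩)
      rw [hdot, hsupp, Finset.sum_pair hxy, add_zero, add_zero, ← map_add, ← mul_add,
        inv_mul_cancel_right₀ hne, ht] at h1
      exact one_ne_zero h1
    obtain ⟨k, hk⟩ := heven
    omega
  · intro i
    obtain ⟨e, he⟩ : ∃ e : {x : Fm // Q x = 0}, e ≠ i := by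
      obtain ⟨j, k, l, hl, hij, -⟩ := hquad i
      exact ⟨j, hij.symm⟩
    have ha : i.1 + e.1 ≠ 0 := by
      intro h0
      apply he
      apply Subtype.ext
      linear_combination h0 - i.1 * h2m
    have hQi : Q (i.1 + (i.1 + e.1)) = 0 := by
      rw [← add_assoc, CharTwo.add_self_eq_zero, zero_add, e.2]
    set f : {x : Fm // Q x = 0} → Fq := fun d => Q (d.1 + (i.1 + e.1)) + 1 with hf
    have hfi : f i = 1 := by simp only [hf, hQi, zero_add]
    have hfC : f ∈ C := hmem _ _
    refine ⟨(Finset.univ.filter fun d => f d ≠ 0).erase i, ?_, by simp, ?_⟩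
    · rw [Finset.card_erase_of_mem (by simp [hfi])]
      congr 1
      exact hwt1 _ ha
    · intro v hv w hw h
      have h1 : ∑ d, (v d - w d) * f d = 0 := by
        simp only [sub_mul, Finset.sum_sub_distrib]
        rw [hv f hfC, hw f hfC, sub_zero]
      rw [Finset.sum_eq_single i, hfi, mul_one] at h1
      · exact sub_eq_zero.1 h1
      · intro d _ hd
        by_cases hfd : f d = 0
        · rw [hfd, mul_zero]
        · rw [h d (by simp [hd, hfd]), sub_self, zero_mul]
      · simp

end core

theorem stmt8 (r m n : ℕ) (hr : 3 ≤ r) (hm : m = 2 * r)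
    (hn : n = 2 ^ (r - 1) * (2 ^ r - 1))
    (Fq Fr Fm : Type) [Field Fq] [Field Fr] [Field Fm]
    [Fintype Fq] [Fintype Fr] [Fintype Fm]
    [Algebra Fq Fr] [Algebra Fr Fm] [Algebra Fq Fm] [IsScalarTower Fq Fr Fm]
    (hcq : Fintype.card Fq = 2) (hcr : Fintype.card Fr = 2 ^ r)
    (hcm : Fintype.card Fm = 2 ^ m)
    (g : Fm → Fr) (hg : ∀ x : Fm, algebraMap Fr Fm (g x) = x ^ (2 ^ r + 1))
    (C : Set ({x : Fm // Algebra.trace Fq Fr (g x) = 0} → Fq))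
    (hC : C = augCode Fq Fm (fun x => Algebra.trace Fq Fr (g x) = 0)) :
    -- `C` is an `[n, m+1, 2^{r-1}(2^{r-1}-1)]` binary code with locality 3
    Fintype.card {x : Fm // Algebra.trace Fq Fr (g x) = 0} = n ∧
    Nat.card C = 2 ^ (m + 1) ∧
    IsMinDist C (2 ^ (r - 1) * (2 ^ (r - 1) - 1)) ∧
    HasLocality C 3 ∧
    -- the dual is an `[n, n-m-1, 4]` binary code with locality `2^{r-1}(2^{r-1}-1) - 1`
    Nat.card (dualCode C) = 2 ^ (n - m - 1) ∧
    IsMinDist (dualCode C) 4 ∧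
    HasLocality (dualCode C) (2 ^ (r - 1) * (2 ^ (r - 1) - 1) - 1) := by
  subst hm hn hC
  obtain ⟨s, rfl⟩ : ∃ s, r = s + 1 := ⟨r - 1, by omega⟩
  simp only [Nat.add_sub_cancel]
  have hinv : ∀ b : Fm, (b ^ (2 ^ (s + 1))) ^ (2 ^ (s + 1)) = b := by
    intro b
    rw [← pow_mul, ← pow_add, ← two_mul, ← hcm, FiniteField.pow_card]
  have hS := sum_chi_Q hr hcq hcr hcm g hg
  have hg0 : Algebra.trace Fq Fr (g 0) = 0 := by
    rw [g_eq_norm hr hcr hcm g hg, Algebra.norm_zero, map_zero]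
  refine ⟨?_, ?_⟩
  · exact count_D hcm (fun x => Algebra.trace Fq Fr (g x)) hS
  · exact core (by omega) hcq hcm (fun x => Algebra.trace Fq Fr (g x)) hg0 hS
      (fun a => a ^ (2 ^ (s + 1))) (fun a x => g_pol hr hcr hcm g hg x a)
      (fun a h => by by_contra h0; exact pow_ne_zero _ h0 h) (fun b => ⟨_, hinv b⟩)
      (fun i hi => lines hr hcq hcr hcm g hg i hi) _ rfl
end
end
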